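/- arXiv:2003.07204 — 2 statements merged into one kernel-verified Lean document; each statement's English description precedes it below -/
import Mathlib

section
/- For any negative discriminant Δ (Δ ≡ 0,1 mod 4) with |Δ| ≥ 10^14, the sum of divisors function satisfies σ₁(f̃)/f̃ ≤ 1.842·log log(|Δ|^{1/2}), where f̃ is the modified conductor of Δ. -/
/-- `D` is a fundamental discriminant. -/
def IsFundDisc (D : ℤ) : Prop :=
  (D % 4 = 1 ∧ Squarefree D) ∨
    (∃ m : ℤ, D = 4 * m ∧ (m % 4 = 2 ∨ m % 4 = 3) ∧ Squarefree m)

section Helpers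
open Real

/-- log of σ(p^b)/p^b -/
noncomputable def lsig (n : ℕ) : ℝ := Real.log ((ArithmeticFunction.sigma 1 n : ℝ) / n)

lemma lsig_prod (n : ℕ) (hn : n ≠ 0) :
    lsig n = ∑ p ∈ n.primeFactors, lsig (p ^ n.factorization p) := by
  unfold lsig
  have h1 : (ArithmeticFunction.sigma 1 n) = ∏ p ∈ n.primeFactors, ArithmeticFunction.sigma 1 (p ^ n.factorization p) := by
    rw [ArithmeticFunction.isMultiplicative_sigma.multiplicative_factorization _ hn]
    rfl
  have h2 : n = ∏ p ∈ n.primeFactors, p ^ n.factorization p := (Nat.prod_factorization_pow_eq_self hn).symm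
  have h3 : ((ArithmeticFunction.sigma 1 n : ℕ) : ℝ) / n = ∏ p ∈ n.primeFactors, ((ArithmeticFunction.sigma 1 (p ^ n.factorization p) : ℕ) : ℝ) / ((p ^ n.factorization p : ℕ) : ℝ) := by
    rw [Finset.prod_div_distrib, h1]
    congr 1
    · push_cast; rfl
    · conv_lhs => rw [h2]
      push_cast; rfl
  rw [h3, Real.log_prod]
  intro p hp
  have hpp := Nat.prime_of_mem_primeFactors hp
  have : 0 < ArithmeticFunction.sigma 1 (p ^ n.factorization p) := by
    rw [ArithmeticFunction.sigma_pos_iff]; exact pow_pos hpp.pos _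
  have h4 : 0 < p ^ n.factorization p := pow_pos hpp.pos _
  positivity

lemma log_nat_prod (n : ℕ) (hn : n ≠ 0) :
    Real.log n = ∑ p ∈ n.primeFactors, (n.factorization p : ℝ) * Real.log p := by
  conv_lhs => rw [← Nat.prod_factorization_pow_eq_self hn]
  rw [Finsupp.prod, Nat.cast_prod, Real.log_prod]
  · refine Finset.sum_congr rfl fun p hp => ?_
    rw [Nat.cast_pow, Real.log_pow]
  · intro p hp
    have hpp := Nat.prime_of_mem_primeFactors hp
    have h4 : 0 < p ^ n.factorization p := pow_pos hpp.pos _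
    positivity

def primesTo (x : ℕ) : Finset ℕ := (Finset.range (x + 1)).filter Nat.Prime

lemma lsig_le_sum (n x : ℕ) (hn : n ≠ 0) (ε : ℝ) (c : ℕ → ℝ)
    (hc : ∀ p, p.Prime → ∀ b : ℕ, lsig (p ^ b) - ε * (b * Real.log p) ≤ c p)
    (hx : ∀ p, p.Prime → x < p → c p ≤ 0) :
    lsig n ≤ ε * Real.log n + ∑ p ∈ primesTo x, c p := by
  have h0 : ∀ p, p.Prime → 0 ≤ c p := by
    intro p hp
    have := hc p hp 0
    simpa [lsig] using this
  rw [lsig_prod n hn, log_nat_prod n hn, Finset.mul_sum]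
  have h1 : ∑ p ∈ n.primeFactors, lsig (p ^ n.factorization p)
      ≤ ∑ p ∈ n.primeFactors, ε * (n.factorization p * Real.log p) + ∑ p ∈ n.primeFactors, c p := by
    rw [← Finset.sum_add_distrib]
    refine Finset.sum_le_sum fun p hp => ?_
    have := hc p (Nat.prime_of_mem_primeFactors hp) (n.factorization p)
    linarith
  have h2 : ∑ p ∈ n.primeFactors, c p ≤ ∑ p ∈ primesTo x, c p := by
    rw [← Finset.sum_filter_add_sum_filter_not n.primeFactors (fun p => p ≤ x)]
    have h3 : ∑ p ∈ n.primeFactors.filter (fun p => ¬ p ≤ x), c p ≤ 0 := by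
      refine Finset.sum_nonpos fun p hp => ?_
      simp only [Finset.mem_filter, not_le] at hp
      exact hx p (Nat.prime_of_mem_primeFactors hp.1) hp.2
    have h4 : ∑ p ∈ n.primeFactors.filter (fun p => p ≤ x), c p ≤ ∑ p ∈ primesTo x, c p := by
      refine Finset.sum_le_sum_of_subset_of_nonneg ?_ ?_
      · intro p hp
        simp only [Finset.mem_filter] at hp
        simp only [primesTo, Finset.mem_filter, Finset.mem_range]
        exact ⟨by omega, Nat.prime_of_mem_primeFactors hp.1⟩
      · intro p hp _
        simp only [primesTo, Finset.mem_filter] at hp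
        exact h0 p hp.2
    linarith
  linarith

/-- σ(p^b)/p^b < p/(p-1) -/
lemma sigma_pp (p b : ℕ) (hp : p.Prime) :
    (ArithmeticFunction.sigma 1 (p ^ b)) * (p - 1) + 1 = p ^ (b + 1) := by
  rw [ArithmeticFunction.sigma_one_apply_prime_pow hp]
  have := Nat.geomSum_eq hp.two_le (b+1)
  have h2 := Nat.geom_sum_le hp.two_le 1 1
  have h3 : (∑ k ∈ Finset.range (b+1), p ^ k) * (p - 1) = p ^ (b+1) - 1 := by
    have := Nat.pred_mul_geom_sum_le p 1 1
    have h := geom_sum_mul_of_one_le (x := p) hp.one_lt.le (b+1)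
    exact h
  have h4 : 0 < p ^ (b+1) := pow_pos hp.pos _
  omega

lemma lsig_pp_le (p b : ℕ) (hp : p.Prime) : lsig (p ^ b) ≤ - Real.log (1 - 1 / p) := by
  unfold lsig
  have h := sigma_pp p b hp
  have hp2 : (2:ℝ) ≤ p := by exact_mod_cast hp.two_le
  have h' : ((ArithmeticFunction.sigma 1 (p ^ b) : ℕ) : ℝ) * ((p:ℝ) - 1) + 1 = (p:ℝ) ^ (b + 1) := by
    have : ((p - 1 : ℕ) : ℝ) = (p:ℝ) - 1 := by rw [Nat.cast_sub hp.one_lt.le]; simp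
    rw [← this]; exact_mod_cast h
  have hpos : 0 < ArithmeticFunction.sigma 1 (p ^ b) := by
    rw [ArithmeticFunction.sigma_pos_iff]; exact pow_pos hp.pos _
  have hpb : (0:ℝ) < (p:ℝ) ^ b := by positivity
  rw [← Real.log_inv]
  apply Real.log_le_log
  · have : 0 < p ^ b := pow_pos hp.pos _
    positivity
  · have e : (1 - 1 / (p:ℝ))⁻¹ = p / (p - 1) := by
      field_simp
    rw [e, Nat.cast_pow, div_le_div_iff₀ hpb (by linarith)]
    rw [pow_succ] at h'
    nlinarith
def bigQ : ℕ := 83311209124804345037562846379881038241134671040860314654617977748077292641632790457335110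

/-- Boolean primality test, correct below 229^2. -/
def isP (n : ℕ) : Bool :=
  cond (Nat.ble n 228) (Nat.ble 2 n && Nat.beq (Nat.gcd n (Nat.factorial (n - 1))) 1) (Nat.beq (Nat.gcd n bigQ) 1)

lemma isP_iff (n : ℕ) (hn : n < 229 ^ 2) : isP n = true ↔ n.Prime := by
  unfold isP
  by_cases h : n ≤ 228
  · rw [show Nat.ble n 228 = true from Nat.ble_eq.mpr h]
    simp only [cond_true, Bool.and_eq_true, Nat.ble_eq, Nat.beq_eq]
    constructor
    · rintro ⟨h2, hg⟩
      by_contra hp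
      have hm : n.minFac.Prime := Nat.minFac_prime (by omega)
      have hlt : n.minFac ≤ n - 1 := by
        have := (Nat.not_prime_iff_minFac_lt h2).mp hp
        omega
      have h3 : n.minFac ∣ Nat.gcd n (n-1).factorial :=
        Nat.dvd_gcd (Nat.minFac_dvd n) (hm.dvd_factorial.mpr hlt)
      rw [hg] at h3
      exact hm.one_lt.ne' (Nat.dvd_one.mp h3)
    · intro hp
      refine ⟨hp.two_le, ?_⟩
      rw [← Nat.coprime_iff_gcd_eq_one, hp.coprime_iff_not_dvd, hp.dvd_factorial]
      have := hp.two_le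
      omega
  · have h' : Nat.ble n 228 = false := by
      rw [← Bool.not_eq_true, Nat.ble_eq]; exact h
    rw [h']
    simp only [cond_false, Nat.beq_eq]
    have hQ1 : ∀ q < 229, q.Prime → q ∣ bigQ := by decide +kernel
    have hQ : ∀ q, q.Prime → q < 229 → q ∣ bigQ := fun q hq hq2 => hQ1 q hq2 hq
    have hQ2 : bigQ ∣ Nat.factorial 228 := by decide +kernel
    constructor
    · intro hg
      by_contra hp
      have hm : n.minFac.Prime := Nat.minFac_prime (by omega)
      have hsq := Nat.minFac_sq_le_self (by omega : 0 < n) hp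
      have hlt : n.minFac < 229 := by
        by_contra hc
        have : 229 ^ 2 ≤ n.minFac ^ 2 := Nat.pow_le_pow_left (by omega) 2
        omega
      have h3 : n.minFac ∣ Nat.gcd n bigQ :=
        Nat.dvd_gcd (Nat.minFac_dvd n) (hQ _ hm hlt)
      rw [hg] at h3
      exact hm.one_lt.ne' (Nat.dvd_one.mp h3)
    · intro hp
      rw [← Nat.coprime_iff_gcd_eq_one, hp.coprime_iff_not_dvd]
      intro hd
      have := hp.dvd_factorial.mp (hd.trans hQ2)
      omega

def prodR (f : ℕ → ℕ) (d : ℕ) : ℕ → ℕ :=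
  Nat.rec (fun s => f s) (fun d ih s => Nat.mul (ih s) (ih (Nat.add s (Nat.pow 2 d)))) d

def sumR (f : ℕ → ℕ) (d : ℕ) : ℕ → ℕ :=
  Nat.rec (fun s => f s) (fun d ih s => Nat.add (ih s) (ih (Nat.add s (Nat.pow 2 d)))) d

lemma prodR_eq (f : ℕ → ℕ) (d s : ℕ) : prodR f d s = ∏ i ∈ Finset.range (2 ^ d), f (s + i) := by
  induction d generalizing s with
  | zero => simp [prodR]
  | succ d ih =>
    have h : prodR f (d+1) s = prodR f d s * prodR f d (s + 2 ^ d) := rfl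
    rw [h, ih, ih, pow_succ, mul_two, Finset.prod_range_add]
    simp only [add_assoc]

lemma sumR_eq (f : ℕ → ℕ) (d s : ℕ) : sumR f d s = ∑ i ∈ Finset.range (2 ^ d), f (s + i) := by
  induction d generalizing s with
  | zero => simp [sumR]
  | succ d ih =>
    have h : sumR f (d+1) s = sumR f d s + sumR f d (s + 2 ^ d) := rfl
    rw [h, ih, ih, pow_succ, mul_two, Finset.sum_range_add]
    simp only [add_assoc]

def pprod (g : ℕ → ℕ) (x d : ℕ) : ℕ :=
  prodR (fun i => cond (Nat.ble i x && isP i) (g i) 1) d 0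

def psum (g : ℕ → ℕ) (x d : ℕ) : ℕ :=
  sumR (fun i => cond (Nat.ble i x && isP i) (g i) 0) d 0

lemma pprod_eq (g : ℕ → ℕ) (x d : ℕ) (hx : x < 2 ^ d) (hx2 : x < 229 ^ 2) :
    pprod g x d = ∏ p ∈ primesTo x, g p := by
  unfold pprod primesTo
  rw [prodR_eq, Finset.prod_filter]
  symm
  have hsub : Finset.range (x+1) ⊆ Finset.range (2^d) := by
    intro i; simp only [Finset.mem_range]; omega
  have h1 : ∀ i ∈ Finset.range (x+1), (if i.Prime then g i else 1) =
      cond (Nat.ble (0 + i) x && isP (0 + i)) (g (0 + i)) 1 := by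
    intro i hi
    simp only [Finset.mem_range] at hi
    rw [zero_add, show Nat.ble i x = true from Nat.ble_eq.mpr (by omega), Bool.true_and]
    by_cases hp : i.Prime
    · rw [if_pos hp, (isP_iff i (by omega)).mpr hp]; rfl
    · rw [if_neg hp, Bool.eq_false_iff.mpr (fun h => hp ((isP_iff i (by omega)).mp h))]; rfl
  rw [Finset.prod_congr rfl h1]
  apply Finset.prod_subset hsub
  intro i _ hi
  simp only [Finset.mem_range] at hi
  rw [zero_add, show Nat.ble i x = false from by
    rw [← Bool.not_eq_true, Nat.ble_eq]; omega]
  rfl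

lemma psum_eq (g : ℕ → ℕ) (x d : ℕ) (hx : x < 2 ^ d) (hx2 : x < 229 ^ 2) :
    psum g x d = ∑ p ∈ primesTo x, g p := by
  unfold psum primesTo
  rw [sumR_eq, Finset.sum_filter]
  symm
  have hsub : Finset.range (x+1) ⊆ Finset.range (2^d) := by
    intro i; simp only [Finset.mem_range]; omega
  have h1 : ∀ i ∈ Finset.range (x+1), (if i.Prime then g i else 0) =
      cond (Nat.ble (0 + i) x && isP (0 + i)) (g (0 + i)) 0 := by
    intro i hi
    simp only [Finset.mem_range] at hi
    rw [zero_add, show Nat.ble i x = true from Nat.ble_eq.mpr (by omega), Bool.true_and]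
    by_cases hp : i.Prime
    · rw [if_pos hp, (isP_iff i (by omega)).mpr hp]; rfl
    · rw [if_neg hp, Bool.eq_false_iff.mpr (fun h => hp ((isP_iff i (by omega)).mp h))]; rfl
  rw [Finset.sum_congr rfl h1]
  apply Finset.sum_subset hsub
  intro i _ hi
  simp only [Finset.mem_range] at hi
  rw [zero_add, show Nat.ble i x = false from by
    rw [← Bool.not_eq_true, Nat.ble_eq]; omega]
  rfl

lemma log_ge_of (a : ℝ) (n m : ℕ) (hm : 0 < m) (ha : 0 < a) (h : (2.7183:ℝ) ^ n ≤ a ^ m) :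
    (n : ℝ) / m ≤ Real.log a := by
  have he : Real.exp 1 ≤ 2.7183 := by have := Real.exp_one_lt_d9; norm_num at this ⊢; linarith
  have h1 : Real.exp n ≤ a ^ m := by
    have : Real.exp (n:ℝ) = Real.exp 1 ^ n := by rw [← Real.exp_nat_mul, mul_one]
    rw [this]
    exact (pow_le_pow_left₀ (Real.exp_pos _).le he n).trans h
  have h2 := (Real.le_log_iff_exp_le (by positivity)).mpr h1
  rw [Real.log_pow] at h2
  rw [div_le_iff₀ (by positivity)]
  linarith

lemma log_le_of (a : ℝ) (n m : ℕ) (hm : 0 < m) (ha : 0 < a) (h : a ^ m ≤ (2.71828:ℝ) ^ n) :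
    Real.log a ≤ (n : ℝ) / m := by
  have he : 2.71828 ≤ Real.exp 1 := by have := Real.exp_one_gt_d9; norm_num at this ⊢; linarith
  have h1 : a ^ m ≤ Real.exp n := by
    have : Real.exp (n:ℝ) = Real.exp 1 ^ n := by rw [← Real.exp_nat_mul, mul_one]
    rw [this]
    exact h.trans (pow_le_pow_left₀ (by norm_num) he n)
  have h2 := (Real.log_le_iff_le_exp (by positivity)).mpr h1
  rw [Real.log_pow] at h2
  rw [le_div_iff₀ (by positivity)]
  linarith

lemma conc (a ε L1 L2 L : ℝ) (h1 : 1 < L1) (h12 : L1 ≤ L) (h2 : L ≤ L2)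
    (e1 : a + ε * L1 ≤ Real.log (1.842 * Real.log L1))
    (e2 : a + ε * L2 ≤ Real.log (1.842 * Real.log L2)) :
    a + ε * L ≤ Real.log (1.842 * Real.log L) := by
  rcases eq_or_lt_of_le (h12.trans h2) with h | h
  · have : L = L1 := le_antisymm (by linarith) h12
    rw [this]; exact e1
  · set s := (L2 - L) / (L2 - L1) with hs
    have hd : 0 < L2 - L1 := by linarith
    have hs0 : 0 ≤ s := div_nonneg (by linarith) hd.le
    have hs1 : 0 ≤ 1 - s := by
      rw [hs, sub_nonneg, div_le_one hd]; linarith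
    have hL : L = s * L1 + (1 - s) * L2 := by
      rw [hs]; field_simp; ring
    have g1 : 0 < Real.log L1 := Real.log_pos h1
    have g2 : 0 < Real.log L2 := Real.log_pos (by linarith)
    have c1 := strictConcaveOn_log_Ioi.concaveOn.2 (show L1 ∈ Set.Ioi 0 by simp; linarith)
      (show L2 ∈ Set.Ioi 0 by simp; linarith) hs0 hs1 (by ring)
    have c2 := strictConcaveOn_log_Ioi.concaveOn.2 (show 1.842 * Real.log L1 ∈ Set.Ioi 0 by simp; linarith)
      (show 1.842 * Real.log L2 ∈ Set.Ioi 0 by simp; linarith) hs0 hs1 (by ring)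
    simp only [smul_eq_mul] at c1 c2
    rw [← hL] at c1
    have c3 : Real.log (s * (1.842 * Real.log L1) + (1 - s) * (1.842 * Real.log L2)) ≤ Real.log (1.842 * Real.log L) := by
      apply Real.log_le_log
      · rcases hs0.eq_or_lt with h0 | h0
        · rw [← h0]; linarith
        · have : 0 < s * (1.842 * Real.log L1) := by positivity
          have : 0 ≤ (1 - s) * (1.842 * Real.log L2) := by positivity
          linarith
      · linarith
    have : a + ε * L = s * (a + ε * L1) + (1 - s) * (a + ε * L2) := by rw [hL]; ring
    rw [this]
    have := mul_le_mul_of_nonneg_left e1 hs0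
    have := mul_le_mul_of_nonneg_left e2 hs1
    linarith

/-- numeric endpoint criterion -/
lemma endpt (R t l Lr : ℝ) (hR : 0 < R) (ht : t < 64) (hl : l ≤ Real.log Lr)
    (hl0 : 0 < l) (h : R ≤ 1.842 * l * (1 - t / 64) ^ 64) :
    Real.log R + t ≤ Real.log (1.842 * Real.log Lr) := by
  have h1 : Real.log (1.842 * l) ≤ Real.log (1.842 * Real.log Lr) :=
    Real.log_le_log (by positivity) (by linarith)
  have hp : 0 < 1 - t / 64 := by linarith
  have h2 := Real.log_le_log hR h
  rw [Real.log_mul (by positivity) (by positivity), Real.log_pow] at h2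
  have h3 := Real.log_le_sub_one_of_pos hp
  push_cast at h2
  linarith

lemma neg_log_one_sub_le (p : ℕ) (hp : 2 ≤ p) : - Real.log (1 - 1 / (p:ℝ)) ≤ 1 / ((p:ℝ) - 1) := by
  have hp2 : (2:ℝ) ≤ p := by exact_mod_cast hp
  rw [← Real.log_inv]
  have e : (1 - 1 / (p:ℝ))⁻¹ = p / (p - 1) := by field_simp
  rw [e]
  have hpos : 0 < (p:ℝ) / (p - 1) := div_pos (by linarith) (by linarith)
  have := Real.log_le_sub_one_of_pos hpos
  have e2 : (p:ℝ) / (p - 1) - 1 = 1 / (p - 1) := by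
    have : (p:ℝ) - 1 ≠ 0 := by linarith
    field_simp; ring
  linarith

lemma le_neg_log_one_sub (p : ℕ) (hp : 2 ≤ p) : 1 / (p:ℝ) ≤ - Real.log (1 - 1 / (p:ℝ)) := by
  have hp2 : (2:ℝ) ≤ p := by exact_mod_cast hp
  have : 0 < 1 - 1 / (p:ℝ) := by
    rw [sub_pos, div_lt_one (by linarith)]; linarith
  have := Real.log_le_sub_one_of_pos this
  linarith

/-- tail primes -/
lemma tail_le (x p b : ℕ) (hx : 2 ≤ x) (hp : p.Prime) (hxp : x < p) (ε : ℝ) (hε : 0 ≤ ε)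
    (h2 : 1 ≤ ε * (x * Real.log (x + 1))) : lsig (p ^ b) - ε * (b * Real.log p) ≤ 0 := by
  rcases Nat.eq_zero_or_pos b with h | h
  · subst h; simp [lsig]
  · have h3 := lsig_pp_le p b hp
    have h4 := neg_log_one_sub_le p hp.two_le
    have hx2 : (2:ℝ) ≤ x := by exact_mod_cast hx
    have hxp' : (x:ℝ) + 1 ≤ p := by exact_mod_cast hxp
    have h5 : 1 / ((p:ℝ) - 1) ≤ 1 / x := one_div_le_one_div_of_le (by linarith) (by linarith)
    have h6 : 1 / (x:ℝ) ≤ ε * Real.log (x + 1) := by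
      rw [div_le_iff₀ (by linarith)]; linarith
    have h7 : Real.log (x + 1) ≤ Real.log p := Real.log_le_log (by linarith) hxp'
    have h8 : ε * Real.log (x+1) ≤ ε * Real.log p := mul_le_mul_of_nonneg_left h7 hε
    have hb : (1:ℝ) ≤ b := by exact_mod_cast h
    have h9 : 0 ≤ ε * Real.log p := mul_nonneg hε (Real.log_nonneg (by linarith))
    have h10 : ε * Real.log p ≤ ε * (b * Real.log p) := by nlinarith
    linarith

lemma lemA (n x : ℕ) (hn : n ≠ 0) (hx : 2 ≤ x) (ε : ℝ) (hε : 0 ≤ ε)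
    (h1 : ε * (x * Real.log x) ≤ 1) (h2 : 1 ≤ ε * (x * Real.log (x + 1))) :
    lsig n ≤ ε * Real.log n + ∑ p ∈ primesTo x, (- Real.log (1 - 1 / (p:ℝ)) - ε * Real.log p) := by
  have key := lsig_le_sum n x hn ε
    (fun p => if p ≤ x then (- Real.log (1 - 1 / (p:ℝ)) - ε * Real.log p) else 0) ?_ ?_
  · refine key.trans (le_of_eq ?_)
    congr 1
    refine Finset.sum_congr rfl fun p hp => ?_
    simp only [primesTo, Finset.mem_filter, Finset.mem_range] at hp
    rw [if_pos (by omega)]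
  · intro p hp b
    have hp2 : (2:ℝ) ≤ p := by exact_mod_cast hp.two_le
    have hl0 : 0 ≤ Real.log p := Real.log_nonneg (by linarith)
    by_cases hpx : p ≤ x
    · simp only [if_pos hpx]
      have hpx' : (p:ℝ) ≤ x := by exact_mod_cast hpx
      rcases Nat.eq_zero_or_pos b with h | h
      · subst h
        have h3 := le_neg_log_one_sub p hp.two_le
        have h4 : (p:ℝ) * Real.log p ≤ x * Real.log x :=
          mul_le_mul hpx' (Real.log_le_log (by linarith) hpx') hl0 (by positivity)
        have h5 : ε * (p * Real.log p) ≤ 1 := (mul_le_mul_of_nonneg_left h4 hε).trans h1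
        have h6 : ε * Real.log p ≤ 1 / p := by
          rw [le_div_iff₀ (by linarith)]; linarith
        simp [lsig] at h3 ⊢
        simp at h6
        linarith
      · have h3 := lsig_pp_le p b hp
        have hb : (1:ℝ) ≤ b := by exact_mod_cast h
        have h9 : 0 ≤ ε * Real.log p := mul_nonneg hε hl0
        have h10 : ε * Real.log p ≤ ε * (b * Real.log p) := by nlinarith
        linarith
    · simp only [if_neg hpx]
      exact tail_le x p b hx hp (by omega) ε hε h2
  · intro p hp hxp
    simp only [if_neg (by omega : ¬ p ≤ x)]
    exact le_rfl

noncomputable def logP (x : ℕ) : ℝ := ∑ p ∈ primesTo x, - Real.log (1 - 1 / (p:ℝ))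
noncomputable def th (x : ℕ) : ℝ := ∑ p ∈ primesTo x, Real.log (p:ℝ)

lemma mem_primesTo {p x : ℕ} : p ∈ primesTo x ↔ p ≤ x ∧ p.Prime := by
  simp [primesTo]

/-- certificate for logP and th -/
lemma logP_le (x d Rn Rd : ℕ) (hx : x < 2 ^ d) (hx2 : x < 229 ^ 2) (hRd : 0 < Rd)
    (h : Nat.ble (Nat.mul (pprod (fun p => p) x d) Rd) (Nat.mul Rn (pprod (fun p => p - 1) x d)) = true) :
    logP x ≤ Real.log ((Rn:ℝ) / Rd) := by
  rw [Nat.ble_eq, pprod_eq _ _ _ hx hx2, pprod_eq _ _ _ hx hx2] at h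
  have e : logP x = Real.log ((∏ p ∈ primesTo x, (p:ℝ)) / ∏ p ∈ primesTo x, ((p - 1 : ℕ):ℝ)) := by
    rw [← Finset.prod_div_distrib, Real.log_prod]
    · unfold logP
      refine Finset.sum_congr rfl fun p hp => ?_
      have hp := (mem_primesTo.mp hp).2
      have hp2 : (2:ℝ) ≤ p := by exact_mod_cast hp.two_le
      rw [← Real.log_inv, Nat.cast_sub hp.one_lt.le]
      congr 1
      have : (p:ℝ) - 1 ≠ 0 := by linarith
      push_cast
      field_simp
    · intro p hp
      have hp := (mem_primesTo.mp hp).2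
      have : 0 < p - 1 := by have := hp.two_le; omega
      have := hp.pos
      positivity
  rw [e]
  have q1 : 0 < ∏ p ∈ primesTo x, (p:ℝ) := by
    refine Finset.prod_pos fun p hp => ?_
    exact_mod_cast (mem_primesTo.mp hp).2.pos
  have q2 : 0 < ∏ p ∈ primesTo x, ((p - 1 : ℕ):ℝ) := by
    refine Finset.prod_pos fun p hp => ?_
    have := (mem_primesTo.mp hp).2.two_le
    exact_mod_cast (by omega : 0 < p - 1)
  apply Real.log_le_log (by positivity)
  have hRd' : (0:ℝ) < Rd := by exact_mod_cast hRd
  rw [div_le_div_iff₀ q2 hRd']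
  have h' := (Nat.cast_le (α := ℝ)).mpr h
  simp only [Nat.mul_eq] at h'
  push_cast at h'
  exact h'

lemma th_ge (x d K : ℕ) (hx : x < 2 ^ d) (hx2 : x < 229 ^ 2)
    (h : Nat.ble (Nat.pow 2 K) (pprod (fun p => p) x d) = true) : K * Real.log 2 ≤ th x := by
  rw [Nat.ble_eq, pprod_eq _ _ _ hx hx2] at h
  unfold th
  rw [← Real.log_prod, ← Real.log_pow]
  · apply Real.log_le_log (by positivity)
    have h' : 2 ^ K ≤ ∏ p ∈ primesTo x, p := h
    have h2 := (Nat.cast_le (α := ℝ)).mpr h'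
    push_cast at h2
    exact h2
  · intro p hp
    have := (mem_primesTo.mp hp).2.pos
    positivity

lemma lemA' (n x : ℕ) (hn : n ≠ 0) (hx : 2 ≤ x) :
    lsig n ≤ logP x + (Real.log n - th x) / (x * Real.log x) := by
  have hx2 : (2:ℝ) ≤ x := by exact_mod_cast hx
  have hl : 0 < Real.log x := Real.log_pos (by linarith)
  have hxl : 0 < x * Real.log x := by positivity
  have h := lemA n x hn hx (1 / (x * Real.log x)) (by positivity) (by field_simp; exact le_rfl) (by
    rw [one_div_mul_eq_div, le_div_iff₀ hxl, one_mul]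
    apply mul_le_mul_of_nonneg_left _ (by linarith)
    exact Real.log_le_log (by linarith) (by linarith))
  rw [Finset.sum_sub_distrib, ← Finset.mul_sum] at h
  unfold logP th
  refine h.trans (le_of_eq ?_)
  ring

lemma mid (n x K : ℕ) (R lo hi l1 l2 t1 t2 L1 L2 L : ℝ) (hn : n ≠ 0) (hx : 2 ≤ x)
    (hP : logP x ≤ Real.log R) (hR : 0 < R) (hth : K * Real.log 2 ≤ th x)
    (hlo : lo ≤ Real.log x) (hhi : Real.log x ≤ hi) (hnL : Real.log n ≤ L)
    (hL1 : 1 < L1) (h1 : L1 ≤ L) (h2 : L ≤ L2)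
    (hl1 : l1 ≤ Real.log L1) (hl2 : l2 ≤ Real.log L2) (p1 : 0 < l1) (p2 : 0 < l2)
    (ht1 : t1 < 64) (ht2 : t2 < 64)
    (a1 : L1 - 0.693147 * K ≤ t1 * (x * lo)) (a2 : L1 - 0.693147 * K ≤ t1 * (x * hi))
    (a3 : L2 - 0.693147 * K ≤ t2 * (x * lo)) (a4 : L2 - 0.693147 * K ≤ t2 * (x * hi))
    (b1 : R ≤ 1.842 * l1 * (1 - t1 / 64) ^ 64) (b2 : R ≤ 1.842 * l2 * (1 - t2 / 64) ^ 64) :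
    lsig n ≤ Real.log (1.842 * Real.log L) := by
  have hx2 : (2:ℝ) ≤ x := by exact_mod_cast hx
  have hl : 0 < Real.log x := Real.log_pos (by linarith)
  have hxl : 0 < x * Real.log x := by positivity
  have hA := lemA' n x hn hx
  have hth' : 0.693147 * (K:ℝ) ≤ th x := by
    have := Real.log_two_gt_d9
    have h3 : 0.693147 * (K:ℝ) ≤ K * Real.log 2 := by
      rw [mul_comm]; apply mul_le_mul_of_nonneg_left _ (by positivity); norm_num at this ⊢; linarith
    linarith
  have key : ∀ t Li : ℝ, Li - 0.693147 * K ≤ t * (x * lo) → Li - 0.693147 * K ≤ t * (x * hi) →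
      (Li - th x) / (x * Real.log x) ≤ t := by
    intro t Li q1 q2
    rw [div_le_iff₀ hxl]
    rcases le_total 0 t with ht | ht
    · have : t * (x * lo) ≤ t * (x * Real.log x) :=
        mul_le_mul_of_nonneg_left (mul_le_mul_of_nonneg_left hlo (by linarith)) ht
      linarith
    · have : t * (x * hi) ≤ t * (x * Real.log x) :=
        mul_le_mul_of_nonpos_left (mul_le_mul_of_nonneg_left hhi (by linarith)) ht
      linarith
  have k1 := key t1 L1 a1 a2
  have k2 := key t2 L2 a3 a4
  have e1 := endpt R t1 l1 L1 hR ht1 hl1 p1 b1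
  have e2 := endpt R t2 l2 L2 hR ht2 hl2 p2 b2
  have c := conc (Real.log R - th x / (x * Real.log x)) (1 / (x * Real.log x)) L1 L2 L hL1 h1 h2
    (by rw [sub_div] at k1; rw [one_div_mul_eq_div]; linarith)
    (by rw [sub_div] at k2; rw [one_div_mul_eq_div]; linarith)
  have h5 : (Real.log n - th x) / (x * Real.log x) ≤ (L - th x) / (x * Real.log x) := by
    gcongr
  rw [sub_div L] at h5
  rw [one_div_mul_eq_div] at c
  linarith

lemma logs_pow_ge (a : ℝ) (l : ℝ) (n m : ℕ) (hm : 0 < m) (ha : 0 < a) (hl : l = (n:ℝ) / m)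
    (h : (2.7183:ℝ) ^ n ≤ a ^ m) : l ≤ Real.log a := hl ▸ log_ge_of a n m hm ha h

def geo (p b : ℕ) : ℕ := Nat.div (Nat.sub (Nat.pow p (Nat.succ b)) 1) (Nat.sub p 1)

/-- comparing exponent `b` with chosen exponent `e` -/
def chk1 (k e p b : ℕ) : Bool :=
  Nat.ble (Nat.mul (Nat.mul (Nat.pow (geo p b) k) (Nat.pow p e)) (Nat.pow (Nat.pow p e) k))
    (Nat.mul (Nat.mul (Nat.pow (geo p e) k) (Nat.pow (Nat.pow p b) k)) (Nat.pow p b))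

def chkT (k e p A : ℕ) : Bool :=
  Nat.ble (Nat.mul (Nat.mul (Nat.pow p k) (Nat.pow p e)) (Nat.pow (Nat.pow p e) k))
    (Nat.mul (Nat.mul (Nat.pow (geo p e) k) (Nat.pow (Nat.sub p 1) k)) (Nat.pow p A))

def chkAll (k e p A : ℕ) : Bool :=
  Nat.rec (chkT k e p A) (fun b ih => chk1 k e p b && ih) A

lemma chkAux (k e p A B : ℕ)
    (h : (Nat.rec (chkT k e p A) (fun b ih => chk1 k e p b && ih) B : Bool) = true) :
    chkT k e p A = true ∧ ∀ b < B, chk1 k e p b = true := by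
  induction B with
  | zero => exact ⟨h, by simp⟩
  | succ B ih =>
    simp only [Bool.and_eq_true] at h
    obtain ⟨h1, h2⟩ := h
    obtain ⟨h3, h4⟩ := ih h2
    refine ⟨h3, fun b hb => ?_⟩
    rcases Nat.lt_succ_iff_lt_or_eq.mp hb with h | h
    · exact h4 b h
    · rw [h]; exact h1

lemma geo_eq (p b : ℕ) (hp : p.Prime) : geo p b = ArithmeticFunction.sigma 1 (p ^ b) := by
  have h := sigma_pp p b hp
  have : 0 < p - 1 := by have := hp.two_le; omega
  change (p ^ (b+1) - 1) / (p - 1) = _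
  rw [← h, Nat.add_sub_cancel, Nat.mul_div_cancel _ this]

lemma lsig_geo (p b : ℕ) (hp : p.Prime) : lsig (p ^ b) = Real.log (geo p b) - b * Real.log p := by
  unfold lsig
  rw [← geo_eq p b hp, Real.log_div, Nat.cast_pow, Real.log_pow]
  · have : 0 < geo p b := by
      rw [geo_eq p b hp, ArithmeticFunction.sigma_pos_iff]; exact pow_pos hp.pos _
    positivity
  · have : 0 < p ^ b := pow_pos hp.pos _
    positivity

lemma chk_sound (k e p A : ℕ) (hk : 0 < k) (hp : p.Prime) (h : chkAll k e p A = true) (b : ℕ) :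
    lsig (p ^ b) - 1 / k * (b * Real.log p) ≤ lsig (p ^ e) - 1 / k * (e * Real.log p) := by
  obtain ⟨hT, hB⟩ := chkAux k e p A A h
  have hp0 : (0:ℝ) < p := by exact_mod_cast hp.pos
  have hp2 : (2:ℝ) ≤ p := by exact_mod_cast hp.two_le
  have hk' : (0:ℝ) < k := by exact_mod_cast hk
  have hg : ∀ b, (0:ℝ) < geo p b := fun b => by
    have : 0 < geo p b := by
      rw [geo_eq p b hp, ArithmeticFunction.sigma_pos_iff]; exact pow_pos hp.pos _
    exact_mod_cast this
  have fin : k * lsig (p ^ b) - b * Real.log p ≤ k * lsig (p ^ e) - e * Real.log p →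
      lsig (p ^ b) - 1 / k * (b * Real.log p) ≤ lsig (p ^ e) - 1 / k * (e * Real.log p) := by
    intro hh
    have e1 : ∀ b : ℕ, lsig (p ^ b) - 1 / k * (b * Real.log p) = (k * lsig (p ^ b) - b * Real.log p) / k := by
      intro b; field_simp
    rw [e1, e1]
    exact div_le_div_of_nonneg_right hh hk'.le
  apply fin
  by_cases hb : b < A
  · have h1 := hB b hb
    unfold chk1 at h1
    rw [Nat.ble_eq] at h1
    have h2 : (geo p b) ^ k * p ^ e * (p ^ e) ^ k ≤ (geo p e) ^ k * (p ^ b) ^ k * p ^ b := h1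
    have h3 := (Nat.cast_le (α := ℝ)).mpr h2
    push_cast at h3
    have g1 := hg b
    have g2 := hg e
    have h4 := Real.log_le_log (by positivity) h3
    rw [Real.log_mul (by positivity) (by positivity), Real.log_mul (by positivity) (by positivity),
      Real.log_mul (by positivity) (by positivity), Real.log_mul (by positivity) (by positivity)] at h4
    simp only [Real.log_pow] at h4
    rw [lsig_geo p b hp, lsig_geo p e hp]
    linarith
  · unfold chkT at hT
    rw [Nat.ble_eq] at hT
    have h2 : p ^ k * p ^ e * (p ^ e) ^ k ≤ (geo p e) ^ k * (p - 1) ^ k * p ^ A := hT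
    have h3 := (Nat.cast_le (α := ℝ)).mpr h2
    have h1 : ((p - 1 : ℕ) : ℝ) = (p:ℝ) - 1 := by rw [Nat.cast_sub hp.one_lt.le]; simp
    simp only [Nat.cast_mul, Nat.cast_pow, h1] at h3
    have g2 := hg e
    have g3 : (0:ℝ) < p - 1 := by linarith
    have h4 := Real.log_le_log (by positivity) h3
    rw [Real.log_mul (by positivity) (by positivity), Real.log_mul (by positivity) (by positivity),
      Real.log_mul (by positivity) (by positivity), Real.log_mul (by positivity) (by positivity)] at h4
    simp only [Real.log_pow] at h4
    have h5 := lsig_pp_le p b hp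
    have h6 : - Real.log (1 - 1 / (p:ℝ)) = Real.log p - Real.log (p - 1) := by
      rw [← Real.log_inv, ← Real.log_div (by positivity) (by positivity)]
      congr 1
      field_simp
    have h7 : (k:ℝ) * lsig (p ^ b) ≤ k * (Real.log p - Real.log (p - 1)) := by
      rw [← h6]; exact mul_le_mul_of_nonneg_left h5 hk'.le
    have h8 : (A:ℝ) * Real.log p ≤ b * Real.log p := by
      apply mul_le_mul_of_nonneg_right
      · exact_mod_cast (by omega : A ≤ b)
      · exact Real.log_nonneg (by linarith)
    rw [lsig_geo p e hp]
    linarith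

lemma caBound (n x d k K A Rn Rd : ℕ) (e : ℕ → ℕ) (hn : n ≠ 0) (hx : 2 ≤ x) (hk : 0 < k)
    (hxd : x < 2 ^ d) (hx2 : x < 229 ^ 2) (hkx : (k:ℝ) / x ≤ Real.log (x + 1)) (hRd : 0 < Rd)
    (c1 : psum (fun p => cond (chkAll k (e p) p A) 0 1) x d = 0)
    (c2 : Nat.ble (Nat.mul (pprod (fun p => geo p (e p)) x d) Rd)
      (Nat.mul Rn (pprod (fun p => Nat.pow p (e p)) x d)) = true)
    (c3 : Nat.ble (Nat.pow 2 K) (pprod (fun p => Nat.pow p (e p)) x d) = true) :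
    lsig n ≤ 1 / k * Real.log n + (Real.log ((Rn:ℝ) / Rd) - 1 / k * (K * Real.log 2)) := by
  have hx' : (2:ℝ) ≤ x := by exact_mod_cast hx
  have hk' : (0:ℝ) < k := by exact_mod_cast hk
  rw [psum_eq _ _ _ hxd hx2, Finset.sum_eq_zero_iff] at c1
  have hchk : ∀ p ∈ primesTo x, chkAll k (e p) p A = true := by
    intro p hp
    have := c1 p hp
    cases hq : chkAll k (e p) p A with
    | true => rfl
    | false => rw [hq] at this; simp at this
  have key := lsig_le_sum n x hn (1 / k)
    (fun p => if p ≤ x then (lsig (p ^ (e p)) - 1 / k * ((e p) * Real.log p)) else 0) ?_ ?_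
  · refine key.trans (add_le_add le_rfl ?_)
    have s1 : ∑ p ∈ primesTo x, (if p ≤ x then (lsig (p ^ (e p)) - 1 / (k:ℝ) * ((e p) * Real.log p)) else 0)
        = ∑ p ∈ primesTo x, lsig (p ^ (e p)) - 1 / k * ∑ p ∈ primesTo x, (e p) * Real.log p := by
      rw [Finset.mul_sum, ← Finset.sum_sub_distrib]
      refine Finset.sum_congr rfl fun p hp => ?_
      rw [if_pos (mem_primesTo.mp hp).1]
    rw [s1]
    have hpos : ∀ p ∈ primesTo x, (0:ℝ) < (p:ℝ) ^ (e p) := fun p hp => by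
      have := (mem_primesTo.mp hp).2.pos
      positivity
    have hgpos : ∀ p ∈ primesTo x, (0:ℝ) < geo p (e p) := fun p hp => by
      have hp := (mem_primesTo.mp hp).2
      have : 0 < geo p (e p) := by
        rw [geo_eq p _ hp, ArithmeticFunction.sigma_pos_iff]; exact pow_pos hp.pos _
      exact_mod_cast this
    have s2 : ∑ p ∈ primesTo x, (e p) * Real.log p = Real.log (∏ p ∈ primesTo x, (p:ℝ) ^ (e p)) := by
      rw [Real.log_prod (fun p hp => (hpos p hp).ne')]
      refine Finset.sum_congr rfl fun p hp => ?_
      rw [Real.log_pow]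
    have s3 : ∑ p ∈ primesTo x, lsig (p ^ (e p)) =
        Real.log (∏ p ∈ primesTo x, (geo p (e p) : ℝ)) - Real.log (∏ p ∈ primesTo x, (p:ℝ) ^ (e p)) := by
      rw [← s2, Real.log_prod (fun p hp => (hgpos p hp).ne'), ← Finset.sum_sub_distrib]
      refine Finset.sum_congr rfl fun p hp => ?_
      rw [lsig_geo _ _ (mem_primesTo.mp hp).2]
    have q1 := Finset.prod_pos hpos
    have q2 := Finset.prod_pos hgpos
    rw [Nat.ble_eq, pprod_eq _ _ _ hxd hx2] at c2 c3
    rw [pprod_eq _ _ _ hxd hx2] at c2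
    have c2' : (∏ p ∈ primesTo x, geo p (e p)) * Rd ≤ Rn * ∏ p ∈ primesTo x, p ^ (e p) := c2
    have c3' : 2 ^ K ≤ ∏ p ∈ primesTo x, p ^ (e p) := c3
    have c2r := (Nat.cast_le (α := ℝ)).mpr c2'
    have c3r := (Nat.cast_le (α := ℝ)).mpr c3'
    push_cast at c2r c3r
    have hRd' : (0:ℝ) < Rd := by exact_mod_cast hRd
    have f1 : ∑ p ∈ primesTo x, lsig (p ^ (e p)) ≤ Real.log ((Rn:ℝ) / Rd) := by
      rw [s3, ← Real.log_div q2.ne' q1.ne']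
      apply Real.log_le_log (by positivity)
      rw [div_le_div_iff₀ q1 hRd']
      exact c2r
    have f2 : (K:ℝ) * Real.log 2 ≤ ∑ p ∈ primesTo x, (e p) * Real.log p := by
      rw [s2, ← Real.log_pow]
      exact Real.log_le_log (by positivity) c3r
    have f3 := mul_le_mul_of_nonneg_left f2 (by positivity : 0 ≤ 1 / (k:ℝ))
    linarith
  · intro p hp b
    by_cases hpx : p ≤ x
    · simp only [if_pos hpx]
      exact chk_sound k (e p) p A hk hp (hchk p (mem_primesTo.mpr ⟨hpx, hp⟩)) b
    · simp only [if_neg hpx]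
      refine tail_le x p b hx hp (by omega) (1 / k) (by positivity) ?_
      rw [div_le_iff₀ (by linarith)] at hkx
      rw [one_div_mul_eq_div, le_div_iff₀ hk']
      linarith
  · intro p hp hxp
    simp only [if_neg (by omega : ¬ p ≤ x)]
    exact le_rfl

lemma caMid (n k K : ℕ) (R l1 l2 t1 t2 L1 L2 L : ℝ) (hk : 0 < k)
    (hb : lsig n ≤ 1 / k * Real.log n + (Real.log R - 1 / k * (K * Real.log 2)))
    (hR : 0 < R) (hnL : Real.log n ≤ L)
    (hL1 : 1 < L1) (h1 : L1 ≤ L) (h2 : L ≤ L2)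
    (hl1 : l1 ≤ Real.log L1) (hl2 : l2 ≤ Real.log L2) (p1 : 0 < l1) (p2 : 0 < l2)
    (ht1 : t1 < 64) (ht2 : t2 < 64)
    (a1 : L1 - 0.693147 * K ≤ t1 * k)
    (a3 : L2 - 0.693147 * K ≤ t2 * k)
    (b1 : R ≤ 1.842 * l1 * (1 - t1 / 64) ^ 64) (b2 : R ≤ 1.842 * l2 * (1 - t2 / 64) ^ 64) :
    lsig n ≤ Real.log (1.842 * Real.log L) := by
  have hk' : (0:ℝ) < k := by exact_mod_cast hk
  have hth' : 0.693147 * (K:ℝ) ≤ K * Real.log 2 := by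
    have := Real.log_two_gt_d9
    rw [mul_comm]; apply mul_le_mul_of_nonneg_left _ (by positivity); norm_num at this ⊢; linarith
  have e1 := endpt R t1 l1 L1 hR ht1 hl1 p1 b1
  have e2 := endpt R t2 l2 L2 hR ht2 hl2 p2 b2
  have key : ∀ t Li : ℝ, Li - 0.693147 * K ≤ t * k → 1 / k * Li - 1 / k * (K * Real.log 2) ≤ t := by
    intro t Li q
    rw [← mul_sub, one_div_mul_eq_div, div_le_iff₀ hk']
    linarith
  have k1 := key t1 L1 a1
  have k2 := key t2 L2 a3
  have c := conc (Real.log R - 1 / k * (K * Real.log 2)) (1 / k) L1 L2 L hL1 h1 h2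
    (by linarith) (by linarith)
  have := mul_le_mul_of_nonneg_left hnL (by positivity : 0 ≤ 1 / (k:ℝ))
  linarith
set_option exponentiation.threshold 5000

def eF80 (p : ℕ) : ℕ := cond (Nat.ble p 2) 5 (cond (Nat.ble p 3) 3 (cond (Nat.ble p 5) 2 (1)))

lemma ca80 (n : ℕ) (hn : n ≠ 0) (L : ℝ) (hnL : Real.log n ≤ L) (h1 : 16 ≤ L) (h2 : L ≤ 40) :
    lsig n ≤ Real.log (1.842 * Real.log L) := by
  have hb := caBound n 25 5 80 37 16 56476 10000 eF80 hn (by norm_num) (by norm_num) (by norm_num) (by norm_num)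
    (le_trans (by norm_num) (log_ge_of ((((25:ℕ)):ℝ) + 1) 325 100 (by norm_num) (by norm_num) (by norm_num)))
    (by norm_num) (by decide +kernel) (by decide +kernel) (by decide +kernel)
  refine caMid n 80 37 _ (277 / 100) (368 / 100) (-1205 / 10000) (1795 / 10000) 16 40 L (by norm_num) hb (by norm_num) hnL (by norm_num) h1 h2
    (logs_pow_ge _ _ 277 100 (by norm_num) (by norm_num) (by norm_num) (by norm_num))
    (logs_pow_ge _ _ 368 100 (by norm_num) (by norm_num) (by norm_num) (by norm_num)) (by norm_num) (by norm_num)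
    (by norm_num) (by norm_num) (by norm_num) (by norm_num) (by norm_num) (by norm_num)

def eF300 (p : ℕ) : ℕ := cond (Nat.ble p 2) 7 (cond (Nat.ble p 3) 4 (cond (Nat.ble p 5) 3 (cond (Nat.ble p 7) 2 (cond (Nat.ble p 67) 1 (0)))))

lemma ca300 (n : ℕ) (hn : n ≠ 0) (L : ℝ) (hnL : Real.log n ≤ L) (h1 : 40 ≤ L) (h2 : L ≤ 110) :
    lsig n ≤ Real.log (1.842 * Real.log L) := by
  have hb := caBound n 71 7 300 100 16 74077 10000 eF300 hn (by norm_num) (by norm_num) (by norm_num) (by norm_num)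
    (le_trans (by norm_num) (log_ge_of ((((71:ℕ)):ℝ) + 1) 427 100 (by norm_num) (by norm_num) (by norm_num)))
    (by norm_num) (by decide +kernel) (by decide +kernel) (by decide +kernel)
  refine caMid n 300 100 _ (368 / 100) (470 / 100) (-977 / 10000) (1357 / 10000) 40 110 L (by norm_num) hb (by norm_num) hnL (by norm_num) h1 h2
    (logs_pow_ge _ _ 368 100 (by norm_num) (by norm_num) (by norm_num) (by norm_num))
    (logs_pow_ge _ _ 470 100 (by norm_num) (by norm_num) (by norm_num) (by norm_num)) (by norm_num) (by norm_num)
    (by norm_num) (by norm_num) (by norm_num) (by norm_num) (by norm_num) (by norm_num)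

def eF1000 (p : ℕ) : ℕ := cond (Nat.ble p 2) 9 (cond (Nat.ble p 3) 5 (cond (Nat.ble p 7) 3 (cond (Nat.ble p 17) 2 (cond (Nat.ble p 181) 1 (0)))))

lemma ca1000 (n : ℕ) (hn : n ≠ 0) (L : ℝ) (hnL : Real.log n ≤ L) (h1 : 110 ≤ L) (h2 : L ≤ 330) :
    lsig n ≤ Real.log (1.842 * Real.log L) := by
  have hb := caBound n 191 8 1000 277 16 92608 10000 eF1000 hn (by norm_num) (by norm_num) (by norm_num) (by norm_num)
    (le_trans (by norm_num) (log_ge_of ((((191:ℕ)):ℝ) + 1) 525 100 (by norm_num) (by norm_num) (by norm_num)))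
    (by norm_num) (by decide +kernel) (by decide +kernel) (by decide +kernel)
  refine caMid n 1000 277 _ (470 / 100) (579 / 100) (-820 / 10000) (1380 / 10000) 110 330 L (by norm_num) hb (by norm_num) hnL (by norm_num) h1 h2
    (logs_pow_ge _ _ 470 100 (by norm_num) (by norm_num) (by norm_num) (by norm_num))
    (logs_pow_ge _ _ 579 100 (by norm_num) (by norm_num) (by norm_num) (by norm_num)) (by norm_num) (by norm_num)
    (by norm_num) (by norm_num) (by norm_num) (by norm_num) (by norm_num) (by norm_num)

lemma logP_500 : logP 500 ≤ Real.log ((111596:ℕ) / (10000:ℕ)) :=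
  logP_le 500 9 111596 10000 (by norm_num) (by norm_num) (by norm_num) (by decide +kernel)

lemma th_500 : (684:ℕ) * Real.log 2 ≤ th 500 :=
  th_ge 500 9 684 (by norm_num) (by norm_num) (by decide +kernel)

lemma mid500 (n : ℕ) (hn : n ≠ 0) (L : ℝ) (hnL : Real.log n ≤ L) (h1 : 330 ≤ L) (h2 : L ≤ 700) :
    lsig n ≤ Real.log (1.842 * Real.log L) := by
  refine mid n 500 684 _ (621 / 100) (622 / 100) (579 / 100) (655 / 100) (-463 / 10000) (728 / 10000) 330 700 L hn (by norm_num) logP_500 (by norm_num) th_500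
    (logs_pow_ge _ _ 621 100 (by norm_num) (by norm_num) (by norm_num) (by norm_num))
    (le_trans (log_le_of _ 622 100 (by norm_num) (by norm_num) (by norm_num)) (by norm_num))
    hnL (by norm_num) h1 h2
    (logs_pow_ge _ _ 579 100 (by norm_num) (by norm_num) (by norm_num) (by norm_num))
    (logs_pow_ge _ _ 655 100 (by norm_num) (by norm_num) (by norm_num) (by norm_num)) (by norm_num) (by norm_num)
    (by norm_num) (by norm_num) (by norm_num) (by norm_num) (by norm_num) (by norm_num) (by norm_num) (by norm_num)

lemma logP_1000 : logP 1000 ≤ Real.log ((123510:ℕ) / (10000:ℕ)) :=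
  logP_le 1000 10 123510 10000 (by norm_num) (by norm_num) (by norm_num) (by decide +kernel)

lemma th_1000 : (1379:ℕ) * Real.log 2 ≤ th 1000 :=
  th_ge 1000 10 1379 (by norm_num) (by norm_num) (by decide +kernel)

lemma mid1000 (n : ℕ) (hn : n ≠ 0) (L : ℝ) (hnL : Real.log n ≤ L) (h1 : 700 ≤ L) (h2 : L ≤ 1570) :
    lsig n ≤ Real.log (1.842 * Real.log L) := by
  refine mid n 1000 1379 _ (690 / 100) (691 / 100) (655 / 100) (735 / 100) (-370 / 10000) (891 / 10000) 700 1570 L hn (by norm_num) logP_1000 (by norm_num) th_1000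
    (logs_pow_ge _ _ 690 100 (by norm_num) (by norm_num) (by norm_num) (by norm_num))
    (le_trans (log_le_of _ 691 100 (by norm_num) (by norm_num) (by norm_num)) (by norm_num))
    hnL (by norm_num) h1 h2
    (logs_pow_ge _ _ 655 100 (by norm_num) (by norm_num) (by norm_num) (by norm_num))
    (logs_pow_ge _ _ 735 100 (by norm_num) (by norm_num) (by norm_num) (by norm_num)) (by norm_num) (by norm_num)
    (by norm_num) (by norm_num) (by norm_num) (by norm_num) (by norm_num) (by norm_num) (by norm_num) (by norm_num)

lemma logP_3000 : logP 3000 ≤ Real.log ((142928:ℕ) / (10000:ℕ)) :=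
  logP_le 3000 12 142928 10000 (by norm_num) (by norm_num) (by norm_num) (by decide +kernel)

lemma th_3000 : (4230:ℕ) * Real.log 2 ≤ th 3000 :=
  th_ge 3000 12 4230 (by norm_num) (by norm_num) (by decide +kernel)

lemma mid3000 (n : ℕ) (hn : n ≠ 0) (L : ℝ) (hnL : Real.log n ≤ L) (h1 : 1570 ≤ L) (h2 : L ≤ 5000) :
    lsig n ≤ Real.log (1.842 * Real.log L) := by
  refine mid n 3000 4230 _ (800 / 100) (801 / 100) (735 / 100) (851 / 100) (-566 / 10000) (862 / 10000) 1570 5000 L hn (by norm_num) logP_3000 (by norm_num) th_3000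
    (logs_pow_ge _ _ 800 100 (by norm_num) (by norm_num) (by norm_num) (by norm_num))
    (le_trans (log_le_of _ 801 100 (by norm_num) (by norm_num) (by norm_num)) (by norm_num))
    hnL (by norm_num) h1 h2
    (logs_pow_ge _ _ 735 100 (by norm_num) (by norm_num) (by norm_num) (by norm_num))
    (logs_pow_ge _ _ 851 100 (by norm_num) (by norm_num) (by norm_num) (by norm_num)) (by norm_num) (by norm_num)
    (by norm_num) (by norm_num) (by norm_num) (by norm_num) (by norm_num) (by norm_num) (by norm_num) (by norm_num)

lemma logP_10000 : logP 10000 ≤ Real.log ((164245:ℕ) / (10000:ℕ)) :=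
  logP_le 10000 14 164245 10000 (by norm_num) (by norm_num) (by norm_num) (by decide +kernel)

lemma th_10000 : (14276:ℕ) * Real.log 2 ≤ th 10000 :=
  th_ge 10000 14 14276 (by norm_num) (by norm_num) (by decide +kernel)

lemma mid10000 (n : ℕ) (hn : n ≠ 0) (L : ℝ) (hnL : Real.log n ≤ L) (h1 : 5000 ≤ L) (h2 : L ≤ 18000) :
    lsig n ≤ Real.log (1.842 * Real.log L) := by
  refine mid n 10000 14276 _ (921 / 100) (922 / 100) (851 / 100) (979 / 100) (-530 / 10000) (880 / 10000) 5000 18000 L hn (by norm_num) logP_10000 (by norm_num) th_10000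
    (logs_pow_ge _ _ 921 100 (by norm_num) (by norm_num) (by norm_num) (by norm_num))
    (le_trans (log_le_of _ 922 100 (by norm_num) (by norm_num) (by norm_num)) (by norm_num))
    hnL (by norm_num) h1 h2
    (logs_pow_ge _ _ 851 100 (by norm_num) (by norm_num) (by norm_num) (by norm_num))
    (logs_pow_ge _ _ 979 100 (by norm_num) (by norm_num) (by norm_num) (by norm_num)) (by norm_num) (by norm_num)
    (by norm_num) (by norm_num) (by norm_num) (by norm_num) (by norm_num) (by norm_num) (by norm_num) (by norm_num)

lemma logP_40000 : logP 40000 ≤ Real.log ((188821:ℕ) / (10000:ℕ)) :=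
  logP_le 40000 16 188821 10000 (by norm_num) (by norm_num) (by norm_num) (by decide +kernel)

lemma th_40000 : (57375:ℕ) * Real.log 2 ≤ th 40000 :=
  th_ge 40000 16 57375 (by norm_num) (by norm_num) (by decide +kernel)

lemma mid40000 (n : ℕ) (hn : n ≠ 0) (L : ℝ) (hnL : Real.log n ≤ L) (h1 : 18000 ≤ L) (h2 : L ≤ 51000) :
    lsig n ≤ Real.log (1.842 * Real.log L) := by
  refine mid n 40000 57375 _ (1059 / 100) (1060 / 100) (979 / 100) (1083 / 100) (-513 / 10000) (266 / 10000) 18000 51000 L hn (by norm_num) logP_40000 (by norm_num) th_40000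
    (logs_pow_ge _ _ 1059 100 (by norm_num) (by norm_num) (by norm_num) (by norm_num))
    (le_trans (log_le_of _ 1060 100 (by norm_num) (by norm_num) (by norm_num)) (by norm_num))
    hnL (by norm_num) h1 h2
    (logs_pow_ge _ _ 979 100 (by norm_num) (by norm_num) (by norm_num) (by norm_num))
    (logs_pow_ge _ _ 1083 100 (by norm_num) (by norm_num) (by norm_num) (by norm_num)) (by norm_num) (by norm_num)
    (by norm_num) (by norm_num) (by norm_num) (by norm_num) (by norm_num) (by norm_num) (by norm_num) (by norm_num)

lemma logP_50000 : logP 50000 ≤ Real.log ((192781:ℕ) / (10000:ℕ)) :=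
  logP_le 50000 16 192781 10000 (by norm_num) (by norm_num) (by norm_num) (by decide +kernel)

lemma th_50000 : (71748:ℕ) * Real.log 2 ≤ th 50000 :=
  th_ge 50000 16 71748 (by norm_num) (by norm_num) (by decide +kernel)

/-! Large range: Chebyshev type upper bound -/

lemma log_fact_ge (N : ℕ) (hN : 1 ≤ N) : N * Real.log N - N ≤ Real.log (N.factorial : ℝ) := by
  induction N, hN using Nat.le_induction with
  | base => simp
  | succ N hN ih =>
    have hN' : (1:ℝ) ≤ N := by exact_mod_cast hN
    rw [Nat.factorial_succ, Nat.cast_mul, Real.log_mul (by positivity) (by positivity)]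
    push_cast
    have h := Real.log_le_sub_one_of_pos (show 0 < ((N:ℝ)+1)/N by positivity)
    rw [Real.log_div (by positivity) (by positivity)] at h
    have h2 : (N:ℝ) * (Real.log (N+1) - Real.log N) ≤ N * (((N:ℝ)+1)/N - 1) :=
      mul_le_mul_of_nonneg_left h (by positivity)
    have e : N * (((N:ℝ)+1)/N - 1) = 1 := by field_simp; ring
    linarith

lemma log_fact_le (N : ℕ) (hN : 1 ≤ N) :
    Real.log (N.factorial : ℝ) ≤ N * Real.log N - N + Real.log N + 1 := by
  induction N, hN using Nat.le_induction with
  | base => simp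
  | succ N hN ih =>
    have hN' : (1:ℝ) ≤ N := by exact_mod_cast hN
    rw [Nat.factorial_succ, Nat.cast_mul, Real.log_mul (by positivity) (by positivity)]
    push_cast
    have h := Real.log_le_sub_one_of_pos (show 0 < (N:ℝ)/(N+1) by positivity)
    rw [Real.log_div (by positivity) (by positivity)] at h
    have h2 : ((N:ℝ)+1) * (Real.log N - Real.log (N+1)) ≤ (N+1) * ((N:ℝ)/(N+1) - 1) :=
      mul_le_mul_of_nonneg_left h (by positivity)
    have e : ((N:ℝ)+1) * ((N:ℝ)/(N+1) - 1) = -1 := by field_simp; ring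
    linarith

lemma fact_div_upper (m j : ℕ) (hj : 1 ≤ j) (hjm : j ≤ m) :
    Real.log ((m / j).factorial : ℝ) ≤
      (m:ℝ)/j * (Real.log m - Real.log j) - (m:ℝ)/j + (Real.log m - Real.log j) + 1 := by
  have hN : 1 ≤ m / j := Nat.div_pos hjm hj
  have h1 := log_fact_le _ hN
  have hle : ((m / j : ℕ) : ℝ) ≤ (m:ℝ)/j := Nat.cast_div_le
  have hm : (0:ℝ) < m := by exact_mod_cast (by omega : 0 < m)
  have hj' : (0:ℝ) < j := by exact_mod_cast hj
  have hN' : (1:ℝ) ≤ ((m / j : ℕ) : ℝ) := Nat.one_le_cast.mpr hN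
  set N : ℝ := ((m / j : ℕ) : ℝ)
  rw [← Real.log_div hm.ne' hj'.ne']
  set z : ℝ := (m:ℝ)/j
  have hz : 0 < z := by linarith
  have h := Real.log_le_sub_one_of_pos (show 0 < N/z by positivity)
  rw [Real.log_div (by positivity) (by positivity)] at h
  have h2 := mul_le_mul_of_nonneg_left h hz.le
  have e : z * (N/z - 1) = N - z := by field_simp
  have h3 : Real.log N ≤ Real.log z := Real.log_le_log (by linarith) hle
  have h4 : 0 ≤ Real.log N := Real.log_nonneg hN'
  nlinarith

lemma fact_div_lower (m j : ℕ) (hj : 1 ≤ j) (hjm : j ≤ m) :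
    (m:ℝ)/j * (Real.log m - Real.log j) - (m:ℝ)/j - (Real.log m - Real.log j) ≤
    Real.log ((m / j).factorial : ℝ) := by
  have hN : 1 ≤ m / j := Nat.div_pos hjm hj
  have h1 := log_fact_ge _ hN
  have hle : ((m / j : ℕ) : ℝ) ≤ (m:ℝ)/j := Nat.cast_div_le
  have hm : (0:ℝ) < m := by exact_mod_cast (by omega : 0 < m)
  have hj' : (0:ℝ) < j := by exact_mod_cast hj
  have hlt : (m:ℝ)/j ≤ ((m / j : ℕ) : ℝ) + 1 := by
    rw [div_le_iff₀ hj']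
    exact_mod_cast (Nat.lt_mul_of_div_lt (Nat.lt_succ_self _) hj).le
  have hN' : (1:ℝ) ≤ ((m / j : ℕ) : ℝ) := Nat.one_le_cast.mpr hN
  set N : ℝ := ((m / j : ℕ) : ℝ)
  rw [← Real.log_div hm.ne' hj'.ne']
  set z : ℝ := (m:ℝ)/j
  have hz : 0 < z := by linarith
  have h := Real.log_le_sub_one_of_pos (show 0 < z/N by positivity)
  rw [Real.log_div (by positivity) (by positivity)] at h
  have h2 := mul_le_mul_of_nonneg_left h (by linarith : 0 ≤ N)
  have e : N * (z/N - 1) = z - N := by field_simp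
  have h3 : 0 ≤ Real.log z := Real.log_nonneg (by linarith)
  nlinarith

noncomputable def BB (M : ℕ) : ℝ :=
  ∑ n ∈ Finset.Ioc 0 M, ArithmeticFunction.vonMangoldt n * (1 / (n:ℝ) - 1 / M)

lemma log_fact_eq (N m : ℕ) (h : N ≤ m) : Real.log (N.factorial : ℝ) =
    ∑ n ∈ Finset.Ioc 0 m, ArithmeticFunction.vonMangoldt n * ((N / n : ℕ) : ℝ) := by
  have h1 := ArithmeticFunction.sum_Ioc_mul_zeta_eq_sum ArithmeticFunction.vonMangoldt N
  have h2 : Real.log (N.factorial : ℝ) = ∑ n ∈ Finset.Ioc 0 N, Real.log n := by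
    clear h h1
    induction N with
    | zero => simp
    | succ N ih =>
      rw [Nat.factorial_succ, Nat.cast_mul, Real.log_mul (by positivity) (by positivity), ih,
        Finset.sum_Ioc_succ_top (by omega)]
      ring
  rw [h2]
  rw [ArithmeticFunction.vonMangoldt_mul_zeta] at h1
  simp only [ArithmeticFunction.log_apply] at h1
  rw [h1]
  apply Finset.sum_subset
  · exact Finset.Ioc_subset_Ioc_right h
  · intro n hn hn2
    simp only [Finset.mem_Ioc] at hn hn2
    rw [Nat.div_eq_of_lt (by omega)]; simp

lemma g_both (v : ℕ) : v/30 + v/60 ≤ v/3 + v/4 + v/5 + v/6 + v/10 ∧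
    v + (v/30 + v/60) ≤ v/3 + v/4 + v/5 + v/6 + v/10 + 2 := by
  have hr : ∀ r < 60, r/30 + r/60 ≤ r/3 + r/4 + r/5 + r/6 + r/10 ∧
    r + (r/30 + r/60) ≤ r/3 + r/4 + r/5 + r/6 + r/10 + 2 := by decide +kernel
  obtain ⟨h1, h2⟩ := hr (v % 60) (Nat.mod_lt _ (by norm_num))
  have e : v = 60 * (v/60) + v % 60 := (Nat.div_add_mod v 60).symm
  generalize v / 60 = q at *
  generalize v % 60 = r at *
  subst e
  have ee : ∀ m k : ℕ, 0 < m → m * k = 60 → (60 * q + r) / m = k * q + r / m := by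
    intro m k hm hmk
    rw [← hmk, mul_assoc, Nat.mul_add_div hm]
  rw [ee 3 20 (by norm_num) (by norm_num), ee 4 15 (by norm_num) (by norm_num),
    ee 5 12 (by norm_num) (by norm_num), ee 6 10 (by norm_num) (by norm_num),
    ee 10 6 (by norm_num) (by norm_num), ee 30 2 (by norm_num) (by norm_num)]
  constructor <;> linarith [Nat.zero_le (r / 60), Nat.zero_le q]

lemma g_nonneg (v : ℕ) : v/30 + v/60 ≤ v/3 + v/4 + v/5 + v/6 + v/10 := (g_both v).1
lemma g_ge (v : ℕ) : v + (v/30 + v/60) ≤ v/3 + v/4 + v/5 + v/6 + v/10 + 2 := (g_both v).2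

lemma BB_fact (M : ℕ) (hM : 1 ≤ M) : 3 * (M * BB M) ≤
    Real.log ((3*M/3).factorial : ℝ) + Real.log ((3*M/4).factorial : ℝ) +
    Real.log ((3*M/5).factorial : ℝ) + Real.log ((3*M/6).factorial : ℝ) +
    Real.log ((3*M/10).factorial : ℝ) - Real.log ((3*M/30).factorial : ℝ) -
    Real.log ((3*M/60).factorial : ℝ) := by
  have hM' : (0:ℝ) < M := by exact_mod_cast hM
  have e1 : 3 * (M * BB M) = ∑ n ∈ Finset.Ioc 0 M, ArithmeticFunction.vonMangoldt n * (3 * M / (n:ℝ) - 3) := by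
    unfold BB
    rw [Finset.mul_sum, Finset.mul_sum]
    refine Finset.sum_congr rfl fun n hn => ?_
    field_simp
  have hs : ∀ j : ℕ, 3 * M / j ≤ 3 * M := fun j => Nat.div_le_self _ _
  rw [log_fact_eq _ _ (hs 3), log_fact_eq _ _ (hs 4), log_fact_eq _ _ (hs 5), log_fact_eq _ _ (hs 6),
    log_fact_eq _ _ (hs 10), log_fact_eq _ _ (hs 30), log_fact_eq _ _ (hs 60),
    ← Finset.sum_add_distrib, ← Finset.sum_add_distrib, ← Finset.sum_add_distrib,
    ← Finset.sum_add_distrib, ← Finset.sum_sub_distrib, ← Finset.sum_sub_distrib, e1]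
  have hc : ∀ n j : ℕ, 3 * M / j / n = 3 * M / n / j := fun n j => by
    rw [Nat.div_div_eq_div_mul, Nat.div_div_eq_div_mul, mul_comm j n]
  refine (Finset.sum_le_sum (g := fun n => _) fun n hn => ?_).trans
    (Finset.sum_le_sum_of_subset_of_nonneg (Finset.Ioc_subset_Ioc_right (by omega : M ≤ 3 * M)) ?_)
  · simp only [Finset.mem_Ioc] at hn
    simp only [hc]
    have hn' : (0:ℝ) < n := by exact_mod_cast hn.1
    have hv : 3 * (M:ℝ) / n ≤ ((3 * M / n : ℕ):ℝ) + 1 := by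
      rw [div_le_iff₀ hn']
      exact_mod_cast (Nat.lt_mul_of_div_lt (Nat.lt_succ_self _) hn.1).le
    have h1 := g_ge (3 * M / n)
    have h1' := (Nat.cast_le (α := ℝ)).mpr h1
    have := ArithmeticFunction.vonMangoldt_nonneg (n := n)
    push_cast at h1'
    rw [← mul_add, ← mul_add, ← mul_add, ← mul_add, ← mul_sub, ← mul_sub]
    apply mul_le_mul_of_nonneg_left _ this
    linarith
  · intro n hn _
    simp only [hc]
    have h1 := g_nonneg (3 * M / n)
    have h1' := (Nat.cast_le (α := ℝ)).mpr h1
    have := ArithmeticFunction.vonMangoldt_nonneg (n := n)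
    push_cast at h1'
    rw [← mul_add, ← mul_add, ← mul_add, ← mul_add, ← mul_sub, ← mul_sub]
    apply mul_nonneg this
    linarith

lemma BB_upper (M : ℕ) (hM : 20 ≤ M) : BB M ≤ Real.log M - 1 + 0.55 * Real.log 3 -
    0.7 * Real.log 2 - 0.25 * Real.log 5 + (7 * Real.log M + 5) / (3 * M) := by
  have hM' : (20:ℝ) ≤ M := by exact_mod_cast hM
  have h := BB_fact M (by omega)
  have a3 := fact_div_upper (3*M) 3 (by norm_num) (by omega)
  have a4 := fact_div_upper (3*M) 4 (by norm_num) (by omega)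
  have a5 := fact_div_upper (3*M) 5 (by norm_num) (by omega)
  have a6 := fact_div_upper (3*M) 6 (by norm_num) (by omega)
  have a10 := fact_div_upper (3*M) 10 (by norm_num) (by omega)
  have a30 := fact_div_lower (3*M) 30 (by norm_num) (by omega)
  have a60 := fact_div_lower (3*M) 60 (by norm_num) (by omega)
  have l4 : Real.log 4 = 2 * Real.log 2 := by
    rw [show (4:ℝ) = 2^2 by norm_num, Real.log_pow]; norm_num
  have l6 : Real.log 6 = Real.log 2 + Real.log 3 := by
    rw [← Real.log_mul (by norm_num) (by norm_num)]; norm_num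
  have l10 : Real.log 10 = Real.log 2 + Real.log 5 := by
    rw [← Real.log_mul (by norm_num) (by norm_num)]; norm_num
  have l30 : Real.log 30 = Real.log 2 + Real.log 3 + Real.log 5 := by
    rw [← Real.log_mul (by norm_num) (by norm_num), ← Real.log_mul (by norm_num) (by norm_num)]; norm_num
  have l60 : Real.log 60 = 2 * Real.log 2 + Real.log 3 + Real.log 5 := by
    rw [← l4, ← Real.log_mul (by norm_num) (by norm_num), ← Real.log_mul (by norm_num) (by norm_num)]; norm_num
  have lm : Real.log ((3 * M : ℕ):ℝ) = Real.log 3 + Real.log M := by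
    rw [Nat.cast_mul, Real.log_mul (by norm_num) (by positivity)]; norm_num
  rw [lm] at a3 a4 a5 a6 a10 a30 a60
  push_cast at a3 a4 a5 a6 a10 a30 a60
  rw [l4] at a4
  rw [l6] at a6
  rw [l10] at a10
  rw [l30] at a30
  rw [l60] at a60
  have p2 := Real.log_pos (show (1:ℝ) < 2 by norm_num)
  have p5 : 0 ≤ Real.log 5 := (Real.log_pos (show (1:ℝ) < 5 by norm_num)).le
  have p34 : Real.log 3 ≤ 2 * Real.log 2 := by
    rw [← l4]; exact Real.log_le_log (by norm_num) (by norm_num)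
  have p35 : Real.log 3 ≤ Real.log 5 := Real.log_le_log (by norm_num) (by norm_num)
  have hfin : M * BB M ≤ M * (Real.log M - 1 + 0.55 * Real.log 3 -
    0.7 * Real.log 2 - 0.25 * Real.log 5) + (7 * Real.log M + 5) / 3 := by
    linarith
  have : BB M ≤ (M * (Real.log M - 1 + 0.55 * Real.log 3 -
    0.7 * Real.log 2 - 0.25 * Real.log 5) + (7 * Real.log M + 5) / 3) / M := by
    rw [le_div_iff₀ (by positivity)]; linarith
  refine this.trans (le_of_eq ?_)
  field_simp

lemma log5_lo : ((103:ℕ):ℝ)/(64:ℕ) ≤ Real.log 5 :=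
  log_ge_of 5 103 64 (by norm_num) (by norm_num) (by norm_num)

lemma log3_hi : Real.log 3 ≤ ((167:ℕ):ℝ)/(152:ℕ) :=
  log_le_of 3 167 152 (by norm_num) (by norm_num) (by norm_num)

lemma log50_lo : ((660:ℕ):ℝ)/(61:ℕ) ≤ Real.log 50000 :=
  log_ge_of 50000 660 61 (by norm_num) (by norm_num) (by norm_num)

lemma log50_hi : Real.log 50000 ≤ ((1082:ℕ):ℝ)/(100:ℕ) :=
  log_le_of 50000 1082 100 (by norm_num) (by norm_num) (by norm_num)

lemma BB_le (M : ℕ) (hM : 50000 ≤ M) : BB M ≤ Real.log M - 1.2827 := by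
  have hM' : (50000:ℝ) ≤ M := by exact_mod_cast hM
  have h := BB_upper M (by omega)
  have he : Real.exp 1 ≤ 3 := by have := Real.exp_one_lt_d9; norm_num at this ⊢; linarith
  have hl := Real.log_div_self_antitoneOn (show (50000:ℝ) ∈ Set.Ici (Real.exp 1) by simp; linarith)
    (show (M:ℝ) ∈ Set.Ici (Real.exp 1) by simp; linarith) hM'
  simp only at hl
  have h1 := log50_hi
  have h2 := Real.log_two_gt_d9
  have h3 := log3_hi
  have h5 := log5_lo
  have hi : 1 / (M:ℝ) ≤ 1 / 50000 := one_div_le_one_div_of_le (by norm_num) hM'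
  have e : (7 * Real.log M + 5) / (3 * M) = 7/3 * (Real.log M / M) + 5/3 * (1 / M) := by
    field_simp
  rw [e] at h
  norm_num at h1 h2 h3 h5 ⊢
  linarith

noncomputable def psiN (M : ℕ) : ℝ := ∑ n ∈ Finset.Ioc 0 M, ArithmeticFunction.vonMangoldt n

lemma th_le_psiN (M : ℕ) : th M ≤ psiN M := by
  unfold th psiN
  have h1 : ∑ p ∈ primesTo M, Real.log (p:ℝ) = ∑ p ∈ primesTo M, ArithmeticFunction.vonMangoldt p :=
    Finset.sum_congr rfl fun p hp =>
      (ArithmeticFunction.vonMangoldt_apply_prime (mem_primesTo.mp hp).2).symm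
  rw [h1]
  apply Finset.sum_le_sum_of_subset_of_nonneg
  · intro p hp
    have h := mem_primesTo.mp hp
    exact Finset.mem_Ioc.mpr ⟨h.2.pos, h.1⟩
  · intro n _ _
    exact ArithmeticFunction.vonMangoldt_nonneg

lemma BB_succ (M : ℕ) (hM : 1 ≤ M) : BB (M+1) = BB M + psiN M / ((M:ℝ) * (M+1)) := by
  have hM' : (0:ℝ) < M := by exact_mod_cast hM
  unfold BB psiN
  rw [Finset.sum_Ioc_succ_top (by omega), Finset.sum_div, ← Finset.sum_add_distrib]
  simp only [sub_self, mul_zero, add_zero]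
  refine Finset.sum_congr rfl fun n hn => ?_
  have hn' : (0:ℝ) < n := by exact_mod_cast (Finset.mem_Ioc.mp hn).1
  push_cast
  field_simp
  ring

lemma primesTo_succ (M : ℕ) : primesTo (M+1) = if (M+1).Prime then insert (M+1) (primesTo M) else primesTo M := by
  unfold primesTo
  rw [Finset.range_add_one, Finset.filter_insert]

lemma U_succ (M : ℕ) (hM : 2 ≤ M) :
    logP (M+1) - th (M+1) / (((M:ℝ)+1) * Real.log (M+1)) ≤
      logP M - th M / (((M:ℝ)+1) * Real.log (M+1)) + (1 / (M:ℝ) - 1 / ((M:ℝ)+1)) := by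
  have hM' : (2:ℝ) ≤ M := by exact_mod_cast hM
  have hl : 0 < Real.log ((M:ℝ)+1) := Real.log_pos (by linarith)
  by_cases hp : (M+1).Prime
  · have hnot : M + 1 ∉ primesTo M := by
      rw [mem_primesTo]; omega
    have e1 : logP (M+1) = - Real.log (1 - 1 / ((M:ℝ)+1)) + logP M := by
      unfold logP
      rw [primesTo_succ, if_pos hp, Finset.sum_insert hnot]
      push_cast; rfl
    have e2 : th (M+1) = Real.log ((M:ℝ)+1) + th M := by
      unfold th
      rw [primesTo_succ, if_pos hp, Finset.sum_insert hnot]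
      push_cast; rfl
    have h1 := neg_log_one_sub_le (M+1) (by omega)
    push_cast at h1
    rw [add_sub_cancel_right] at h1
    rw [e1, e2, add_div]
    have e3 : Real.log ((M:ℝ)+1) / (((M:ℝ)+1) * Real.log (M+1)) = 1 / ((M:ℝ)+1) := by
      field_simp
    rw [e3]
    linarith
  · have e1 : logP (M+1) = logP M := by
      unfold logP; rw [primesTo_succ, if_neg hp]
    have e2 : th (M+1) = th M := by
      unfold th; rw [primesTo_succ, if_neg hp]
    rw [e1, e2]
    have : 1 / ((M:ℝ)+1) ≤ 1 / (M:ℝ) := one_div_le_one_div_of_le (by linarith) (by linarith)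
    linarith

noncomputable def VV (M : ℕ) : ℝ :=
  logP M - th M / ((M:ℝ) * Real.log M) + 1 / (M:ℝ) +
    (1 / Real.log M + 1 / (Real.log M)^2) * (Real.log M - 1.2827 + 1 / 50000 - BB M) -
    (Real.log (Real.log M) - 1 / Real.log M)

lemma th_nonneg (M : ℕ) : 0 ≤ th M := by
  unfold th
  refine Finset.sum_nonneg fun p hp => ?_
  exact Real.log_natCast_nonneg p

lemma VV_succ (M : ℕ) (hM : 50000 ≤ M) : VV (M+1) ≤ VV M := by
  have hM' : (50000:ℝ) ≤ M := by exact_mod_cast hM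
  have hU := U_succ M (by omega)
  have hB := BB_succ M (by omega)
  have hB2 := BB_le (M+1) (by omega)
  have hth := th_le_psiN M
  have hth0 := th_nonneg M
  unfold VV
  push_cast at hB2 ⊢
  set s := Real.log (M:ℝ) with hs
  set s' := Real.log ((M:ℝ)+1) with hs'
  have hs0 : 0 < s := Real.log_pos (by linarith)
  have hss : s ≤ s' := Real.log_le_log (by linarith) (by linarith)
  have hs0' : 0 < s' := by linarith
  have hδ : s' - s ≤ 1 / M := by
    have h := Real.log_le_sub_one_of_pos (show 0 < ((M:ℝ)+1)/M by positivity)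
    rw [Real.log_div (by positivity) (by positivity)] at h
    have e : ((M:ℝ)+1)/M - 1 = 1 / M := by field_simp; ring
    linarith
  have hM0 : 1 / (M:ℝ) ≤ 1 / 50000 := one_div_le_one_div_of_le (by norm_num) hM'
  set w := 1 / s + 1 / s^2 with hw
  set w' := 1 / s' + 1 / s'^2 with hw'
  have hww : w' ≤ w := by
    rw [hw, hw']
    gcongr
  -- kappa bound
  have hk : 1 / ((M:ℝ) * s) - 1 / (((M:ℝ)+1) * s') ≤ w / (M * (M+1)) := by
    have h1 : (M:ℝ) * (s' - s) ≤ 1 := by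
      have := mul_le_mul_of_nonneg_left hδ (show (0:ℝ) ≤ M by positivity)
      rwa [mul_one_div_cancel (by positivity)] at this
    have h2 : (M:ℝ) * (1/s - 1/s') ≤ 1 / s^2 := by
      have e : (M:ℝ) * (1/s - 1/s') = (M * (s' - s)) / (s * s') := by field_simp
      rw [e]
      apply div_le_div₀ (by norm_num) h1 (by positivity)
      nlinarith
    have e : 1 / ((M:ℝ) * s) - 1 / (((M:ℝ)+1) * s') = (1/s + M * (1/s - 1/s')) / (M * (M+1)) := by
      field_simp; ring
    rw [e, hw]
    gcongr
  have hk2 : th M / (((M:ℝ)+1) * s') ≥ th M / (M * s) - psiN M * w / (M * (M+1)) := by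
    have h1 := mul_le_mul_of_nonneg_left hk hth0
    have hw0 : 0 ≤ w / (M * (M+1)) := by positivity
    have h2 := mul_le_mul_of_nonneg_right hth hw0
    have e1 : th M * (1 / ((M:ℝ) * s) - 1 / (((M:ℝ)+1) * s')) = th M / (M * s) - th M / (((M:ℝ)+1) * s') := by
      ring
    have e2 : psiN M * (w / (M * (M+1))) = psiN M * w / (M * (M+1)) := by ring
    linarith
  have hh : w' * (s' - s) ≤ (Real.log s' - 1 / s') - (Real.log s - 1 / s) := by
    have h := Real.log_le_sub_one_of_pos (show 0 < s/s' by positivity)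
    rw [Real.log_div (by positivity) (by positivity)] at h
    have h2 : (s' - s) / s'^2 ≤ 1/s - 1/s' := by
      have e : 1/s - 1/s' = (s' - s) / (s * s') := by field_simp
      rw [e]
      apply div_le_div_of_nonneg_left (by linarith) (by positivity)
      nlinarith
    have e : w' * (s' - s) = (1 - s/s') + (s' - s) / s'^2 := by
      rw [hw']; field_simp
    linarith
  have hB3 : w * BB (M+1) = w * BB M + psiN M * w / (M * (M+1)) := by
    rw [hB]; ring
  have hfin : (w - w') * ((s' - s) - (s' - 1.2827 + 1/50000 - BB (M+1))) ≤ 0 := by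
    apply mul_nonpos_of_nonneg_of_nonpos (by linarith)
    linarith
  nlinarith

lemma VV_le (M : ℕ) (hM : 50000 ≤ M) : VV M ≤ VV 50000 := by
  induction M, hM using Nat.le_induction with
  | base => exact le_rfl
  | succ M hM ih => exact (VV_succ M hM).trans ih

lemma large (n : ℕ) (hn : n ≠ 0) (L : ℝ) (hnL : Real.log n ≤ L) (h1 : 50000 ≤ L)
    (hV : VV 50000 + 1 / (50000 * Real.log 50000) ≤ Real.log 1.842) :
    lsig n ≤ Real.log (1.842 * Real.log L) := by
  set M := ⌊L⌋₊ with hMd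
  have hM : 50000 ≤ M := Nat.le_floor (by exact_mod_cast h1)
  have hM' : (50000:ℝ) ≤ M := by exact_mod_cast hM
  have hML : (M:ℝ) ≤ L := Nat.floor_le (by linarith)
  have hLM : L < M + 1 := Nat.lt_floor_add_one L
  have hA := lemA' n M hn (by omega)
  have hVM := VV_le M hM
  have hB := BB_le M hM
  obtain ⟨V0, hV0⟩ : ∃ V0, V0 = VV 50000 := ⟨_, rfl⟩
  rw [← hV0] at hVM hV
  unfold VV at hVM
  have hs1 : Real.log 50000 ≤ Real.log M := Real.log_le_log (by norm_num) hM'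
  have hs5 : 0 < Real.log 50000 := Real.log_pos (by norm_num)
  have hsL : Real.log M ≤ Real.log L := Real.log_le_log (by linarith) hML
  set s := Real.log (M:ℝ) with hs
  have hs0 : 0 < s := by linarith
  have hM0 : 1 / (M:ℝ) ≤ 1 / 50000 := one_div_le_one_div_of_le (by norm_num) hM'
  have hw : 0 ≤ (1 / s + 1 / s^2) * (s - 1.2827 + 1 / 50000 - BB M) := by
    apply mul_nonneg (by positivity); linarith
  have h2 : (Real.log n - th M) / (M * s) ≤ 1 / s + 1 / (M * s) - th M / (M * s) := by
    have e : 1 / s + 1 / (M * s) - th M / (M * s) = (M + 1 - th M) / (M * s) := by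
      field_simp
    rw [e]
    gcongr
    linarith
  have h3 : 1 / (M * s) ≤ 1 / (50000 * Real.log 50000) := by
    gcongr
  have h4 : 0 < 1 / (M:ℝ) := by positivity
  rw [Real.log_mul (by norm_num) (by linarith)]
  have h5 : Real.log s ≤ Real.log (Real.log L) := Real.log_le_log hs0 hsL
  linarith

def W1 (p k : ℕ) : ℕ := Nat.sub (Nat.div 1000000000 (Nat.pow p (Nat.succ k))) 20001
/-- binary search for the largest `l` with `2 ^ l ≤ N` -/
def lgR (N d : ℕ) : ℕ → ℕ :=
  Nat.rec (fun l => l)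
    (fun d ih l => cond (Nat.ble (Nat.pow 2 (Nat.add l (Nat.pow 2 d))) N) (ih (Nat.add l (Nat.pow 2 d))) (ih l)) d

lemma lgR_le (N d l : ℕ) (h : 2 ^ l ≤ N) : 2 ^ lgR N d l ≤ N := by
  induction d generalizing l with
  | zero => exact h
  | succ d ih =>
    have e : lgR N (d+1) l = cond (Nat.ble (2 ^ (l + 2 ^ d)) N) (lgR N d (l + 2 ^ d)) (lgR N d l) := rfl
    rw [e]
    cases hb : Nat.ble (2 ^ (l + 2 ^ d)) N with
    | true => exact ih _ (Nat.ble_eq.mp hb)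
    | false => exact ih _ h

def lg (p : ℕ) : ℕ := lgR (Nat.pow p 256) 12 0

def WW (p : ℕ) : ℕ := Nat.mul (lg p) (sumR (W1 p) 4 0)

lemma W1_zero (p k : ℕ) (h : 50000 < p ^ (k+1)) : W1 p k = 0 := by
  have h1 : 1000000000 / p ^ (k+1) ≤ 1000000000 / 50000 := Nat.div_le_div_left h.le (by norm_num)
  show 1000000000 / p ^ (k+1) - 20001 = 0
  norm_num at h1
  omega

lemma W1_le (p k : ℕ) (hp : 1 ≤ p) (h : p ^ (k+1) ≤ 50000) :
    (W1 p k : ℝ) ≤ 1000000000 * (1 / ((p ^ (k+1) : ℕ) : ℝ) - 1 / (50000:ℕ)) := by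
  have hq : 0 < p ^ (k+1) := pow_pos hp _
  have hq' : (0:ℝ) < ((p ^ (k+1) : ℕ) : ℝ) := by exact_mod_cast hq
  have hle : ((p ^ (k+1) : ℕ) : ℝ) ≤ 50000 := by exact_mod_cast h
  have h0 : 1 / (50000:ℝ) ≤ 1 / ((p ^ (k+1) : ℕ) : ℝ) := one_div_le_one_div_of_le hq' hle
  have e : W1 p k = 1000000000 / p ^ (k+1) - 20001 := rfl
  have h1 : ((1000000000 / p ^ (k+1) : ℕ) : ℝ) ≤ ((1000000000:ℕ):ℝ) / ((p ^ (k+1) : ℕ) : ℝ) := Nat.cast_div_le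
  rw [div_eq_mul_one_div] at h1
  norm_num only at h1 ⊢
  rw [e]
  generalize 1000000000 / p ^ (k+1) = a at *
  rcases le_total a 20001 with ha | ha
  · rw [Nat.sub_eq_zero_of_le ha]
    push_cast at *
    norm_num at h0 ⊢
    linarith
  · rw [Nat.cast_sub ha]
    push_cast at *
    norm_num at h0 h1 ⊢
    linarith

lemma log_ge_log2 (p : ℕ) (hp : 1 ≤ p) : (lg p : ℝ) * Real.log 2 ≤ 256 * Real.log p := by
  have h1 : 2 ^ lg p ≤ p ^ 256 := lgR_le _ _ _ (Nat.one_le_pow _ _ hp)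
  have h2 : ((2:ℝ) ^ lg p) ≤ (p:ℝ) ^ 256 := by exact_mod_cast h1
  have h3 := Real.log_le_log (by positivity) h2
  rw [Real.log_pow, Real.log_pow] at h3
  exact_mod_cast h3

lemma BB_double (X : ℕ) : ∑ p ∈ primesTo X, ∑ k ∈ Finset.range 16,
    (if p ^ (k+1) ≤ X then Real.log p * (1 / ((p ^ (k+1) : ℕ) : ℝ) - 1 / (X:ℝ)) else 0) ≤ BB X := by
  rw [← Finset.sum_product', ← Finset.sum_filter]
  set F : ℕ → ℝ := fun n => ArithmeticFunction.vonMangoldt n * (1 / (n:ℝ) - 1 / (X:ℝ)) with hF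
  set S := (primesTo X ×ˢ Finset.range 16).filter (fun x => x.1 ^ (x.2+1) ≤ X) with hS
  have hmem : ∀ x ∈ S, x.1.Prime ∧ x.1 ^ (x.2+1) ≤ X := by
    intro x hx
    rw [hS, Finset.mem_filter, Finset.mem_product] at hx
    exact ⟨(mem_primesTo.mp hx.1.1).2, hx.2⟩
  have h1 : ∀ x ∈ S, Real.log x.1 * (1 / ((x.1 ^ (x.2+1) : ℕ) : ℝ) - 1 / (X:ℝ)) = F (x.1 ^ (x.2+1)) := by
    intro x hx
    simp only [hF]
    rw [ArithmeticFunction.vonMangoldt_apply_pow (by omega),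
      ArithmeticFunction.vonMangoldt_apply_prime (hmem x hx).1]
  have hinj : Set.InjOn (fun x : ℕ × ℕ => x.1 ^ (x.2+1)) (S : Set (ℕ × ℕ)) := by
    intro x hx y hy hxy
    have := (hmem x hx).1.pow_inj' (hmem y hy).1 (by omega) (by omega) hxy
    ext
    · exact this.1
    · have := this.2; omega
  rw [Finset.sum_congr rfl h1, ← Finset.sum_image (f := F) hinj]
  show _ ≤ ∑ n ∈ Finset.Ioc 0 X, F n
  apply Finset.sum_le_sum_of_subset_of_nonneg
  · intro n hn
    obtain ⟨x, hx, rfl⟩ := Finset.mem_image.mp hn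
    exact Finset.mem_Ioc.mpr ⟨pow_pos (hmem x hx).1.pos _, (hmem x hx).2⟩
  · intro n hn _
    obtain ⟨hn1, hn2⟩ := Finset.mem_Ioc.mp hn
    apply mul_nonneg ArithmeticFunction.vonMangoldt_nonneg
    have a1 : (0:ℝ) < n := by exact_mod_cast hn1
    have a2 : (n:ℝ) ≤ (X:ℝ) := by exact_mod_cast hn2
    have := one_div_le_one_div_of_le a1 a2
    linarith

lemma BB_lower (T : ℕ) (h : Nat.ble T (psum WW 50000 16) = true) :
    T * Real.log 2 ≤ 256000000000 * BB 50000 := by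
  rw [Nat.ble_eq, psum_eq _ _ _ (by norm_num) (by norm_num)] at h
  have h' : (T:ℝ) ≤ ∑ p ∈ primesTo 50000, (WW p : ℝ) := by exact_mod_cast h
  have hl2 : 0 < Real.log 2 := Real.log_pos (by norm_num)
  have hd := BB_double 50000
  have key : ∀ p ∈ primesTo 50000, (WW p : ℝ) * Real.log 2 ≤ 256000000000 * ∑ k ∈ Finset.range 16,
    (if p ^ (k+1) ≤ 50000 then Real.log p * (1 / ((p ^ (k+1) : ℕ) : ℝ) - 1 / (50000:ℕ)) else 0) := by
    intro p hp
    have hpp := (mem_primesTo.mp hp).2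
    have hlp : 0 ≤ Real.log p := Real.log_natCast_nonneg p
    have e : (WW p : ℝ) = (lg p : ℝ) * ∑ k ∈ Finset.range 16, (W1 p k : ℝ) := by
      have : WW p = lg p * ∑ k ∈ Finset.range 16, W1 p k := by
        simp only [WW, Nat.mul_eq, sumR_eq, zero_add]
        norm_num only
      rw [this]; push_cast; rfl
    rw [e]
    have h1 := log_ge_log2 p hpp.one_lt.le
    have h2 : 0 ≤ ∑ k ∈ Finset.range 16, (W1 p k : ℝ) := Finset.sum_nonneg fun k _ => Nat.cast_nonneg _
    have h3 := mul_le_mul_of_nonneg_right h1 h2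
    have h4 : Real.log p * ∑ k ∈ Finset.range 16, (W1 p k : ℝ) ≤ 1000000000 * ∑ k ∈ Finset.range 16,
      (if p ^ (k+1) ≤ 50000 then Real.log p * (1 / ((p ^ (k+1) : ℕ) : ℝ) - 1 / (50000:ℕ)) else 0) := by
      rw [Finset.mul_sum, Finset.mul_sum]
      refine Finset.sum_le_sum fun k _ => ?_
      split_ifs with hk
      · have := mul_le_mul_of_nonneg_left (W1_le p k hpp.one_lt.le hk) hlp
        linarith
      · rw [W1_zero p k (by omega)]; simp
    linarith
  have h5 := Finset.sum_le_sum key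
  rw [← Finset.sum_mul, ← Finset.mul_sum] at h5
  have h6 := mul_le_mul_of_nonneg_right h' hl2.le
  linarith

lemma BB_50000 : (3412270189865:ℕ) * Real.log 2 ≤ 256000000000 * BB 50000 :=
  BB_lower 3412270189865 (by decide +kernel)

lemma VV_50000 : VV 50000 + 1 / (50000 * Real.log 50000) ≤ Real.log 1.842 := by
  have hB := BB_50000
  have hB2 := BB_le 50000 le_rfl
  have hP := logP_50000
  have hT := th_50000
  have hlo := log50_lo
  have hhi := log50_hi
  have h2 := Real.log_two_gt_d9
  unfold VV
  have ec : ((50000:ℕ):ℝ) = 50000 := by norm_num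
  rw [ec] at hB2 ⊢
  generalize BB 50000 = b at *
  generalize th 50000 = t at *
  generalize logP 50000 = q at *
  generalize Real.log 50000 = s at *
  push_cast at *
  norm_num at h2
  have ht : 49731 ≤ t := by linarith
  have hb : 9.239 ≤ b := by norm_num; linarith
  have hs : 10.8196 ≤ s := by refine le_trans ?_ hlo; norm_num
  have hs0 : 0 < s := by linarith
  have a1 : 1 / s - t / (50000 * s) ≤ 0.0005 := by
    have e : 1 / s - t / (50000 * s) = (50000 - t) / (50000 * s) := by field_simp
    rw [e, div_le_iff₀ (by positivity)]
    norm_num at hs ⊢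
    linarith
  have a2 : 1 / (50000 * s) ≤ 0.00001 := by
    rw [div_le_iff₀ (by positivity)]
    norm_num at hs ⊢
    linarith
  have a3 : 1 / s ≤ 0.09243 := by
    rw [div_le_iff₀ (by positivity)]
    norm_num at hs ⊢
    linarith
  have a4 : 1 / s ^ 2 ≤ 0.00855 := by
    have e : 1 / s ^ 2 = (1 / s) * (1 / s) := by field_simp
    have : (1 / s) * (1 / s) ≤ 0.09243 * 0.09243 :=
      mul_le_mul a3 a3 (by positivity) (by norm_num)
    rw [e]
    norm_num at this ⊢
    linarith
  have a5 : (1 / s + 1 / s ^ 2) * (s - 1.2827 + 1 / 50000 - b) ≤ 0.10098 * 0.2984 := by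
    apply mul_le_mul
    · norm_num at a3 a4 ⊢; linarith
    · norm_num at hb hhi ⊢; linarith
    · norm_num at hB2 ⊢; linarith
    · norm_num
  have a6 : Real.log (192781 / 10000) - Real.log s - Real.log 1.842 ≤ -0.0326 := by
    have h := Real.log_le_sub_one_of_pos (show 0 < (192781 / 10000 : ℝ) / s / 1.842 by positivity)
    rw [Real.log_div (by positivity) (by norm_num), Real.log_div (by norm_num) (by positivity)] at h
    have h3 : (192781 / 10000 : ℝ) / s / 1.842 ≤ 0.9674 := by
      rw [div_le_iff₀ (by norm_num), div_le_iff₀ (by positivity)]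
      norm_num at hs ⊢
      linarith
    norm_num at h h3 ⊢
    linarith
  norm_num at a1 a2 a5 a6 hP ⊢
  linarith

lemma all_range (n : ℕ) (hn : n ≠ 0) (L : ℝ) (hnL : Real.log n ≤ L) (h1 : 16 ≤ L) :
    lsig n ≤ Real.log (1.842 * Real.log L) := by
  rcases le_total L 40 with h2 | h2
  · exact ca80 n hn L hnL h1 h2
  rcases le_total L 110 with h3 | h3
  · exact ca300 n hn L hnL h2 h3
  rcases le_total L 330 with h4 | h4
  · exact ca1000 n hn L hnL h3 h4
  rcases le_total L 700 with h5 | h5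
  · exact mid500 n hn L hnL h4 h5
  rcases le_total L 1570 with h6 | h6
  · exact mid1000 n hn L hnL h5 h6
  rcases le_total L 5000 with h7 | h7
  · exact mid3000 n hn L hnL h6 h7
  rcases le_total L 18000 with h8 | h8
  · exact mid10000 n hn L hnL h7 h8
  rcases le_total L 51000 with h9 | h9
  · exact mid40000 n hn L hnL h8 h9
  · exact large n hn L hnL (by linarith) VV_50000

lemma final_bound (n : ℕ) (hn : n ≠ 0) (A : ℝ) (hA : (10:ℝ) ^ 14 ≤ A) (hnA : (n:ℝ) ^ 2 ≤ A) :
    ((ArithmeticFunction.sigma 1) n : ℝ) / (n : ℝ) ≤ 1.842 * Real.log (Real.log (Real.sqrt A)) := by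
  have hA0 : 0 < A := lt_of_lt_of_le (by positivity) hA
  have hn0 : (0:ℝ) < n := by exact_mod_cast Nat.pos_of_ne_zero hn
  have hS : (n:ℝ) ≤ Real.sqrt A := Real.le_sqrt_of_sq_le hnA
  have hS7 : (10:ℝ) ^ 7 ≤ Real.sqrt A := Real.le_sqrt_of_sq_le (by rw [← pow_mul]; exact hA)
  have hlog : (16:ℝ) ≤ Real.log (Real.sqrt A) := by
    have h := log_ge_of ((10:ℝ)^7) 16 1 (by norm_num) (by positivity) (by norm_num)
    have h2 := Real.log_le_log (by positivity) hS7
    norm_num at h h2 ⊢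
    linarith
  have h := all_range n hn (Real.log (Real.sqrt A)) (Real.log_le_log hn0 hS) hlog
  unfold lsig at h
  have hll : 0 < Real.log (Real.log (Real.sqrt A)) := Real.log_pos (by linarith)
  have hsig : 0 < ArithmeticFunction.sigma 1 n := by
    rw [ArithmeticFunction.sigma_pos_iff]; exact Nat.pos_of_ne_zero hn
  have hsig' : (0:ℝ) < (ArithmeticFunction.sigma 1 n : ℝ) := by exact_mod_cast hsig
  exact (Real.log_le_log_iff (by positivity) (by positivity)).mp h

end Helpers

/-- For `|Δ| ≥ 10^14`, `σ₁(f̃)/f̃ ≤ 1.842 log log |Δ|^{1/2}`. -/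
theorem stmt4 (Δ D : ℤ) (f : ℕ) (hf : 0 < f) (hΔneg : Δ < 0)
    (hfact : Δ = (f : ℤ) ^ 2 * D) (hD : IsFundDisc D)
    (ftilde : ℕ) (hft1 : D % 4 = 1 → ftilde = f) (hft0 : D % 4 = 0 → ftilde = 2 * f)
    (hbig : (10 : ℝ) ^ 14 ≤ |(Δ : ℝ)|) :
    ((ArithmeticFunction.sigma 1) ftilde : ℝ) / (ftilde : ℝ) ≤
      1.842 * Real.log (Real.log (Real.sqrt |(Δ : ℝ)|)) := by
  have hf2 : (0:ℤ) < (f:ℤ) ^ 2 := by positivity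
  have hDneg : D < 0 := by
    by_contra hc
    have : 0 ≤ (f:ℤ) ^ 2 * D := mul_nonneg hf2.le (by omega)
    omega
  have key : ftilde ≠ 0 ∧ (ftilde : ℤ) ^ 2 ≤ -Δ := by
    rcases hD with ⟨h, _⟩ | ⟨m, hm, _⟩
    · rw [hft1 h]
      refine ⟨by omega, ?_⟩
      nlinarith
    · rw [hft0 (by omega)]
      refine ⟨by omega, ?_⟩
      push_cast
      have : m ≤ -1 := by omega
      subst hm
      nlinarith
  apply final_bound ftilde key.1 _ hbig
  have h2 : ((ftilde : ℤ) : ℝ) ^ 2 ≤ ((-Δ : ℤ) : ℝ) := by exact_mod_cast key.2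
  have h3 : |(Δ:ℝ)| = -(Δ:ℝ) := abs_of_neg (by exact_mod_cast hΔneg)
  rw [h3]
  push_cast at h2
  exact h2
end

section
/- For a discriminant Δ ≠ −3, −4 (i.e. Δ < 0, Δ ≡ 0,1 mod 4, Δ ∉ {−3,−4}), the class number of the order of discriminant Δ satisfies C(Δ) ≤ π^{-1}·|Δ|^{1/2}·(2 + log|Δ|). -/
/-- The class number of the imaginary quadratic order of discriminant `Δ`, counted as the
number of reduced primitive positive definite binary quadratic forms of discriminant `Δ`. -/
noncomputable def classNumber (Δ : ℤ) : ℕ :=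
  Nat.card {f : ℤ × ℤ × ℤ // 0 < f.1 ∧ Int.gcd (Int.gcd f.1 f.2.1) f.2.2 = 1 ∧
    f.2.1 ^ 2 - 4 * f.1 * f.2.2 = Δ ∧ |f.2.1| ≤ f.1 ∧ f.1 ≤ f.2.2 ∧
    ((|f.2.1| = f.1 ∨ f.1 = f.2.2) → 0 ≤ f.2.1)}

/-- Evaluation of a binary quadratic form. -/
def evF (f : ℤ × ℤ × ℤ) (x y : ℤ) : ℤ := f.1 * x ^ 2 + f.2.1 * x * y + f.2.2 * y ^ 2

/-- Reduced primitive positive forms of discriminant `-D`. -/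
def RedF (D : ℕ) (f : ℤ × ℤ × ℤ) : Prop :=
  0 < f.1 ∧ Int.gcd (Int.gcd f.1 f.2.1) f.2.2 = 1 ∧
    f.2.1 ^ 2 - 4 * f.1 * f.2.2 = -(D : ℤ) ∧ |f.2.1| ≤ f.1 ∧ f.1 ≤ f.2.2 ∧
    ((|f.2.1| = f.1 ∨ f.1 = f.2.2) → 0 ≤ f.2.1)

lemma ev_lower (a b c p r : ℤ) (hab : |b| ≤ a) (hac : a ≤ c) (hp : p ≠ 0) (hr : r ≠ 0) :
    a - |b| + c ≤ a * p ^ 2 + b * p * r + c * r ^ 2 := by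
  have hP : 1 ≤ |p| := Int.one_le_abs hp
  have hR : 1 ≤ |r| := Int.one_le_abs hr
  have h1 : -(|b| * |p| * |r|) ≤ b * p * r := by
    rw [← abs_mul, ← abs_mul]; exact neg_abs_le _
  have hb := abs_nonneg b
  rw [← sq_abs p, ← sq_abs r]
  generalize |p| = P at *
  generalize |r| = R at *
  generalize |b| = B at *
  generalize b * p * r = t at *
  rcases le_total R P with h | h
  · have h2 : B * P * R ≤ B * P * P := by gcongr
    have h3 : (a - B) * 1 ≤ (a - B) * P ^ 2 :=
      mul_le_mul_of_nonneg_left (by nlinarith) (by linarith)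
    have h4 : c * 1 ≤ c * R ^ 2 := mul_le_mul_of_nonneg_left (by nlinarith) (by linarith)
    nlinarith
  · have h2 : B * P * R ≤ B * R * R := by gcongr
    have h3 : (c - B) * 1 ≤ (c - B) * R ^ 2 :=
      mul_le_mul_of_nonneg_left (by nlinarith) (by linarith)
    have h4 : a * 1 ≤ a * P ^ 2 := mul_le_mul_of_nonneg_left (by nlinarith) (by linarith)
    nlinarith

lemma red_aux (D : ℕ) (h3 : D ≠ 3) (h4 : D ≠ 4) (a b c a' b' c' p q r s : ℤ)
    (hf : RedF D (a, b, c)) (hf' : RedF D (a', b', c'))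
    (ha : a' = a * p ^ 2 + b * p * r + c * r ^ 2)
    (hb : b' = 2 * a * p * q + b * (p * s + q * r) + 2 * c * r * s)
    (hdet : p * s - q * r = 1) (hle : a' ≤ a) :
    a' = a ∧ b' = b ∧ c' = c ∧ q = 0 ∧ r = 0 ∧ ((p = 1 ∧ s = 1) ∨ (p = -1 ∧ s = -1)) := by
  obtain ⟨h0, hg, hd, hba, hac, hs⟩ := hf
  obtain ⟨h0', hg', hd', hba', hac', hs'⟩ := hf'
  simp only at *
  -- no form a(1,1,1)
  have no3 : ¬ (a = c ∧ b = a) := by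
    rintro ⟨rfl, rfl⟩
    have : b = 1 := Int.eq_one_of_dvd_one h0.le (by
      have h := Int.dvd_coe_gcd (Int.dvd_coe_gcd (dvd_refl b) (dvd_refl b)) (dvd_refl b)
      rwa [hg] at h)
    subst this
    omega
  have no4 : ¬ (a = c ∧ b = 0) := by
    rintro ⟨rfl, rfl⟩
    have : a = 1 := Int.eq_one_of_dvd_one h0.le (by
      have h := Int.dvd_coe_gcd (Int.dvd_coe_gcd (dvd_refl a) (dvd_zero a)) (dvd_refl a)
      rwa [hg] at h)
    subst this
    omega
  have hba2 := abs_le.1 hba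
  have hba2' := abs_le.1 hba'
  by_cases hr : r = 0
  · subst hr
    have hps : p * s = 1 := by linarith
    have hps' := Int.eq_one_or_neg_one_of_mul_eq_one' hps
    have haa : a' = a := by
      rcases hps' with ⟨rfl, rfl⟩ | ⟨rfl, rfl⟩ <;> linarith
    subst haa
    have hbb : ∃ t, b' = b + 2 * a' * t ∧ (t = q ∨ t = -q) := by
      rcases hps' with ⟨rfl, rfl⟩ | ⟨rfl, rfl⟩
      · exact ⟨q, by rw [hb]; ring, Or.inl rfl⟩
      · exact ⟨-q, by rw [hb]; ring, Or.inr rfl⟩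
    obtain ⟨t, ht, htq⟩ := hbb
    have ht0 : t = 0 := by
      by_contra hne
      rcases lt_or_gt_of_ne hne with h | h
      · have : a' * t ≤ a' * (-1) := mul_le_mul_of_nonneg_left (by omega) h0.le
        have e1 : b' = -a' := by nlinarith
        have : 0 ≤ b' := hs' (Or.inl (by rw [e1, abs_neg, abs_of_pos h0]))
        omega
      · have : a' * 1 ≤ a' * t := mul_le_mul_of_nonneg_left (by omega) h0.le
        have e1 : b = -a' := by nlinarith
        have : 0 ≤ b := hs (Or.inl (by rw [e1, abs_neg, abs_of_pos h0]))
        omega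
    subst ht0
    have hbb : b' = b := by rw [ht]; ring
    subst hbb
    refine ⟨rfl, rfl, ?_, by omega, rfl, hps'⟩
    have : a' * (c' - c) = 0 := by linarith
    rcases mul_eq_zero.1 this with h | h <;> omega
  · exfalso
    by_cases hp : p = 0
    · subst hp
      have hqr : (-q) * r = 1 := by linarith
      have hqr' := Int.eq_one_or_neg_one_of_mul_eq_one' hqr
      have hr2 : r ^ 2 = 1 := by rcases hqr' with ⟨_, rfl⟩ | ⟨_, rfl⟩ <;> norm_num
      have hac2 : a' = c := by rw [ha, hr2]; ring
      have hc : c = a := by omega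
      subst hc
      subst hac2
      have hb0 : 0 ≤ b := hs (Or.inr rfl)
      obtain ⟨t, ht⟩ : ∃ t, b' = -b + 2 * (a' * t) := ⟨r * s, by
        rw [hb]
        have : q * r = -1 := by linarith
        rw [this]; ring⟩
      have : t ≤ 1 := by
        by_contra hh
        have : a' * 2 ≤ a' * t := mul_le_mul_of_nonneg_left (by omega) h0.le
        omega
      have : 0 ≤ t := by
        by_contra hh
        have h5 : a' * t ≤ a' * (-1) := mul_le_mul_of_nonneg_left (by omega) h0.le
        apply no4; constructor <;> first | rfl | skip
        by_contra h6
        omega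
      interval_cases t
      · have e : b' = -b := by linarith
        subst e
        have : a' * (c' - a') = 0 := by nlinarith
        rcases mul_eq_zero.1 this with h | h
        · omega
        · have := hs' (Or.inr (by omega))
          exact no4 ⟨rfl, by omega⟩
      · exact no3 ⟨rfl, by omega⟩
    · have := ev_lower a b c p r hba hac hp hr
      have e1 : a = c := by omega
      have e2 : |b| = a := by omega
      have := hs (Or.inl e2)
      rw [abs_of_nonneg this] at e2
      exact no3 ⟨e1, e2⟩

lemma red_unique (D : ℕ) (h3 : D ≠ 3) (h4 : D ≠ 4) (a b c a' b' c' p q r s : ℤ)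
    (hf : RedF D (a, b, c)) (hf' : RedF D (a', b', c'))
    (ha : a' = a * p ^ 2 + b * p * r + c * r ^ 2)
    (hb : b' = 2 * a * p * q + b * (p * s + q * r) + 2 * c * r * s)
    (hc : c' = a * q ^ 2 + b * q * s + c * s ^ 2)
    (hdet : p * s - q * r = 1) :
    a' = a ∧ b' = b ∧ c' = c ∧ q = 0 ∧ r = 0 ∧ ((p = 1 ∧ s = 1) ∨ (p = -1 ∧ s = -1)) := by
  rcases le_total a' a with h | h
  · exact red_aux D h3 h4 a b c a' b' c' p q r s hf hf' ha hb hdet h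
  · have := red_aux D h3 h4 a' b' c' a b c s (-q) (-r) p hf' hf
      (by rw [ha, hb, hc]; linear_combination (-a * (p * s - q * r + 1)) * hdet)
      (by rw [ha, hb, hc]; linear_combination (-b * (p * s - q * r + 1)) * hdet)
      (by linarith) h
    omega

/-- a primitive representation gives a residue -/
lemma exists_res (D : ℕ) (n : ℕ) (hn : 0 < n) (a b c x y : ℤ)
    (hd : b ^ 2 - 4 * a * c = -(D : ℤ)) (hxy : IsCoprime x y)
    (he : a * x ^ 2 + b * x * y + c * y ^ 2 = n) :
    ∃ z w C : ℤ, ∃ B : ℕ, x * w - z * y = 1 ∧ B < 2 * n ∧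
      (B : ℤ) = 2 * a * x * z + b * (x * w + z * y) + 2 * c * y * w ∧
      C = a * z ^ 2 + b * z * w + c * w ^ 2 ∧ (B : ℤ) ^ 2 + D = 4 * n * C := by
  obtain ⟨u, v, huv⟩ := hxy
  have hn' : (0 : ℤ) < 2 * n := by exact_mod_cast (by omega)
  set B0 := 2 * a * x * (-v) + b * (x * u + (-v) * y) + 2 * c * y * u with hB0
  set t := -(B0 / (2 * n)) with ht
  have hmod : B0 + 2 * n * t = B0 % (2 * n) := by
    rw [ht, Int.emod_def]; ring
  have hnn := Int.emod_nonneg B0 hn'.ne'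
  have hlt := Int.emod_lt_of_pos B0 hn'
  obtain ⟨B, hB⟩ := Int.eq_ofNat_of_zero_le hnn
  have hBB : (B : ℤ) = 2 * a * x * (-v + t * x) + b * (x * (u + t * y) + (-v + t * x) * y)
      + 2 * c * y * (u + t * y) := by
    rw [← hB, ← hmod, hB0, ← he]; ring
  have hdet : x * (u + t * y) - (-v + t * x) * y = 1 := by linear_combination huv
  refine ⟨-v + t * x, u + t * y, _, B, hdet, ?_, hBB, rfl, ?_⟩
  · rw [hB] at hlt; exact_mod_cast hlt
  · have hD : (D : ℤ) = -(b ^ 2 - 4 * a * c) := by linarith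
    generalize -v + t * x = z at *
    generalize u + t * y = w at *
    rw [hBB, ← he, hD]
    linear_combination (-(b^2 - 4*a*c) * (-(x * w - z * y) - 1)) * hdet

/-- number of square roots -/
def rhoF (D n : ℕ) : ℕ := ((Finset.range (2 * n)).filter (fun b => 4 * n ∣ b ^ 2 + D)).card

lemma prim_card (D : ℕ) (h3 : D ≠ 3) (h4 : D ≠ 4) (n : ℕ) (hn : 0 < n)
    (U : Finset ((ℤ × ℤ × ℤ) × ℤ × ℤ))
    (hU : ∀ u ∈ U, RedF D u.1 ∧ IsCoprime u.2.1 u.2.2 ∧ evF u.1 u.2.1 u.2.2 = n) :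
    U.card ≤ 2 * rhoF D n := by
  classical
  have key : ∀ u : (ℤ × ℤ × ℤ) × ℤ × ℤ, ∃ B : ℕ, u ∈ U → B < 2 * n ∧ ∃ z w C : ℤ,
      u.2.1 * w - z * u.2.2 = 1 ∧
      (B : ℤ) = 2 * u.1.1 * u.2.1 * z + u.1.2.1 * (u.2.1 * w + z * u.2.2)
        + 2 * u.1.2.2 * u.2.2 * w ∧
      C = u.1.1 * z ^ 2 + u.1.2.1 * z * w + u.1.2.2 * w ^ 2 ∧ (B : ℤ) ^ 2 + D = 4 * n * C := by
    intro u
    by_cases hu : u ∈ U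
    · obtain ⟨h1, h2, h5⟩ := hU u hu
      obtain ⟨z, w, C, B, q1, q2, q3, q4, q5⟩ :=
        exists_res D n hn u.1.1 u.1.2.1 u.1.2.2 u.2.1 u.2.2 h1.2.2.1 h2 h5
      exact ⟨B, fun _ => ⟨q2, z, w, C, q1, q3, q4, q5⟩⟩
    · exact ⟨0, fun h => absurd h hu⟩
  choose φ hφ using key
  rw [rhoF]
  refine Finset.card_le_mul_card_image_of_maps_to (f := φ) ?_ 2 ?_
  · intro u hu
    obtain ⟨h1, z, w, C, -, -, -, h2⟩ := hφ u hu
    refine Finset.mem_filter.2 ⟨Finset.mem_range.2 h1, ?_⟩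
    exact Int.natCast_dvd_natCast.1 ⟨C, by push_cast; linarith⟩
  · intro B _
    rcases (U.filter (fun u => φ u = B)).eq_empty_or_nonempty with h | ⟨u0, hu0⟩
    · rw [h]; simp
    · refine (Finset.card_le_card (t := {u0, (u0.1, -u0.2.1, -u0.2.2)}) ?_).trans
        Finset.card_le_two
      intro u hu
      rw [Finset.mem_filter] at hu hu0
      obtain ⟨_, z, w, C, d1, e1, f1, g1⟩ := hφ u hu.1
      obtain ⟨_, z0, w0, C0, d0, e0, f0, g0⟩ := hφ u0 hu0.1
      obtain ⟨r1, -, v1⟩ := hU u hu.1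
      obtain ⟨r0, -, v0⟩ := hU u0 hu0.1
      rw [hu.2] at e1 g1
      rw [hu0.2] at e0 g0
      have hCC : C = C0 := by
        have h4n : (4 * n : ℤ) ≠ 0 := by exact_mod_cast (by omega)
        exact mul_left_cancel₀ h4n (by rw [← g1, ← g0])
      obtain ⟨⟨a, b, c⟩, x, y⟩ := u
      obtain ⟨⟨a0, b0, c0⟩, x0, y0⟩ := u0
      simp only [evF] at *
      -- F0 = F ∘ (M * M0⁻¹)
      have E1 : a0 = n * w0 ^ 2 - B * w0 * y0 + C * y0 ^ 2 := by
        rw [hCC, f0, e0, ← v0]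
        linear_combination (-a0 * (x0 * w0 - z0 * y0 + 1)) * d0
      have E2 : b0 = -2 * n * z0 * w0 + B * (x0 * w0 + z0 * y0) - 2 * C * x0 * y0 := by
        rw [hCC, f0, e0, ← v0]
        linear_combination (-b0 * (x0 * w0 - z0 * y0 + 1)) * d0
      have E3 : c0 = n * z0 ^ 2 - B * x0 * z0 + C * x0 ^ 2 := by
        rw [hCC, f0, e0, ← v0]
        linear_combination (-c0 * (x0 * w0 - z0 * y0 + 1)) * d0
      rw [f1, e1, ← v1] at E1 E2 E3
      have := red_unique D h3 h4 a b c a0 b0 c0 (x * w0 - z * y0) (-x * z0 + z * x0)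
        (y * w0 - w * y0) (-y * z0 + w * x0) r1 r0
        (by rw [E1]; ring) (by rw [E2]; ring) (by rw [E3]; ring)
        (by linear_combination d1 + (x * w - z * y) * d0)
      obtain ⟨k1, k2, k3, k4, k5, k6⟩ := this
      simp only [Finset.mem_insert, Finset.mem_singleton, Prod.mk.injEq]
      rcases k6 with ⟨k6, k7⟩ | ⟨k6, k7⟩
      · left
        refine ⟨⟨k1.symm, k2.symm, k3.symm⟩, ?_, ?_⟩
        · linear_combination x0 * k6 + y0 * k4 - x * d0
        · linear_combination x0 * k5 + y0 * k7 - y * d0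
      · right
        refine ⟨⟨k1.symm, k2.symm, k3.symm⟩, ?_, ?_⟩
        · linear_combination x0 * k6 + y0 * k4 - x * d0
        · linear_combination x0 * k5 + y0 * k7 - y * d0

/-- The properties of the Kronecker symbol `(-D / ·)` that are needed. -/
structure IsChi (D : ℕ) (χ : ℕ → ℤ) : Prop where
  one : χ 1 = 1
  mul : ∀ m n, χ (m * n) = χ m * χ n
  per : ∀ n, χ (n + D) = χ n
  neg : χ (D - 1) = -1
  zero : ∀ n, ¬ Nat.Coprime n D → χ n = 0
  tri : ∀ n, Nat.Coprime n D → χ n = 1 ∨ χ n = -1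
  sol : ∀ p b : ℕ, p.Prime → Nat.Coprime p D → 4 * p ∣ b ^ 2 + D → χ p = 1

open NumberTheorySymbols in
lemma jac_sol (D p b : ℕ) (hp : p.Prime) (hc : Nat.Coprime p D)
    (h : 4 * p ∣ b ^ 2 + D) : J(-(D : ℤ) | p) = 1 := by
  have h1 : J(-(D : ℤ) | p) = J((b : ℤ) ^ 2 | p) := by
    apply jacobiSym.mod_left'
    have : (p : ℤ) ∣ (b : ℤ) ^ 2 - (-(D : ℤ)) := by
      have := (Dvd.intro_left 4 rfl).trans h
      rw [sub_neg_eq_add]; exact_mod_cast this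
    exact Int.modEq_iff_dvd.2 this
  rw [h1]
  apply jacobiSym.sq_one'
  rw [Int.gcd_natCast_natCast]
  rw [Nat.gcd_comm]
  rw [← Nat.coprime_iff_gcd_eq_one, Nat.Prime.coprime_iff_not_dvd hp]
  intro hb
  have h3 := (Dvd.intro_left 4 rfl).trans h
  have h4 : p ∣ D := (Nat.dvd_add_right (dvd_pow hb two_ne_zero)).1 h3
  exact (Nat.Prime.coprime_iff_not_dvd hp).1 hc h4

open NumberTheorySymbols ZMod in
lemma isChi_odd (D : ℕ) (hD : D % 4 = 3) : IsChi D (fun n => J((n : ℤ) | D)) where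
  one := by simp
  mul m n := by push_cast; exact jacobiSym.mul_left _ _ _
  per n := by
    apply jacobiSym.mod_left'
    push_cast; simp
  neg := by
    have h1 : J(((D - 1 : ℕ) : ℤ) | D) = J(-1 | D) := by
      apply jacobiSym.mod_left'
      rw [Nat.cast_sub (by omega)]
      rw [show ((D : ℤ) - (1 : ℕ)) = -1 + D by push_cast; ring]
      simp
    rw [h1, jacobiSym.at_neg_one (by rw [Nat.odd_iff]; omega), χ₄_nat_three_mod_four hD]
  zero n h := by
    rw [jacobiSym.eq_zero_iff]
    exact ⟨by omega, by rw [Int.gcd_natCast_natCast]; exact h⟩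
  tri n h := jacobiSym.eq_one_or_neg_one (by rw [Int.gcd_natCast_natCast]; exact h)
  sol p b hp hc h := by
    have hDo : Odd D := by rw [Nat.odd_iff]; omega
    by_cases h2 : p = 2
    · subst h2
      simp only [Nat.cast_ofNat]
      rw [jacobiSym.at_two hDo, χ₈_nat_mod_eight]
      have : D % 8 = 7 := by
        have h5 : (b ^ 2 + D) % 8 = 0 := Nat.mod_eq_zero_of_dvd h
        rw [Nat.add_mod, Nat.pow_mod] at h5
        have h6 : b % 8 < 8 := Nat.mod_lt _ (by norm_num)
        have h7 : D % 8 = 3 ∨ D % 8 = 7 := by omega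
        generalize b % 8 = t at *
        rcases h7 with h7 | h7
        · rw [h7] at h5; interval_cases t <;> simp at h5
        · exact h7
      rw [this]; rfl
    · have hj := jac_sol D p b hp hc h
      have hpo : Odd p := hp.odd_of_ne_two h2
      rw [jacobiSym.neg _ hpo] at hj
      rcases Nat.odd_mod_four_iff.1 (Nat.odd_iff.1 hpo) with h4 | h4
      · rw [χ₄_nat_one_mod_four h4, one_mul] at hj
        rw [jacobiSym.quadratic_reciprocity_one_mod_four h4 hDo, hj]
      · rw [χ₄_nat_three_mod_four h4] at hj
        rw [jacobiSym.quadratic_reciprocity_three_mod_four h4 hD]; linarith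

open NumberTheorySymbols ZMod in
lemma isChi_even (k : ℕ) (hk : 0 < k) :
    IsChi (4 * k) (fun n => if Odd n then J(-(k : ℤ) | n) else 0) where
  one := by simp
  mul m n := by
    by_cases hm : Odd m <;> by_cases hn : Odd n <;> simp only [Nat.odd_mul, hm, hn] <;> simp
    exact jacobiSym.mul_right' _ hm.pos.ne' hn.pos.ne'
  per n := by
    have : Odd (n + 4 * k) ↔ Odd n := by
      simp only [Nat.odd_iff]; omega
    simp only [this]
    split_ifs with h
    · rw [jacobiSym.mod_right _ (this.2 h), jacobiSym.mod_right _ h]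
      simp
    · rfl
  neg := by
    have ho : Odd (4 * k - 1) := by rw [Nat.odd_iff]; omega
    simp only [ho, if_true]
    have h1 : J(-(k : ℤ) | 4 * k - 1) = J(4 * -(k : ℤ) | 4 * k - 1) := by
      rw [jacobiSym.mul_left, jacobiSym.at_four ho, one_mul]
    have h2 : J(4 * -(k : ℤ) | 4 * k - 1) = J(-1 | 4 * k - 1) := by
      apply jacobiSym.mod_left'
      rw [Nat.cast_sub (by omega)]
      rw [show (4 * -(k : ℤ)) = -1 + ((4 * k : ℕ) - (1 : ℕ) : ℤ) * (-1) by push_cast; ring]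
      rw [Int.add_mul_emod_self_left]
    rw [h1, h2, jacobiSym.at_neg_one ho, χ₄_nat_three_mod_four (by omega)]
  zero n h := by
    split_ifs with ho
    · rw [jacobiSym.eq_zero_iff]
      refine ⟨ho.pos.ne', ?_⟩
      intro h1
      apply h
      rw [Int.gcd_comm, Int.gcd_neg, Int.gcd_natCast_natCast] at h1
      have : Nat.Coprime n 4 := by
        have := (Nat.coprime_two_right.2 ho).pow_right 2
        simpa using this
      exact this.mul_right h1
    · rfl
  tri n h := by
    have ho : Odd n := by
      have := Nat.Coprime.coprime_mul_right_right h
      exact Nat.coprime_two_right.1 (Nat.Coprime.coprime_dvd_right (by norm_num) this)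
    simp only [ho, if_true]
    apply jacobiSym.eq_one_or_neg_one
    rw [Int.gcd_comm, Int.gcd_neg, Int.gcd_natCast_natCast]
    exact Nat.Coprime.coprime_mul_left_right h
  sol p b hp hc h := by
    have ho : Odd p := by
      have := Nat.Coprime.coprime_mul_right_right hc
      exact Nat.coprime_two_right.1 (Nat.Coprime.coprime_dvd_right (by norm_num) this)
    have hj := jac_sol (4 * k) p b hp hc h
    simp only [ho, if_true]
    rw [show (-((4 * k : ℕ) : ℤ)) = 4 * -(k : ℤ) by push_cast; ring, jacobiSym.mul_left,
      jacobiSym.at_four ho, one_mul] at hj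
    exact hj

lemma exists_chi (D : ℕ) (h0 : 0 < D) (hD : D % 4 = 0 ∨ D % 4 = 3) : ∃ χ, IsChi D χ := by
  rcases hD with h | h
  · obtain ⟨k, rfl⟩ := Nat.dvd_of_mod_eq_zero h
    exact ⟨_, isChi_even k (by omega)⟩
  · exact ⟨_, isChi_odd D h⟩

lemma rho_mul (D m n : ℕ) (hmn : Nat.Coprime m n) (hm : 0 < m) (hn : 0 < n) :
    rhoF D (m * n) ≤ rhoF D m * rhoF D n := by
  unfold rhoF
  rw [← Finset.card_product]
  apply Finset.card_le_card_of_injOn (fun b => (b % (2 * m), b % (2 * n)))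
  · intro b hb
    simp only [Finset.coe_filter, Finset.mem_range, Set.mem_ofPred_eq] at hb
    simp only [Finset.coe_product, Finset.coe_filter, Finset.mem_range, Set.mem_prod,
      Set.mem_ofPred_eq]
    have aux : ∀ k, 4 * k ∣ b ^ 2 + D → 4 * k ∣ (b % (2 * k)) ^ 2 + D := by
      intro k hk
      have e := Nat.mod_add_div b (2 * k)
      generalize b % (2 * k) = r at *
      generalize b / (2 * k) = q at *
      rw [← e] at hk
      have : (r + 2 * k * q) ^ 2 + D = 4 * k * (r * q + k * q ^ 2) + (r ^ 2 + D) := by ring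
      rw [this] at hk
      exact (Nat.dvd_add_right (Dvd.intro _ rfl)).1 hk
    refine ⟨⟨Nat.mod_lt _ (by omega), aux m ?_⟩, ⟨Nat.mod_lt _ (by omega), aux n ?_⟩⟩
    · exact (Dvd.intro n (by ring)).trans hb.2
    · exact (Dvd.intro m (by ring)).trans hb.2
  · intro b hb b' hb' h
    simp only [Finset.coe_filter, Finset.mem_range, Set.mem_ofPred_eq] at hb hb'
    simp only [Prod.mk.injEq] at h
    have h1 : b ≡ b' [MOD 2 * m] := h.1
    have h2 : b ≡ b' [MOD 2 * n] := h.2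
    have h3 : b ≡ b' [MOD 2 * (m * n)] := by
      rw [Nat.modEq_iff_dvd] at *
      push_cast at *
      obtain ⟨u, hu⟩ := h1
      obtain ⟨v, hv⟩ := h2
      have h5 : (m : ℤ) * u = n * v := by linarith
      have h6 : (n : ℤ) ∣ u :=
        IsCoprime.dvd_of_dvd_mul_left (Nat.isCoprime_iff_coprime.2 hmn.symm) ⟨v, h5⟩
      obtain ⟨w, rfl⟩ := h6
      exact ⟨w, by rw [hu]; ring⟩
    exact Nat.ModEq.eq_of_lt_of_lt h3 hb.1 hb'.1

lemma rho_one (D : ℕ) : rhoF D 1 ≤ 1 := by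
  unfold rhoF
  rw [Finset.card_le_one]
  intro a ha b hb
  simp only [mul_one, Finset.mem_filter, Finset.mem_range] at ha hb
  obtain ⟨a1, a2⟩ := ha
  obtain ⟨b1, b2⟩ := hb
  interval_cases a <;> interval_cases b <;> omega

lemma rho_prime_pow (D : ℕ) (χ : ℕ → ℤ) (h : IsChi D χ) (p k : ℕ) (hp : p.Prime)
    (hc : Nat.Coprime p D) (hk : 0 < k) : (rhoF D (p ^ k) : ℤ) ≤ 1 + χ p := by
  have hpk : p ∣ p ^ k := dvd_pow_self p hk.ne'
  have hpos : 0 < p ^ k := pow_pos hp.pos k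
  rcases (Finset.filter (fun b => 4 * p ^ k ∣ b ^ 2 + D)
    (Finset.range (2 * p ^ k))).eq_empty_or_nonempty with h0 | ⟨b, hb⟩
  · rw [rhoF, h0]
    rcases h.tri p hc with h1 | h1 <;> rw [h1] <;> simp
  · have hb2 := (Finset.mem_filter.1 hb).2
    rw [h.sol p b hp hc ((mul_dvd_mul_left 4 hpk).trans hb2)]
    have hpb : ¬ (p : ℤ) ∣ b := by
      intro hh
      have hh : p ∣ b := by exact_mod_cast hh
      have h3 : p ∣ b ^ 2 + D := ((hpk.trans (Dvd.intro_left 4 rfl))).trans hb2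
      exact (Nat.Prime.coprime_iff_not_dvd hp).1 hc
        ((Nat.dvd_add_right (dvd_pow hh two_ne_zero)).1 h3)
    have : rhoF D (p ^ k) ≤ 2 := by
      unfold rhoF
      refine (Finset.card_le_card (t := {b, (2 * p ^ k - b)}) ?_).trans Finset.card_le_two
      intro b' hb'
      simp only [Finset.mem_insert, Finset.mem_singleton]
      simp only [Finset.mem_filter, Finset.mem_range] at hb hb'
      have hsub : (4 * p ^ k : ℤ) ∣ (b : ℤ) ^ 2 - (b' : ℤ) ^ 2 := by
        have e1 : (4 * p ^ k : ℤ) ∣ (b : ℤ) ^ 2 + D := by exact_mod_cast hb.2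
        have e2 : (4 * p ^ k : ℤ) ∣ (b' : ℤ) ^ 2 + D := by exact_mod_cast hb'.2
        have := dvd_sub e1 e2
        rwa [add_sub_add_right_eq_sub] at this
      have hpar : ∃ u : ℤ, (b : ℤ) = b' + 2 * u := by
        have h5 : (2 : ℤ) ∣ (b : ℤ) ^ 2 - (b' : ℤ) ^ 2 :=
          (Dvd.intro (2 * p ^ k : ℤ) (by ring)).trans hsub
        have h6 : Even ((b : ℤ) ^ 2 - (b' : ℤ) ^ 2) := even_iff_two_dvd.2 h5
        have h7 : Even ((b : ℤ) - b') := by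
          simpa [Int.even_sub, Int.even_pow] using h6
        obtain ⟨u, hu⟩ := h7
        exact ⟨u, by linarith⟩
      obtain ⟨u, hu⟩ := hpar
      have huv : ((p : ℤ) ^ k) ∣ u * (u + b') := by
        rw [hu, show ((b' : ℤ) + 2 * u) ^ 2 - (b' : ℤ) ^ 2 = 4 * (u * (u + b')) by ring] at hsub
        exact Int.dvd_of_mul_dvd_mul_left (by norm_num) hsub
      have hpp : Prime (p : ℤ) := Nat.prime_iff_prime_int.1 hp
      have hor : ((p : ℤ) ^ k) ∣ u ∨ ((p : ℤ) ^ k) ∣ (u + b') := by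
        by_cases hpu : (p : ℤ) ∣ u
        · left
          refine (IsCoprime.pow_left ?_).dvd_of_dvd_mul_right huv
          rw [Prime.coprime_iff_not_dvd hpp]
          intro hh
          apply hpb
          rw [hu]
          have := dvd_add hpu hh
          rwa [show u + (u + (b' : ℤ)) = b' + 2 * u by ring] at this
        · right
          refine (IsCoprime.pow_left ?_).dvd_of_dvd_mul_left huv
          rwa [Prime.coprime_iff_not_dvd hpp]
      have hb1 : (b : ℤ) < 2 * p ^ k := by exact_mod_cast hb.1
      have hb1' : (b' : ℤ) < 2 * p ^ k := by exact_mod_cast hb'.1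
      have hposz : (0 : ℤ) < (p : ℤ) ^ k := by exact_mod_cast hpos
      have hb0 : 0 < b := by
        rcases Nat.eq_zero_or_pos b with rfl | h
        · simp at hpb
        · exact h
      rcases hor with ⟨t, ht⟩ | ⟨t, ht⟩
      · left
        have t1 : t < 1 := by
          by_contra hh
          have := mul_le_mul_of_nonneg_left (show 1 ≤ t by omega) hposz.le
          omega
        have t2 : -1 < t := by
          by_contra hh
          have := mul_le_mul_of_nonneg_left (show t ≤ -1 by omega) hposz.le
          omega
        have : t = 0 := by omega
        subst this
        omega
      · right
        have t1 : t < 2 := by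
          by_contra hh
          have := mul_le_mul_of_nonneg_left (show 2 ≤ t by omega) hposz.le
          omega
        have t2 : 0 < t := by
          by_contra hh
          have := mul_le_mul_of_nonneg_left (show t ≤ 0 by omega) hposz.le
          omega
        have : t = 1 := by omega
        subst this
        have : (b' : ℤ) = ((2 * p ^ k : ℕ) : ℤ) - b := by push_cast; linarith
        omega
    have : (rhoF D (p ^ k) : ℤ) ≤ 2 := by exact_mod_cast this
    linarith

lemma rho_le (D : ℕ) (χ : ℕ → ℤ) (h : IsChi D χ) (n : ℕ) (hn : 0 < n) (hc : Nat.Coprime n D) :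
    (rhoF D n : ℤ) ≤ ∏ p ∈ n.primeFactors, (1 + χ p) := by
  induction n using Nat.recOnPosPrimePosCoprime with
  | prime_pow p k hp hk =>
    rw [Nat.primeFactors_prime_pow hk.ne' hp, Finset.prod_singleton]
    exact rho_prime_pow D χ h p k hp (Nat.Coprime.coprime_dvd_left (dvd_pow_self p hk.ne') hc) hk
  | zero => omega
  | one => simpa using rho_one D
  | coprime a b ha hb hab iha ihb =>
    rw [hab.primeFactors_mul, Finset.prod_union hab.disjoint_primeFactors]
    have h1 := iha (by omega) (Nat.Coprime.coprime_mul_right hc)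
    have h2 := ihb (by omega) (Nat.Coprime.coprime_mul_left hc)
    calc (rhoF D (a * b) : ℤ) ≤ rhoF D a * rhoF D b := by
          exact_mod_cast rho_mul D a b hab (by omega) (by omega)
      _ ≤ _ := mul_le_mul h1 h2 (by positivity) ((by positivity : (0 : ℤ) ≤ rhoF D a).trans h1)

open ArithmeticFunction in
/-- indicator of squares coprime to `D` -/
noncomputable def sqF (D : ℕ) : ArithmeticFunction ℤ := by
  classical
  exact ⟨fun n => if n ≠ 0 ∧ IsSquare n ∧ Nat.Coprime n D then 1 else 0, by simp⟩

lemma sqF_mult (D : ℕ) : (sqF D).IsMultiplicative := by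
  classical
  rw [ArithmeticFunction.IsMultiplicative.iff_ne_zero]
  constructor
  · simp [sqF]
  · intro m n hm hn hmn
    have h1 : IsSquare (m * n) ↔ IsSquare m ∧ IsSquare n := by
      constructor
      · rintro ⟨r, hr⟩
        constructor
        · obtain ⟨d, hd⟩ := exists_eq_pow_of_mul_eq_pow (a := m) (b := n) (c := r) (k := 2)
            (by rw [Nat.isUnit_iff]; exact hmn)
            (by rw [hr]; ring)
          exact ⟨d, by rw [hd]; ring⟩
        · obtain ⟨d, hd⟩ := exists_eq_pow_of_mul_eq_pow (a := n) (b := m) (c := r) (k := 2)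
            (by rw [Nat.isUnit_iff]; exact hmn.symm)
            (by rw [mul_comm, hr]; ring)
          exact ⟨d, by rw [hd]; ring⟩
      · rintro ⟨h, h'⟩; exact h.mul h'
    simp only [sqF, ArithmeticFunction.coe_mk, Nat.coprime_mul_iff_left, h1, mul_ne_zero_iff]
    by_cases a1 : m ≠ 0 ∧ IsSquare m ∧ m.Coprime D
    · by_cases a2 : n ≠ 0 ∧ IsSquare n ∧ n.Coprime D
      · rw [if_pos a1, if_pos a2, if_pos (by tauto), one_mul]
      · rw [if_neg a2, if_neg (by tauto), mul_zero]
    · rw [if_neg a1, if_neg (by tauto), zero_mul]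

lemma isSquare_prime_pow (p i : ℕ) (hp : p.Prime) : IsSquare (p ^ i) ↔ Even i := by
  constructor
  · rintro ⟨r, hr⟩
    obtain ⟨j, _, rfl⟩ := (Nat.dvd_prime_pow hp).1 (⟨r, hr⟩ : r ∣ p ^ i)
    rw [← pow_add] at hr
    exact ⟨j, Nat.pow_right_injective hp.two_le hr⟩
  · rintro ⟨j, rfl⟩
    exact ⟨p ^ j, pow_add _ _ _⟩

lemma local_id (t : ℤ) (ht : t = 1 ∨ t = -1) (k : ℕ) :
    ∑ i ∈ Finset.range (k + 1), (if Even i then (1 : ℤ) else 0) * (if k - i = 0 then 1 else 1 + t)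
      = ∑ i ∈ Finset.range (k + 1), t ^ i := by
  induction k using Nat.twoStepInduction with
  | zero => rw [zero_add, Finset.sum_range_one, Finset.sum_range_one]; simp
  | one => simp [Finset.sum_range_succ]
  | more k ih _ =>
    rw [Finset.sum_range_succ', Finset.sum_range_succ']
    simp only [Nat.reduceSubDiff, Nat.even_add_one, not_not, Nat.add_sub_add_right]
    rw [ih]
    rw [Finset.sum_range_succ _ (k + 2), Finset.sum_range_succ _ (k + 1)]
    rcases ht with rfl | rfl
    · simp; ring
    · simp [pow_succ]

open ArithmeticFunction in
lemma conv_id (D : ℕ) (hD : 1 < D) (χ : ℕ → ℤ) (h : IsChi D χ) (n : ℕ) :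
    ∑ x ∈ n.divisorsAntidiagonal, sqF D x.1 * ArithmeticFunction.prodPrimeFactors (fun p => 1 + χ p) x.2
      = ∑ d ∈ n.divisors, χ d := by
  classical
  have h0 : χ 0 = 0 := h.zero 0 (by simp; omega)
  set X : ArithmeticFunction ℤ := ⟨χ, h0⟩ with hX
  have hXm : X.IsMultiplicative := ⟨h.one, fun {m n} _ => h.mul m n⟩
  set P : ArithmeticFunction ℤ := ArithmeticFunction.prodPrimeFactors (fun p => 1 + χ p) with hP
  have hpow : ∀ p k, χ (p ^ k) = χ p ^ k := by
    intro p k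
    induction k with
    | zero => simpa using h.one
    | succ k ih => rw [pow_succ, h.mul, ih, pow_succ]
  suffices hh : sqF D * P = X * (ArithmeticFunction.zeta : ArithmeticFunction ℤ) by
    have := congrArg (fun f => f n) hh
    rw [ArithmeticFunction.coe_mul_zeta_apply, ArithmeticFunction.mul_apply] at this
    exact this
  rw [ArithmeticFunction.IsMultiplicative.eq_iff_eq_on_prime_powers _
    ((sqF_mult D).mul (ArithmeticFunction.IsMultiplicative.prodPrimeFactors _)) _
    (hXm.mul ArithmeticFunction.isMultiplicative_zeta.natCast)]
  intro p k hp
  rw [ArithmeticFunction.coe_mul_zeta_apply, Nat.sum_divisors_prime_pow hp,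
    ArithmeticFunction.mul_apply, Nat.sum_divisorsAntidiagonal (fun x y => sqF D x * P y),
    Nat.sum_divisors_prime_pow hp]
  have e1 : ∀ i, X (p ^ i) = χ p ^ i := fun i => hpow p i
  simp only [e1]
  have e2 : ∀ i ∈ Finset.range (k + 1),
      P (p ^ k / p ^ i) = if k - i = 0 then 1 else 1 + χ p := by
    intro i hi
    have hi : i ≤ k := by simpa [Nat.lt_succ_iff] using hi
    rw [Nat.pow_div hi hp.pos, hP, ArithmeticFunction.prodPrimeFactors_apply (pow_pos hp.pos _).ne']
    split_ifs with hh
    · simp [hh]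
    · rw [Nat.primeFactors_prime_pow hh hp, Finset.prod_singleton]
  by_cases hc : p.Coprime D
  · rw [← local_id (χ p) (h.tri p hc) k]
    apply Finset.sum_congr rfl
    intro i hi
    rw [e2 i hi]
    congr 1
    simp only [sqF, ArithmeticFunction.coe_mk]
    apply if_congr _ rfl rfl
    rw [isSquare_prime_pow p i hp]
    exact ⟨fun hh => hh.2.1, fun hh => ⟨(pow_pos hp.pos _).ne', hh, hc.pow_left i⟩⟩
  · rw [h.zero p hc] at *
    have e3 : ∀ i ∈ Finset.range (k + 1), sqF D (p ^ i) * P (p ^ k / p ^ i) = 0 ^ i := by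
      intro i hi
      rw [e2 i hi]
      by_cases hi0 : i = 0
      · subst hi0
        simp [sqF]
      · have : ¬ Nat.Coprime (p ^ i) D := by
          rwa [Nat.coprime_pow_left_iff (Nat.pos_of_ne_zero hi0)]
        simp [sqF, this, hi0]
    exact Finset.sum_congr rfl e3

lemma rep_card (D : ℕ) (hD : 1 < D) (h3 : D ≠ 3) (h4 : D ≠ 4) (χ : ℕ → ℤ) (h : IsChi D χ)
    (n : ℕ) (hn : 0 < n) (hc : Nat.Coprime n D)
    (U : Finset ((ℤ × ℤ × ℤ) × ℤ × ℤ))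
    (hU : ∀ u ∈ U, RedF D u.1 ∧ evF u.1 u.2.1 u.2.2 = n) :
    (U.card : ℤ) ≤ 2 * ∑ d ∈ n.divisors, χ d := by
  classical
  rw [← conv_id D hD χ h n]
  have hmap : ∀ u ∈ U, (Int.gcd u.2.1 u.2.2 ^ 2, n / Int.gcd u.2.1 u.2.2 ^ 2) ∈
      n.divisorsAntidiagonal := by
    intro u hu
    obtain ⟨_, he⟩ := hU u hu
    rw [Nat.mem_divisorsAntidiagonal]
    refine ⟨Nat.mul_div_cancel' ?_, hn.ne'⟩
    rw [← Int.natCast_dvd_natCast, ← he]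
    obtain ⟨x, hx⟩ := Int.gcd_dvd_left u.2.1 u.2.2
    obtain ⟨y, hy⟩ := Int.gcd_dvd_right u.2.1 u.2.2
    generalize Int.gcd u.2.1 u.2.2 = g at *
    rw [hx, hy, evF]
    exact ⟨u.1.1 * x ^ 2 + u.1.2.1 * x * y + u.1.2.2 * y ^ 2, by push_cast; ring⟩
  rw [Finset.card_eq_sum_card_fiberwise hmap, Finset.mul_sum]
  push_cast
  apply Finset.sum_le_sum
  rintro ⟨m, r⟩ hmr
  rw [Nat.mem_divisorsAntidiagonal] at hmr
  simp only at hmr ⊢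
  have hm0 : m ≠ 0 := by rintro rfl; simp at hmr; omega
  have hr0 : r ≠ 0 := by rintro rfl; simp at hmr; omega
  have hPr := rho_le D χ h r (Nat.pos_of_ne_zero hr0)
    (Nat.Coprime.coprime_dvd_left ⟨m, by rw [← hmr.1]; ring⟩ hc)
  have hmc : Nat.Coprime m D := Nat.Coprime.coprime_dvd_left ⟨r, hmr.1.symm⟩ hc
  rw [ArithmeticFunction.prodPrimeFactors_apply hr0]
  by_cases hsq : IsSquare m
  · obtain ⟨g, hg⟩ := hsq
    have hs1 : sqF D m = 1 := by
      simp only [sqF, ArithmeticFunction.coe_mk]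
      exact if_pos ⟨hm0, ⟨g, hg⟩, hmc⟩
    rw [hs1, one_mul]
    refine le_trans ?_ (mul_le_mul_of_nonneg_left hPr (by norm_num))
    have hg0 : g ≠ 0 := by rintro rfl; simp at hg; exact hm0 hg
    have hgz : (g : ℤ) ≠ 0 := by exact_mod_cast hg0
    set V := (U.filter (fun u => (Int.gcd u.2.1 u.2.2 ^ 2, n / Int.gcd u.2.1 u.2.2 ^ 2) = (m, r)))
      with hV
    have hVg : ∀ u ∈ V, Int.gcd u.2.1 u.2.2 = g ∧ u ∈ U := by
      intro u hu
      rw [hV, Finset.mem_filter, Prod.mk.injEq, hg, ← sq] at hu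
      exact ⟨Nat.pow_left_injective (n := 2) (by norm_num) hu.2.1, hu.1⟩
    have hdiv : ∀ u ∈ V, ∃ x y : ℤ, u.2.1 = g * x ∧ u.2.2 = g * y ∧ u.2.1 / g = x ∧
        u.2.2 / g = y := by
      intro u hu
      obtain ⟨x, hx⟩ := Int.gcd_dvd_left u.2.1 u.2.2
      obtain ⟨y, hy⟩ := Int.gcd_dvd_right u.2.1 u.2.2
      rw [(hVg u hu).1] at hx hy
      exact ⟨x, y, hx, hy, by rw [hx, Int.mul_ediv_cancel_left _ hgz],
        by rw [hy, Int.mul_ediv_cancel_left _ hgz]⟩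
    have hinj : Set.InjOn (fun u : (ℤ × ℤ × ℤ) × ℤ × ℤ => (u.1, u.2.1 / (g : ℤ), u.2.2 / (g : ℤ))) V := by
      intro u hu v hv huv
      obtain ⟨x, y, a1, a2, a3, a4⟩ := hdiv u hu
      obtain ⟨x', y', b1, b2, b3, b4⟩ := hdiv v hv
      simp only [Prod.mk.injEq] at huv
      rw [a3, a4, b3, b4] at huv
      obtain ⟨c1, rfl, rfl⟩ := huv
      exact Prod.ext c1 (Prod.ext (a1.trans b1.symm) (a2.trans b2.symm))
    have hcard := Finset.card_image_of_injOn hinj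
    rw [← hcard]
    have := prim_card D h3 h4 r (Nat.pos_of_ne_zero hr0)
      (V.image (fun u : (ℤ × ℤ × ℤ) × ℤ × ℤ => (u.1, u.2.1 / (g : ℤ), u.2.2 / (g : ℤ)))) (by
        intro w hw
        obtain ⟨u, hu, rfl⟩ := Finset.mem_image.1 hw
        obtain ⟨x, y, a1, a2, a3, a4⟩ := hdiv u hu
        obtain ⟨g1, huU⟩ := hVg u hu
        obtain ⟨k1, k2⟩ := hU u huU
        refine ⟨k1, ?_, ?_⟩
        · simp only [a3, a4]
          rw [Int.isCoprime_iff_gcd_eq_one]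
          rw [a1, a2, Int.gcd_mul_left] at g1
          simp only [Int.natAbs_natCast] at g1
          exact Nat.eq_of_mul_eq_mul_left (Nat.pos_of_ne_zero hg0) (by rw [g1, mul_one])
        · simp only [a3, a4]
          rw [evF, a1, a2] at k2
          rw [evF]
          have : (n : ℤ) = g ^ 2 * r := by
            rw [← hmr.1, hg]; push_cast; ring
          rw [this] at k2
          refine mul_left_cancel₀ (pow_ne_zero 2 hgz) ?_
          rw [← k2]; ring)
    exact_mod_cast this
  · have hs0 : sqF D m = 0 := by
      simp only [sqF, ArithmeticFunction.coe_mk]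
      exact if_neg (fun hh => hsq hh.2.1)
    rw [hs0, zero_mul, mul_zero]
    have : (U.filter (fun u => (Int.gcd u.2.1 u.2.2 ^ 2, n / Int.gcd u.2.1 u.2.2 ^ 2) = (m, r)))
      = ∅ := by
      apply Finset.filter_eq_empty_iff.2
      intro u _ hu
      rw [Prod.mk.injEq] at hu
      exact hsq ⟨Int.gcd u.2.1 u.2.2, by rw [← hu.1]; ring⟩
    rw [this]; simp

lemma chi_per_sum (D : ℕ) (hD : 1 < D) (χ : ℕ → ℤ) (h : IsChi D χ) :
    ∑ d ∈ Finset.range D, χ d = 0 := by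
  have hz : χ 0 = 0 := h.zero 0 (by simp; omega)
  have hmulper : ∀ k n, χ (n + D * k) = χ n := by
    intro k n
    induction k with
    | zero => simp
    | succ k ih => rw [mul_add, mul_one, ← add_assoc, h.per, ih]
  obtain ⟨E, rfl⟩ : ∃ E, D = E + 1 := ⟨D - 1, by omega⟩
  rw [Finset.sum_range_succ', hz, add_zero]
  have hrefl := Finset.sum_range_reflect (fun i => χ (i + 1)) E
  have h2 : ∀ j ∈ Finset.range E, χ (E - 1 - j + 1) = -χ (j + 1) := by
    intro j hj
    have hj : j < E := Finset.mem_range.1 hj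
    have h3 : χ (E * (j + 1)) = -χ (j + 1) := by
      have hneg := h.neg
      rw [Nat.add_sub_cancel] at hneg
      rw [h.mul, hneg]; ring
    rw [← h3, ← hmulper j (E - 1 - j + 1)]
    congr 1
    obtain ⟨t, rfl⟩ : ∃ t, E = j + 1 + t := ⟨E - (j + 1), by omega⟩
    have : j + 1 + t - 1 - j + 1 = t + 1 := by omega
    rw [this]; ring
  rw [Finset.sum_congr rfl h2, Finset.sum_neg_distrib] at hrefl
  linarith

lemma chi_abs (D : ℕ) (χ : ℕ → ℤ) (h : IsChi D χ) (n : ℕ) : |χ n| ≤ 1 := by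
  by_cases hc : Nat.Coprime n D
  · rcases h.tri n hc with h | h <;> simp [h]
  · simp [h.zero n hc]

lemma chi_sum_abs (D : ℕ) (hD : 1 < D) (χ : ℕ → ℤ) (h : IsChi D χ) (n : ℕ) :
    |∑ d ∈ Finset.range n, χ d| ≤ D := by
  induction n using Nat.strong_induction_on with
  | _ n ih =>
    by_cases hn : n < D
    · refine (Finset.abs_sum_le_sum_abs _ _).trans ?_
      refine (Finset.sum_le_card_nsmul _ _ 1 (fun i _ => chi_abs D χ h i)).trans ?_
      simp; omega
    · obtain ⟨m, rfl⟩ : ∃ m, n = D + m := ⟨n - D, by omega⟩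
      rw [Finset.sum_range_add, chi_per_sum D hD χ h, zero_add]
      simp only [add_comm D, h.per]
      exact ih m (by omega)

lemma chi_tail (D : ℕ) (hD : 1 < D) (χ : ℕ → ℤ) (h : IsChi D χ) (M : ℕ) (hM : D ≤ M) :
    ∑ d ∈ Finset.Ico D M, (χ d : ℝ) / d ≤ 1 + ((∑ d ∈ Finset.range M, χ d : ℤ) - D : ℝ) / M := by
  induction M, hM using Nat.le_induction with
  | base =>
    rw [chi_per_sum D hD χ h]
    have : (D : ℝ) ≠ 0 := by positivity
    simp [this]
  | succ M hM ih =>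
    rw [Finset.sum_Ico_succ_top hM]
    have hS := (abs_le.1 (chi_sum_abs D hD χ h (M + 1))).2
    have hS' : ((∑ d ∈ Finset.range (M + 1), χ d : ℤ) : ℝ) ≤ D := by exact_mod_cast hS
    have hMp : (0 : ℝ) < M := by
      have : 0 < M := by omega
      exact_mod_cast this
    have e : ((∑ d ∈ Finset.range M, χ d : ℤ) - D : ℝ) / M + (χ M : ℝ) / M
        = ((∑ d ∈ Finset.range (M + 1), χ d : ℤ) - D : ℝ) / M := by
      rw [Finset.sum_range_succ]; push_cast; ring
    have h2 : ((∑ d ∈ Finset.range (M + 1), χ d : ℤ) - D : ℝ) / M ≤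
        ((∑ d ∈ Finset.range (M + 1), χ d : ℤ) - D : ℝ) / (M + 1 : ℕ) := by
      push_cast at hS' ⊢
      rw [div_le_div_iff₀ hMp (by positivity)]
      nlinarith
    linarith

lemma chi_log (D : ℕ) (hD : 1 < D) (χ : ℕ → ℤ) (h : IsChi D χ) (M : ℕ) :
    ∑ d ∈ Finset.Ioc 0 M, (χ d : ℝ) / d ≤ 2 + Real.log D := by
  have hle : ∀ d, (χ d : ℝ) / d ≤ (d : ℝ)⁻¹ := by
    intro d
    have := (abs_le.1 (chi_abs D χ h d)).2
    have : (χ d : ℝ) ≤ 1 := by exact_mod_cast this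
    rw [div_eq_mul_inv]
    exact mul_le_of_le_one_left (by positivity) this
  have hharm : ∀ K, K ≤ D → ∑ d ∈ Finset.Ioc 0 K, (χ d : ℝ) / d ≤ 1 + Real.log D := by
    intro K hK
    refine (Finset.sum_le_sum (fun d _ => hle d)).trans ?_
    have h1 := harmonic_le_one_add_log K
    rw [harmonic_eq_sum_Icc] at h1
    push_cast at h1
    rw [show Finset.Ioc 0 K = Finset.Icc 1 K from rfl]
    refine h1.trans ?_
    rcases Nat.eq_zero_or_pos K with rfl | hK0
    · simp; exact Real.log_nonneg (by exact_mod_cast hD.le)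
    · gcongr
  by_cases hM : M ≤ D
  · linarith [hharm M hM]
  · push Not at hM
    have e1 : Finset.Ioc 0 M = Finset.Ico 1 (M + 1) := rfl
    rw [e1, ← Finset.sum_Ico_consecutive _ (show 1 ≤ D by omega) (show D ≤ M + 1 by omega)]
    have h1 := hharm (D - 1) (by omega)
    rw [show Finset.Ioc 0 (D - 1) = Finset.Ico 1 D by ext; simp; omega] at h1
    have h2 := chi_tail D hD χ h (M + 1) (by omega)
    have hS := (abs_le.1 (chi_sum_abs D hD χ h (M + 1))).2
    have hS' : ((∑ d ∈ Finset.range (M + 1), χ d : ℤ) : ℝ) ≤ D := by exact_mod_cast hS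
    have h3 : ((∑ d ∈ Finset.range (M + 1), χ d : ℤ) - D : ℝ) / (M + 1 : ℕ) ≤ 0 :=
      div_nonpos_of_nonpos_of_nonneg (by linarith) (by positivity)
    linarith

lemma cop_count (D : ℕ) (hD : 0 < D) (Y : ℕ) :
    |(((Finset.Ioc 0 Y).filter (fun m => Nat.Coprime m D)).card : ℝ) - D.totient / D * Y| ≤ D := by
  have hDr : (0 : ℝ) < D := by exact_mod_cast hD
  have hphi : (D.totient : ℝ) / D ≤ 1 := by
    rw [div_le_one hDr]; exact_mod_cast Nat.totient_le D
  have hphi0 : 0 ≤ (D.totient : ℝ) / D := by positivity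
  induction Y using Nat.strong_induction_on with
  | _ Y ih =>
    by_cases hY : Y < D
    · have h1 : ((Finset.Ioc 0 Y).filter (fun m => Nat.Coprime m D)).card ≤ Y :=
        (Finset.card_filter_le _ _).trans (by simp)
      have h1' : (((Finset.Ioc 0 Y).filter (fun m => Nat.Coprime m D)).card : ℝ) ≤ Y := by
        exact_mod_cast h1
      have hY' : (Y : ℝ) ≤ D := by exact_mod_cast hY.le
      have h2 : (D.totient : ℝ) / D * Y ≤ 1 * Y := by gcongr
      have h3 : 0 ≤ (D.totient : ℝ) / D * Y := by positivity
      have h4 : (0 : ℝ) ≤ ((Finset.Ioc 0 Y).filter (fun m => Nat.Coprime m D)).card := by positivity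
      rw [abs_le]; constructor <;> linarith
    · obtain ⟨m, rfl⟩ : ∃ m, Y = m + D := ⟨Y - D, by omega⟩
      have hcard : ((Finset.Ioc 0 (m + D)).filter (fun m => Nat.Coprime m D)).card =
          ((Finset.Ioc 0 m).filter (fun m => Nat.Coprime m D)).card + D.totient := by
        rw [← Nat.filter_coprime_Ico_eq_totient D (m + 1)]
        rw [show Finset.Ioc 0 (m + D) = Finset.Ioc 0 m ∪ Finset.Ico (m + 1) (m + 1 + D) by
          ext; simp; omega]
        rw [Finset.filter_union, Finset.card_union_of_disjoint]
        · simp only [Nat.coprime_comm]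
        · apply Finset.disjoint_filter_filter
          rw [Finset.disjoint_left]
          intro a; simp; omega
      rw [hcard]
      have := ih m (by omega)
      push_cast
      rw [show ((((Finset.Ioc 0 m).filter (fun m => Nat.Coprime m D)).card : ℝ) + D.totient) -
        D.totient / D * (m + D) = (((Finset.Ioc 0 m).filter (fun m => Nat.Coprime m D)).card : ℝ)
          - D.totient / D * m by field_simp; ring]
      exact this

lemma hyper (χ G : ℕ → ℝ) (M : ℕ) :
    ∑ x ∈ (Finset.Ioc 0 (M * M) ×ˢ Finset.Ioc 0 (M * M)).filter (fun x => x.1 * x.2 ≤ M * M),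
      χ x.1 * G x.2 = ∑ d ∈ Finset.Ioc 0 M, χ d * ∑ m ∈ Finset.Ioc 0 (M * M / d), G m +
      ∑ m ∈ Finset.Ioc 0 M, G m * ∑ d ∈ Finset.Ioc M (M * M / m), χ d := by
  rw [← Finset.sum_filter_add_sum_filter_not _ (fun x => x.1 ≤ M)]
  congr 1
  · rw [Finset.sum_finset_product _ (Finset.Ioc 0 M) (fun d => Finset.Ioc 0 (M * M / d))]
    · simp only [Finset.mul_sum]
    · rintro ⟨d, m⟩
      simp only [Finset.mem_filter, Finset.mem_product, Finset.mem_Ioc]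
      constructor
      · rintro ⟨⟨⟨⟨a, b⟩, c, d⟩, e⟩, f⟩
        refine ⟨⟨a, f⟩, c, ?_⟩
        rw [Nat.le_div_iff_mul_le a]; linarith
      · rintro ⟨⟨a, f⟩, c, e⟩
        rw [Nat.le_div_iff_mul_le a] at e
        refine ⟨⟨⟨⟨a, ?_⟩, c, ?_⟩, ?_⟩, f⟩ <;> nlinarith
  · rw [Finset.sum_finset_product_right _ (Finset.Ioc 0 M) (fun m => Finset.Ioc M (M * M / m))]
    · simp only [Finset.mul_sum]
      refine Finset.sum_congr rfl fun m _ => Finset.sum_congr rfl fun d _ => mul_comm _ _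
    · rintro ⟨d, m⟩
      simp only [Finset.mem_filter, Finset.mem_product, Finset.mem_Ioc, not_le]
      constructor
      · rintro ⟨⟨⟨⟨a, b⟩, c, d⟩, e⟩, f⟩
        refine ⟨⟨c, ?_⟩, f, ?_⟩
        · by_contra hh
          push Not at hh
          nlinarith
        · rw [Nat.le_div_iff_mul_le c]; linarith
      · rintro ⟨⟨a, f⟩, c, e⟩
        rw [Nat.le_div_iff_mul_le a] at e
        refine ⟨⟨⟨⟨?_, ?_⟩, a, ?_⟩, ?_⟩, c⟩ <;> nlinarith

lemma chi_sum_bound (D : ℕ) (hD : 1 < D) (χ : ℕ → ℤ) (h : IsChi D χ) (M : ℕ) :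
    ∑ n ∈ (Finset.Ioc 0 (M * M)).filter (fun n => Nat.Coprime n D),
      ∑ d ∈ n.divisors, (χ d : ℝ) ≤
    D.totient / D * (M * M) * (2 + Real.log D) + M * (3 * D + 1) := by
  have h0 : χ 0 = 0 := h.zero 0 (by simp; omega)
  have hDr : (0 : ℝ) < D := by exact_mod_cast (by omega)
  have hphi : (D.totient : ℝ) / D ≤ 1 := by
    rw [div_le_one hDr]; exact_mod_cast Nat.totient_le D
  have hphi0 : 0 ≤ (D.totient : ℝ) / D := by positivity
  set X : ArithmeticFunction ℝ := ⟨fun n => (χ n : ℝ), by simp [h0]⟩ with hX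
  set G : ArithmeticFunction ℝ := ⟨fun n => if Nat.Coprime n D then 1 else 0, by
    rw [if_neg]; simp; omega⟩ with hG
  have hXa : ∀ n, X n = χ n := fun n => rfl
  have hGa : ∀ n, G n = if Nat.Coprime n D then 1 else 0 := fun n => rfl
  have e1 : ∑ n ∈ (Finset.Ioc 0 (M * M)).filter (fun n => Nat.Coprime n D),
      ∑ d ∈ n.divisors, (χ d : ℝ) = ∑ n ∈ Finset.Ioc 0 (M * M), (X * G) n := by
    rw [Finset.sum_filter]
    refine Finset.sum_congr rfl fun n hn => ?_
    rw [ArithmeticFunction.mul_apply, Nat.sum_divisorsAntidiagonal (fun x y => X x * G y)]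
    split_ifs with hc
    · refine Finset.sum_congr rfl fun d hd => ?_
      have hd := Nat.dvd_of_mem_divisors hd
      rw [hXa, hGa, if_pos (Nat.Coprime.coprime_dvd_left (Nat.div_dvd_of_dvd hd) hc), mul_one]
    · refine (Finset.sum_eq_zero fun d hd => ?_).symm
      have hd := Nat.dvd_of_mem_divisors hd
      rw [hXa, hGa]
      by_cases c1 : Nat.Coprime d D
      · rw [if_neg, mul_zero]
        intro c2
        apply hc
        rw [← Nat.mul_div_cancel' hd]
        exact c1.mul_left c2
      · rw [h.zero d c1]; simp
  rw [e1, ArithmeticFunction.sum_Ioc_mul_eq_sum_prod_filter, hyper]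
  have hxabs : ∀ d, |(χ d : ℝ)| ≤ 1 := by
    intro d; exact_mod_cast chi_abs D χ h d
  have p1 : ∑ d ∈ Finset.Ioc 0 M, X d * ∑ m ∈ Finset.Ioc 0 (M * M / d), G m ≤
      D.totient / D * (M * M) * (2 + Real.log D) + M * (D + 1) := by
    have step : ∀ d ∈ Finset.Ioc 0 M, X d * ∑ m ∈ Finset.Ioc 0 (M * M / d), G m ≤
        D.totient / D * (M * M) * ((χ d : ℝ) / d) + (D + 1) := by
      intro d hd
      have hd0 : 0 < d := (Finset.mem_Ioc.1 hd).1
      have hdr : (0 : ℝ) < d := by exact_mod_cast hd0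
      have c1 : ∑ m ∈ Finset.Ioc 0 (M * M / d), G m =
          ((Finset.Ioc 0 (M * M / d)).filter (fun m => Nat.Coprime m D)).card := by
        simp only [hGa]; rw [Finset.sum_boole]
      have c2 := cop_count D (by omega) (M * M / d)
      rw [← c1] at c2
      have c3 : ((M * M / d : ℕ) : ℝ) ≤ (M * M : ℝ) / d := by
        have := @Nat.cast_div_le ℝ _ _ _ (M * M) d
        exact_mod_cast this
      have c4 : (M * M : ℝ) / d ≤ ((M * M / d : ℕ) : ℝ) + 1 := by
        have := (Nat.lt_div_mul_add (a := M * M) hd0).le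
        rw [div_le_iff₀ hdr]
        have : ((M * M : ℕ) : ℝ) ≤ ((M * M / d * d + d : ℕ) : ℝ) := by exact_mod_cast this
        push_cast at this ⊢
        linarith
      set Q := ((M * M / d : ℕ) : ℝ)
      set S := ∑ m ∈ Finset.Ioc 0 (M * M / d), G m
      have c5 : |S - D.totient / D * ((M * M : ℝ) / d)| ≤ D + 1 := by
        have c6 : |(D.totient : ℝ) / D * Q - D.totient / D * ((M * M : ℝ) / d)| ≤ 1 := by
          rw [← mul_sub, abs_mul, abs_of_nonneg hphi0]
          have : |Q - (M * M : ℝ) / d| ≤ 1 := by rw [abs_le]; constructor <;> linarith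
          calc _ ≤ 1 * (1 : ℝ) := mul_le_mul hphi this (abs_nonneg _) (by norm_num)
            _ = 1 := by ring
        calc _ = |(S - D.totient / D * Q) + (D.totient / D * Q - D.totient / D * ((M * M : ℝ) / d))| := by
              congr 1; ring
          _ ≤ _ := (abs_add_le _ _).trans (add_le_add c2 c6)
      have c7 : (χ d : ℝ) * (S - D.totient / D * ((M * M : ℝ) / d)) ≤ D + 1 := by
        refine (le_abs_self _).trans ?_
        rw [abs_mul]
        calc _ ≤ 1 * ((D : ℝ) + 1) := mul_le_mul (hxabs d) c5 (abs_nonneg _) (by norm_num)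
          _ = _ := by ring
      rw [hXa]
      have : (χ d : ℝ) * S = (χ d : ℝ) * (S - D.totient / D * ((M * M : ℝ) / d)) +
        D.totient / D * (M * M) * ((χ d : ℝ) / d) := by ring
      linarith
    refine (Finset.sum_le_sum step).trans ?_
    rw [Finset.sum_add_distrib, ← Finset.mul_sum]
    simp only [Finset.sum_const, Nat.card_Ioc, tsub_zero, nsmul_eq_mul]
    have := chi_log D hD χ h M
    have h5 : 0 ≤ (D.totient : ℝ) / D * (M * M) := by positivity
    have := mul_le_mul_of_nonneg_left this h5
    linarith
  have p2 : ∑ m ∈ Finset.Ioc 0 M, G m * ∑ d ∈ Finset.Ioc M (M * M / m), X d ≤ M * (2 * D) := by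
    have step : ∀ m ∈ Finset.Ioc 0 M, G m * ∑ d ∈ Finset.Ioc M (M * M / m), X d ≤ 2 * D := by
      intro m hm
      rw [Finset.mem_Ioc] at hm
      have hK : M ≤ M * M / m := by
        rw [Nat.le_div_iff_mul_le hm.1]; exact Nat.mul_le_mul_left _ hm.2
      set K := M * M / m
      have c1 : ∑ d ∈ Finset.Ioc M K, X d = ((∑ d ∈ Finset.range (K + 1), χ d : ℤ) : ℝ) -
          ((∑ d ∈ Finset.range (M + 1), χ d : ℤ) : ℝ) := by
        rw [show Finset.Ioc M K = Finset.Ico (M + 1) (K + 1) by ext; simp]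
        rw [Finset.sum_Ico_eq_sub _ (by omega)]
        push_cast; rfl
      have b1 : |((∑ d ∈ Finset.range (K + 1), χ d : ℤ) : ℝ)| ≤ D := by
        exact_mod_cast chi_sum_abs D hD χ h (K + 1)
      have b2 : |((∑ d ∈ Finset.range (M + 1), χ d : ℤ) : ℝ)| ≤ D := by
        exact_mod_cast chi_sum_abs D hD χ h (M + 1)
      have b1 := abs_le.1 b1
      have b2 := abs_le.1 b2
      rw [c1, hGa]
      split_ifs
      · linarith
      · linarith
    refine (Finset.sum_le_sum step).trans ?_
    simp
  linarith
lemma dvd_of_eq_rhs {p m n : ℤ} (h : p ∣ m) (e : n = m) : p ∣ n := e ▸ h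


lemma cop_interval (D : ℕ) (hD : 0 < D) (a e : ℤ) (ha : IsCoprime a (D : ℤ)) (s t : ℝ)
    (hst : s ≤ t) : ∃ X : Finset ℤ,
      (∀ x ∈ X, s ≤ x ∧ (x : ℝ) ≤ t ∧ IsCoprime (a * x + e) (D : ℤ)) ∧
      (D.totient : ℝ) / D * (t - s) - D ≤ X.card := by
  have : NeZero D := ⟨hD.ne'⟩
  have hD' : (0 : ℝ) < D := by exact_mod_cast hD
  obtain ⟨k, hk⟩ : ∃ k : ℕ, k = ⌊(t - s) / D⌋₊ := ⟨_, rfl⟩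
  have hk1 : (k : ℝ) ≤ (t - s) / D := by
    rw [hk]; exact Nat.floor_le (div_nonneg (by linarith) hD'.le)
  have hk2 : (t - s) / D < k + 1 := by rw [hk]; exact Nat.lt_floor_add_one _
  obtain ⟨m, hm⟩ : ∃ m : ℤ, m = ⌈s⌉ := ⟨_, rfl⟩
  have hm1 : s ≤ m := by rw [hm]; exact Int.le_ceil s
  have hm2 : (m : ℝ) < s + 1 := by rw [hm]; exact Int.ceil_lt_add_one s
  have hau : ((a : ℤ) : ZMod D) * (a : ZMod D)⁻¹ = 1 := by
    obtain ⟨u, v, huv⟩ := ha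
    have h1 : ((u * a + v * D : ℤ) : ZMod D) = 1 := by rw [huv]; simp
    push_cast at h1
    simp at h1
    have : IsUnit ((a : ℤ) : ZMod D) := IsUnit.of_mul_eq_one (u : ZMod D) (by rw [mul_comm]; exact h1)
    exact ZMod.mul_inv_of_unit _ this
  let g : Fin k × (ZMod D)ˣ → ℤ := fun w =>
    m + w.1 * D + (((a : ZMod D)⁻¹ * ((w.2 : ZMod D) - e) - m : ZMod D).val : ℤ)
  have hg : ∀ w, ((a * g w + e : ℤ) : ZMod D) = w.2 := by
    intro w
    simp only [g]
    push_cast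
    rw [ZMod.natCast_zmod_val]
    simp only [CharP.cast_eq_zero, mul_zero, add_zero]
    linear_combination ((w.2 : ZMod D) - e) * hau
  have hinj : Function.Injective g := by
    intro w w' hw
    have h1 : w.2 = w'.2 := by
      apply Units.ext
      rw [← hg w, ← hg w', hw]
    have h2 : (w.1 : ℤ) * D = w'.1 * D := by
      simp only [g, h1] at hw
      linarith
    have h3 : (w.1 : ℤ) = w'.1 := mul_right_cancel₀ (by exact_mod_cast hD.ne') h2
    exact Prod.ext (Fin.ext (by exact_mod_cast h3)) h1
  refine ⟨Finset.univ.image g, ?_, ?_⟩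
  · intro x hx
    simp only [Finset.mem_image, Finset.mem_univ, true_and] at hx
    obtain ⟨w, rfl⟩ := hx
    refine ⟨?_, ?_, ?_⟩
    · have : m ≤ g w := by
        simp only [g]; have : (0:ℤ) ≤ (w.1 : ℤ) * D := by positivity
        omega
      have h2 : (m : ℝ) ≤ g w := by exact_mod_cast this
      linarith
    · have h0 := ZMod.val_lt ((a : ZMod D)⁻¹ * ((w.2 : ZMod D) - (e : ZMod D)) - (m : ZMod D))
      have h1 : (w.1 : ℕ) + 1 ≤ k := w.1.2
      have : g w + 1 ≤ m + k * D := by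
        simp only [g]
        have : (((w.1 : ℕ) + 1 : ℕ) : ℤ) * D ≤ k * D := by
          gcongr
        push_cast at this
        zify at h0
        linarith
      have h2 : ((g w : ℝ)) + 1 ≤ m + k * D := by exact_mod_cast this
      have h3 : k * (D : ℝ) ≤ t - s := by
        rwa [le_div_iff₀ hD'] at hk1
      linarith
    · have h1 : IsUnit ((a * g w + e : ℤ) : ZMod D) := by rw [hg]; exact w.2.isUnit
      rw [ZMod.coe_int_isUnit_iff_isCoprime] at h1
      exact h1.symm
  · rw [Finset.card_image_of_injective _ hinj]
    simp only [Finset.card_univ, Fintype.card_prod, Fintype.card_fin, ZMod.card_units_eq_totient]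
    push_cast
    have h1 : (D.totient : ℝ) ≤ D := by exact_mod_cast Nat.totient_le D
    have h2 : (D.totient : ℝ) / D * (t - s) = D.totient * ((t - s) / D) := by ring
    rw [h2]
    have h0 : (0 : ℝ) ≤ D.totient := by positivity
    nlinarith

lemma sum_even (f : ℤ → ℝ) (hf : ∀ y, f (-y) = f y) (n : ℕ) :
    ∑ y ∈ Finset.Icc (-(n : ℤ)) n, f y = 2 * ∑ i ∈ Finset.range (n + 1), f i - f 0 := by
  induction n with
  | zero => simp; ring
  | succ n ih =>
    rw [Finset.sum_range_succ]
    have : Finset.Icc (-((n + 1 : ℕ) : ℤ)) ((n + 1 : ℕ) : ℤ) =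
        insert (-((n + 1 : ℕ) : ℤ)) (insert ((n + 1 : ℕ) : ℤ) (Finset.Icc (-(n : ℤ)) n)) := by
      ext y
      simp only [Finset.mem_Icc, Finset.mem_insert]
      push_cast
      omega
    rw [this, Finset.sum_insert, Finset.sum_insert, ih, hf]
    · push_cast; ring
    · simp
    · simp; omega

lemma int_quarter (A : ℝ) (hA : 0 ≤ A) :
    ∫ x in (0 : ℝ)..A, Real.sqrt (A ^ 2 - x ^ 2) = Real.pi * A ^ 2 / 4 := by
  have h1 : ∫ x in (0 : ℝ)..1, Real.sqrt (1 - x ^ 2) = Real.pi / 4 := by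
    have h := integral_sqrt_one_sub_sq
    have hi : ∀ u v : ℝ, IntervalIntegrable (fun x : ℝ => Real.sqrt (1 - x ^ 2)) MeasureTheory.volume u v :=
      fun u v => (by fun_prop : Continuous _).intervalIntegrable u v
    rw [← intervalIntegral.integral_add_adjacent_intervals (hi (-1) 0) (hi 0 1)] at h
    have h2 := intervalIntegral.integral_comp_neg (a := 0) (b := 1) (fun x : ℝ => Real.sqrt (1 - x ^ 2))
    simp only [neg_zero, neg_sq] at h2
    linarith
  have h3 := intervalIntegral.mul_integral_comp_mul_left (a := 0) (b := 1)
    (f := fun x : ℝ => Real.sqrt (A ^ 2 - x ^ 2)) A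
  simp only [mul_zero, mul_one] at h3
  rw [← h3]
  have h4 : ∀ x : ℝ, Real.sqrt (A ^ 2 - (A * x) ^ 2) = A * Real.sqrt (1 - x ^ 2) := by
    intro x
    rw [show A ^ 2 - (A * x) ^ 2 = A ^ 2 * (1 - x ^ 2) by ring, Real.sqrt_mul (sq_nonneg A),
      Real.sqrt_sq hA]
  simp only [h4]
  rw [intervalIntegral.integral_const_mul, h1]
  ring

lemma sum_sqrt (A : ℝ) (hA : 0 ≤ A) :
    Real.pi * A ^ 2 / 2 - A ≤
      ∑ y ∈ Finset.Icc (-(⌊A⌋₊ : ℤ)) ⌊A⌋₊, Real.sqrt (A ^ 2 - (y : ℝ) ^ 2) := by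
  rw [sum_even (fun y : ℤ => Real.sqrt (A ^ 2 - (y : ℝ) ^ 2)) (by intro y; simp)]
  have hc : Continuous (fun x : ℝ => Real.sqrt (A ^ 2 - x ^ 2)) := by fun_prop
  have h1 : AntitoneOn (fun x : ℝ => Real.sqrt (A ^ 2 - x ^ 2))
      (Set.Icc (0 : ℝ) (0 + ((⌊A⌋₊ + 1 : ℕ) : ℝ))) := by
    intro x hx y hy hxy
    apply Real.sqrt_le_sqrt
    have := hx.1
    nlinarith
  have h2 := h1.integral_le_sum
  have h3 : ∫ x in (0 : ℝ)..A, Real.sqrt (A ^ 2 - x ^ 2) ≤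
      ∫ x in (0 : ℝ)..(0 + ((⌊A⌋₊ + 1 : ℕ) : ℝ)), Real.sqrt (A ^ 2 - x ^ 2) := by
    rw [← intervalIntegral.integral_add_adjacent_intervals (hc.intervalIntegrable 0 A)
      (hc.intervalIntegrable A (0 + ((⌊A⌋₊ + 1 : ℕ) : ℝ)))]
    have : 0 ≤ ∫ x in A..(0 + ((⌊A⌋₊ + 1 : ℕ) : ℝ)), Real.sqrt (A ^ 2 - x ^ 2) := by
      apply intervalIntegral.integral_nonneg
      · push_cast
        have := Nat.lt_floor_add_one A
        linarith
      · intro x _; positivity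
    linarith
  rw [int_quarter A hA] at h3
  simp only [zero_add] at h2 h3
  have h4 : Real.sqrt (A ^ 2 - ((0 : ℤ) : ℝ) ^ 2) = A := by simp [hA]
  rw [h4]
  push_cast at h2 h3 ⊢
  linarith

lemma cop_of_primes (n : ℤ) (D : ℕ)
    (h : ∀ p : ℕ, p.Prime → p ∣ D → ¬ (p : ℤ) ∣ n) : IsCoprime n (D : ℤ) := by
  rw [Int.isCoprime_iff_gcd_eq_one]
  by_contra hne
  obtain ⟨p, hp, hpd⟩ := Nat.exists_prime_and_dvd hne
  have h1 : (p : ℤ) ∣ (Int.gcd n D : ℤ) := by exact_mod_cast hpd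
  exact h p hp (by exact_mod_cast h1.trans (Int.gcd_dvd_right _ _)) (h1.trans (Int.gcd_dvd_left _ _))

lemma not_dvd_of_cop {n : ℤ} {D p : ℕ} (hp : p.Prime) (hpD : p ∣ D) (h : IsCoprime n (D : ℤ)) :
    ¬ (p : ℤ) ∣ n := by
  intro hn
  have h1 := h.isUnit_of_dvd' hn (by exact_mod_cast hpD)
  exact (Nat.prime_iff_prime_int.mp hp).not_isUnit h1

lemma lin_form (D : ℕ) (a b c : ℤ) (ha : IsCoprime a (D : ℤ)) (hd : b ^ 2 - 4 * a * c = -(D : ℤ)) :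
    ∃ a' e : ℤ, IsCoprime a' (D : ℤ) ∧
      ∀ x y, IsCoprime (a' * x + e * y) (D : ℤ) → IsCoprime (evF (a, b, c) x y) (D : ℤ) := by
  rcases Nat.even_or_odd D with hD | hD
  · have hb : Even b := by
      have : Even (b ^ 2) := by
        rw [show b ^ 2 = 2 * (2 * a * c) + -(D : ℤ) by linarith]
        apply Even.add (even_two_mul _)
        simpa using hD
      exact (Int.even_pow.mp this).1
    obtain ⟨b', rfl⟩ := hb
    obtain ⟨k, hk⟩ : ∃ k : ℤ, k = a * c - b' ^ 2 := ⟨_, rfl⟩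
    have hk4 : (D : ℤ) = 4 * k := by rw [hk]; linarith
    refine ⟨a, b' + k, ha, fun x y hxy => cop_of_primes _ _ fun p hp hpD hF => ?_⟩
    have hnd := not_dvd_of_cop hp hpD hxy
    have hpp := Nat.prime_iff_prime_int.mp hp
    have h1 : (p : ℤ) ∣ (a * x + b' * y) ^ 2 + k * y ^ 2 := by
      have : (a * x + b' * y) ^ 2 + k * y ^ 2 = a * evF (a, b' + b', c) x y := by
        rw [hk]; simp only [evF]; ring
      rw [this]; exact hF.mul_left a
    by_cases hpk : (p : ℤ) ∣ k
    · have h2 : (p : ℤ) ∣ (a * x + b' * y) ^ 2 := by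
        have := dvd_sub h1 (hpk.mul_right (y ^ 2))
        simpa using this
      have h3 := hpp.dvd_of_dvd_pow h2
      apply hnd
      have := dvd_add h3 (hpk.mul_right y)
      refine (dvd_of_eq_rhs this ?_); ring
    · have h4 : (p : ℤ) ∣ 4 * k := by rw [← hk4]; exact_mod_cast hpD
      have h5 : (p : ℤ) ∣ 2 := by
        rcases hpp.dvd_or_dvd h4 with h | h
        · have : (p : ℤ) ∣ 2 ^ 2 := by norm_num; exact h
          exact hpp.dvd_of_dvd_pow this
        · exact absurd h hpk
      have h6 : p = 2 := (Nat.prime_dvd_prime_iff_eq hp Nat.prime_two).mp (by exact_mod_cast h5)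
      subst h6
      apply hnd
      push_cast at *
      have h7 : (2 : ℤ) ∣ (a * x + b' * y) * (a * x + b' * y - 1) := by
        have := (Int.even_mul_pred_self (a * x + b' * y)).two_dvd
        exact this
      have h8 : (2 : ℤ) ∣ k * (y * (y - 1)) := (Int.even_mul_pred_self y).two_dvd.mul_left k
      have := dvd_sub (dvd_sub h1 h7) h8
      refine (dvd_of_eq_rhs this ?_); ring
  · refine ⟨2 * a, b, ?_, fun x y hxy => cop_of_primes _ _ fun p hp hpD hF => ?_⟩
    · apply IsCoprime.mul_left _ ha
      have : Nat.Coprime 2 D := (Nat.coprime_two_left).mpr hD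
      exact_mod_cast Nat.isCoprime_iff_coprime.mpr this
    · have hnd := not_dvd_of_cop hp hpD hxy
      have hpp := Nat.prime_iff_prime_int.mp hp
      apply hnd
      apply hpp.dvd_of_dvd_pow (n := 2)
      have h1 : (2 * a * x + b * y) ^ 2 = 4 * a * evF (a, b, c) x y - D * y ^ 2 := by
        simp only [evF]; linear_combination y ^ 2 * hd
      rw [h1]
      exact dvd_sub (hF.mul_left _) ((by exact_mod_cast hpD : (p : ℤ) ∣ D).mul_right _)

lemma exists_cop_value (D : ℕ) (hD : 0 < D) (a b c : ℤ) (hp : Int.gcd (Int.gcd a b) c = 1)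
    (hd : b ^ 2 - 4 * a * c = -(D : ℤ)) :
    ∃ p q : ℤ, IsCoprime p q ∧ IsCoprime (evF (a, b, c) p q) (D : ℤ) := by
  classical
  obtain ⟨P, hP⟩ : ∃ P : ℕ, P = ∏ l ∈ D.primeFactors.filter (fun l : ℕ => (l : ℤ) ∣ a), l := ⟨_, rfl⟩
  obtain ⟨Q, hQ⟩ : ∃ Q : ℕ, Q = ∏ l ∈ D.primeFactors.filter (fun l : ℕ => ¬ (l : ℤ) ∣ a), l := ⟨_, rfl⟩
  have dP : ∀ l : ℕ, l.Prime → (l ∣ P ↔ l ∣ D ∧ (l : ℤ) ∣ a) := by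
    intro l hl
    rw [hP, hl.prime.dvd_finsetProd_iff]
    constructor
    · rintro ⟨q, hq, hlq⟩
      simp only [Finset.mem_filter, Nat.mem_primeFactors] at hq
      rw [(Nat.prime_dvd_prime_iff_eq hl hq.1.1).mp hlq]
      exact ⟨hq.1.2.1, hq.2⟩
    · rintro ⟨h1, h2⟩
      exact ⟨l, by simp [hl, h1, h2, hD.ne'], dvd_rfl⟩
  have dQ : ∀ l : ℕ, l.Prime → (l ∣ Q ↔ l ∣ D ∧ ¬ (l : ℤ) ∣ a) := by
    intro l hl
    rw [hQ, hl.prime.dvd_finsetProd_iff]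
    constructor
    · rintro ⟨q, hq, hlq⟩
      simp only [Finset.mem_filter, Nat.mem_primeFactors] at hq
      rw [(Nat.prime_dvd_prime_iff_eq hl hq.1.1).mp hlq]
      exact ⟨hq.1.2.1, hq.2⟩
    · rintro ⟨h1, h2⟩
      exact ⟨l, by simp [hl, h1, h2, hD.ne'], dvd_rfl⟩
  refine ⟨P, Q, ?_, cop_of_primes _ _ fun l hl hlD hF => ?_⟩
  · rw [Nat.isCoprime_iff_coprime]
    apply Nat.Coprime.symm
    apply Nat.coprime_of_dvd
    intro k hk h1 h2
    exact ((dQ k hk).mp h1).2 ((dP k hk).mp h2).2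
  · have hll := Nat.prime_iff_prime_int.mp hl
    simp only [evF] at hF
    by_cases hla : (l : ℤ) ∣ a
    · have h2 : ¬ (l : ℤ) ∣ Q := by
        intro h; exact ((dQ l hl).mp (by exact_mod_cast h)).2 hla
      have h3 : (l : ℤ) ∣ c * Q ^ 2 := by
        have h1 : (l : ℤ) ∣ P := by exact_mod_cast (dP l hl).mpr ⟨hlD, hla⟩
        have h4 : (l : ℤ) ∣ P * (a * P + b * Q) := h1.mul_right _
        have := dvd_sub hF h4
        refine (dvd_of_eq_rhs this ?_); ring
      have hlc : (l : ℤ) ∣ c := by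
        rcases hll.dvd_or_dvd h3 with h | h
        · exact h
        · exact absurd (hll.dvd_of_dvd_pow h) h2
      have hlb : (l : ℤ) ∣ b := by
        apply hll.dvd_of_dvd_pow (n := 2)
        rw [show b ^ 2 = a * (4 * c) - D by linarith]
        exact dvd_sub (hla.mul_right _) (by exact_mod_cast hlD)
      have h5 : (l : ℤ) ∣ (Int.gcd (Int.gcd a b) c : ℤ) :=
        Int.dvd_coe_gcd (Int.dvd_coe_gcd hla hlb) hlc
      rw [hp] at h5
      exact hll.not_isUnit (isUnit_of_dvd_one (by exact_mod_cast h5))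
    · have h2 : ¬ (l : ℤ) ∣ P := by
        intro h; exact hla ((dP l hl).mp (by exact_mod_cast h)).2
      have h1 : (l : ℤ) ∣ Q := by exact_mod_cast (dQ l hl).mpr ⟨hlD, hla⟩
      have h3 : (l : ℤ) ∣ a * P ^ 2 := by
        have h4 : (l : ℤ) ∣ Q * (b * P + c * Q) := h1.mul_right _
        have := dvd_sub hF h4
        refine (dvd_of_eq_rhs this ?_); ring
      rcases hll.dvd_or_dvd h3 with h | h
      · exact hla h
      · exact h2 (hll.dvd_of_dvd_pow h)

lemma lattice_cop (D : ℕ) (hD : 0 < D) (a b c : ℤ) (ha0 : 0 < a) (ha : IsCoprime a (D : ℤ))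
    (hd : b ^ 2 - 4 * a * c = -(D : ℤ)) :
    ∃ C : ℝ, ∀ M : ℕ, ∃ V : Finset (ℤ × ℤ),
      (∀ v ∈ V, evF (a, b, c) v.1 v.2 ≤ (M : ℤ) * M ∧
        IsCoprime (evF (a, b, c) v.1 v.2) (D : ℤ)) ∧
      (D.totient : ℝ) / D * (2 * Real.pi / Real.sqrt D) * (M * M) - C * (M + 1) ≤ V.card := by
  classical
  obtain ⟨a', e, ha', hlin⟩ := lin_form D a b c ha hd
  have hDR : (0 : ℝ) < D := by exact_mod_cast hD
  have haR : (0 : ℝ) < a := by exact_mod_cast ha0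
  obtain ⟨r, hr⟩ : ∃ r, r = Real.sqrt D := ⟨_, rfl⟩
  have hr0 : 0 < r := by rw [hr]; positivity
  have hr2 : r ^ 2 = D := by rw [hr]; exact Real.sq_sqrt hDR.le
  obtain ⟨α, hα⟩ : ∃ α, α = Real.sqrt (4 * a / D) := ⟨_, rfl⟩
  have hα0 : 0 ≤ α := by rw [hα]; positivity
  have hα2 : α ^ 2 * D = 4 * a := by
    rw [hα, Real.sq_sqrt (by positivity)]; field_simp
  rw [← hr]
  have hφ : (0 : ℝ) ≤ (D.totient : ℝ) / D := by positivity
  obtain ⟨φ, hφe⟩ : ∃ φ : ℝ, φ = (D.totient : ℝ) / D := ⟨_, rfl⟩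
  refine ⟨φ * (r / a) * α + D * (2 * α + 1), fun M => ?_⟩
  obtain ⟨A, hA⟩ : ∃ A, A = α * M := ⟨_, rfl⟩
  have hA0 : 0 ≤ A := by rw [hA]; positivity
  have hX := fun y : ℤ => cop_interval D hD a' (e * y) ha'
    (-(b * y) / (2 * a) - r * Real.sqrt (A ^ 2 - (y : ℝ) ^ 2) / (2 * a))
    (-(b * y) / (2 * a) + r * Real.sqrt (A ^ 2 - (y : ℝ) ^ 2) / (2 * a))
    (by
      have : 0 ≤ r * Real.sqrt (A ^ 2 - (y : ℝ) ^ 2) / (2 * a) := by positivity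
      linarith)
  choose X hX1 hX2 using hX
  let Y := Finset.Icc (-(⌊A⌋₊ : ℤ)) ⌊A⌋₊
  refine ⟨(Y.sigma X).image (fun s => (s.2, s.1)), ?_, ?_⟩
  · intro v hv
    simp only [Finset.mem_image, Finset.mem_sigma] at hv
    obtain ⟨⟨y, x⟩, ⟨hy, hx⟩, rfl⟩ := hv
    simp only at hy hx ⊢
    obtain ⟨h1, h2, h3⟩ := hX1 y x hx
    refine ⟨?_, hlin x y h3⟩
    have hyA : (y : ℝ) ^ 2 ≤ A ^ 2 := by
      rw [sq_le_sq, abs_of_nonneg hA0]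
      have h4 : |y| ≤ (⌊A⌋₊ : ℤ) := abs_le.mpr (Finset.mem_Icc.mp hy)
      have h5 : |(y : ℝ)| ≤ (⌊A⌋₊ : ℝ) := by exact_mod_cast h4
      exact h5.trans (Nat.floor_le hA0)
    obtain ⟨S, hS⟩ : ∃ S, S = Real.sqrt (A ^ 2 - (y : ℝ) ^ 2) := ⟨_, rfl⟩
    have hS2 : S ^ 2 = A ^ 2 - (y : ℝ) ^ 2 := by rw [hS]; exact Real.sq_sqrt (by linarith)
    rw [← hS] at h1 h2
    have g1 : -(r * S) ≤ 2 * a * x + b * y := by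
      rw [← sub_div, div_le_iff₀ (by positivity)] at h1
      linarith
    have g2 : 2 * a * x + b * y ≤ r * S := by
      rw [← add_div, le_div_iff₀ (by positivity)] at h2
      linarith
    have g3 : (2 * a * x + b * y : ℝ) ^ 2 ≤ (r * S) ^ 2 := sq_le_sq' g1 g2
    have g4 : (r * S) ^ 2 = 4 * a * (M * M) - D * (y : ℝ) ^ 2 := by
      rw [mul_pow, hr2, hS2, hA]
      linear_combination (M : ℝ) ^ 2 * hα2
    rw [g4] at g3
    have g5 : (2 * a * x + b * y) ^ 2 ≤ 4 * a * ((M : ℤ) * M) - D * y ^ 2 := by exact_mod_cast g3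
    have g6 : 4 * a * evF (a, b, c) x y ≤ 4 * a * ((M : ℤ) * M) := by
      have : 4 * a * evF (a, b, c) x y = (2 * a * x + b * y) ^ 2 + D * y ^ 2 := by
        simp only [evF]; linear_combination -y ^ 2 * hd
      linarith
    exact le_of_mul_le_mul_left g6 (by positivity)
  · rw [Finset.card_image_of_injective]
    · rw [Finset.card_sigma]
      push_cast
      have h1 : ∑ y ∈ Y, (φ * (r / a) * Real.sqrt (A ^ 2 - (y : ℝ) ^ 2) - D) ≤
          ∑ y ∈ Y, ((X y).card : ℝ) := by
        apply Finset.sum_le_sum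
        intro y _
        refine le_trans (le_of_eq ?_) (hX2 y)
        rw [← hφe]
        field_simp
        ring
      refine le_trans ?_ h1
      rw [Finset.sum_sub_distrib, ← Finset.mul_sum, Finset.sum_const, nsmul_eq_mul]
      have h2 := sum_sqrt A hA0
      have h3 : (Y.card : ℝ) ≤ 2 * A + 1 := by
        have : Y.card = 2 * ⌊A⌋₊ + 1 := by
          simp only [Y, Int.card_Icc]; omega
        rw [this]
        push_cast
        have := Nat.floor_le hA0
        linarith
      have hk : 0 ≤ φ * (r / a) := by rw [hφe]; positivity
      have h4 := mul_le_mul_of_nonneg_left h2 hk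
      have h5 := mul_le_mul_of_nonneg_right h3 hDR.le
      have h6 : φ * (r / a) * (Real.pi * A ^ 2 / 2 - A) =
          φ * (2 * Real.pi / r) * (M * M) - φ * (r / a) * α * M := by
        have : r / a * (A ^ 2) = 4 / r * (M * M) := by
          rw [hA]
          field_simp
          rw [hr2]
          linear_combination (M : ℝ) ^ 2 * hα2
        rw [hA] at *
        linear_combination φ * Real.pi / 2 * this
      rw [h6] at h4
      rw [← hφe]
      have h7 : 0 ≤ φ * (r / a) * α := by positivity
      have h8 : (0 : ℝ) ≤ M := by positivity
      have h9 : 0 ≤ (D : ℝ) * α := by positivity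
      rw [hA] at h5
      have h10 : 0 ≤ (D : ℝ) * M := by positivity
      unfold Y at *
      nlinarith
    · rintro ⟨y, x⟩ ⟨y', x'⟩ h
      simp only [Prod.mk.injEq] at h
      obtain ⟨rfl, rfl⟩ := h
      rfl

lemma lattice_gen (D : ℕ) (hD : 0 < D) (f : ℤ × ℤ × ℤ) (hf : RedF D f) :
    ∃ C : ℝ, ∀ M : ℕ, ∃ V : Finset (ℤ × ℤ),
      (∀ v ∈ V, evF f v.1 v.2 ≤ (M : ℤ) * M ∧ 0 ≤ evF f v.1 v.2 ∧
        IsCoprime (evF f v.1 v.2) (D : ℤ)) ∧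
      (D.totient : ℝ) / D * (2 * Real.pi / Real.sqrt D) * (M * M) - C * (M + 1) ≤ V.card := by
  classical
  obtain ⟨a, b, c⟩ := f
  obtain ⟨ha, hg, hd, -⟩ := hf
  simp only at ha hg hd
  have hnn : ∀ x y, 0 ≤ evF (a, b, c) x y := by
    intro x y
    have : 4 * a * evF (a, b, c) x y = (2 * a * x + b * y) ^ 2 + D * y ^ 2 := by
      simp only [evF]; linear_combination -y ^ 2 * hd
    have h2 : 0 ≤ 4 * a * evF (a, b, c) x y := by rw [this]; positivity
    exact nonneg_of_mul_nonneg_right h2 (by positivity)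
  obtain ⟨p, q, ⟨s, r, hsr⟩, hcop⟩ := exists_cop_value D hD a b c hg hd
  -- the matrix with columns (p, q) and (-r, s)
  have hpos : 0 < evF (a, b, c) p q := by
    rcases (hnn p q).lt_or_eq with h | h
    · exact h
    · have : 4 * a * evF (a, b, c) p q = (2 * a * p + b * q) ^ 2 + D * q ^ 2 := by
        simp only [evF]; linear_combination -q ^ 2 * hd
      rw [← h, mul_zero] at this
      have hDZ : (0 : ℤ) < D := by exact_mod_cast hD
      have hq : q = 0 := by
        by_contra hq
        have : 0 < (D : ℤ) * q ^ 2 := by positivity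
        nlinarith [sq_nonneg (2 * a * p + b * q)]
      rw [hq] at this
      have hp : p = 0 := by
        by_contra hp
        have : 0 < (2 * a * p) ^ 2 := by positivity
        nlinarith
      rw [hp, hq] at hsr
      simp at hsr
  obtain ⟨C, hC⟩ := lattice_cop D hD (evF (a, b, c) p q)
    (2 * a * p * (-r) + b * (p * s + (-r) * q) + 2 * c * q * s) (evF (a, b, c) (-r) s) hpos hcop
    (by
      simp only [evF]
      linear_combination (s * p + r * q) ^ 2 * hd - D * (s * p + r * q + 1) * hsr)
  refine ⟨C, fun M => ?_⟩
  obtain ⟨V, hV1, hV2⟩ := hC M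
  refine ⟨V.image (fun v => (p * v.1 - r * v.2, q * v.1 + s * v.2)), ?_, ?_⟩
  · intro v hv
    simp only [Finset.mem_image] at hv
    obtain ⟨w, hw, rfl⟩ := hv
    have he : evF (a, b, c) (p * w.1 - r * w.2) (q * w.1 + s * w.2) =
        evF (evF (a, b, c) p q, 2 * a * p * (-r) + b * (p * s + (-r) * q) + 2 * c * q * s,
          evF (a, b, c) (-r) s) w.1 w.2 := by
      simp only [evF]; ring
    have := hV1 w hw
    simp only
    rw [← he] at this
    exact ⟨this.1, hnn _ _, this.2⟩
  · rw [Finset.card_image_of_injective]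
    · exact hV2
    · rintro ⟨x, y⟩ ⟨x', y'⟩ h
      simp only [Prod.mk.injEq] at h
      obtain ⟨h1, h2⟩ := h
      ext
      · simp only; linear_combination s * h1 + r * h2 - (x - x') * hsr
      · simp only; linear_combination p * h2 - q * h1 - (y - y') * hsr

lemma final_bound_s8 (D : ℕ) (hD : 1 < D) (h3 : D ≠ 3) (h4 : D ≠ 4) (hm : D % 4 = 0 ∨ D % 4 = 3)
    (R : Finset (ℤ × ℤ × ℤ)) (hR : ∀ f ∈ R, RedF D f) :
    (R.card : ℝ) ≤ Real.pi⁻¹ * Real.sqrt D * (2 + Real.log D) := by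
  classical
  obtain ⟨χ, hχ⟩ := exists_chi D (by omega) hm
  have hL := fun f : R => lattice_gen D (by omega) f.1 (hR f.1 f.2)
  choose C hC using hL
  choose V hV1 hV2 using hC
  have hDR : (0 : ℝ) < D := by exact_mod_cast (by omega : 0 < D)
  obtain ⟨φ, hφe⟩ : ∃ φ : ℝ, φ = (D.totient : ℝ) / D := ⟨_, rfl⟩
  have hφ : 0 < φ := by
    rw [hφe]
    have : 0 < D.totient := Nat.totient_pos.mpr (by omega)
    positivity
  obtain ⟨K, hK⟩ : ∃ K : ℝ, K = ∑ f : R, C f := ⟨_, rfl⟩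
  have key : ∀ M : ℕ, R.card * (φ * (2 * Real.pi / Real.sqrt D) * (M * M)) - K * (M + 1) ≤
      2 * (φ * (M * M) * (2 + Real.log D) + M * (3 * D + 1)) := by
    intro M
    let U : Finset ((ℤ × ℤ × ℤ) × ℤ × ℤ) :=
      ((Finset.univ : Finset R).sigma (fun f => V f M)).image (fun s => (s.1.1, s.2))
    have hUc : U.card = ∑ f : R, (V f M).card := by
      rw [Finset.card_image_of_injective, Finset.card_sigma]
      rintro ⟨f, v⟩ ⟨f', v'⟩ h
      simp only [Prod.mk.injEq] at h
      obtain ⟨h1, rfl⟩ := h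
      obtain rfl := Subtype.ext h1
      rfl
    have hU : ∀ u ∈ U, RedF D u.1 ∧ evF u.1 u.2.1 u.2.2 ≤ (M : ℤ) * M ∧
        0 ≤ evF u.1 u.2.1 u.2.2 ∧ IsCoprime (evF u.1 u.2.1 u.2.2) (D : ℤ) := by
      intro u hu
      simp only [U, Finset.mem_image, Finset.mem_sigma] at hu
      obtain ⟨⟨f, v⟩, ⟨-, hv⟩, rfl⟩ := hu
      exact ⟨hR f.1 f.2, hV1 f M v hv⟩
    have hlow : R.card * (φ * (2 * Real.pi / Real.sqrt D) * (M * M)) - K * (M + 1) ≤ U.card := by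
      rw [hUc]
      push_cast
      have := Finset.sum_le_sum (fun (f : R) (_ : f ∈ Finset.univ) => hV2 f M)
      rw [Finset.sum_sub_distrib, Finset.sum_const, ← Finset.sum_mul, ← hK, ← hφe] at this
      simpa using this
    let T := (Finset.Ioc 0 (M * M)).filter (fun n => Nat.Coprime n D)
    have hmap : ∀ u ∈ U, (evF u.1 u.2.1 u.2.2).toNat ∈ T := by
      intro u hu
      obtain ⟨-, h1, h2, h3⟩ := hU u hu
      generalize evF u.1 u.2.1 u.2.2 = z at *
      lift z to ℕ using h2
      have h5 : Nat.Coprime z D := Nat.isCoprime_iff_coprime.mp h3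
      simp only [T, Finset.mem_filter, Finset.mem_Ioc, Int.toNat_natCast]
      refine ⟨⟨?_, by exact_mod_cast h1⟩, h5⟩
      rcases Nat.eq_zero_or_pos z with h | h
      · rw [h, Nat.coprime_zero_left] at h5; omega
      · exact h
    have hup : (U.card : ℤ) ≤ ∑ n ∈ T, 2 * ∑ d ∈ n.divisors, χ d := by
      rw [Finset.card_eq_sum_card_fiberwise hmap]
      push_cast
      apply Finset.sum_le_sum
      intro n hn
      simp only [T, Finset.mem_filter, Finset.mem_Ioc] at hn
      apply rep_card D hD h3 h4 χ hχ n hn.1.1 hn.2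
      intro u hu
      simp only [Finset.mem_filter] at hu
      obtain ⟨h1, -, h2, -⟩ := hU u hu.1
      refine ⟨h1, ?_⟩
      rw [← hu.2, Int.toNat_of_nonneg h2]
    have hup' : (U.card : ℝ) ≤ 2 * ∑ n ∈ T, ∑ d ∈ n.divisors, (χ d : ℝ) := by
      rw [← Finset.mul_sum] at hup
      exact_mod_cast hup
    have := chi_sum_bound D hD χ hχ M
    rw [← hφe] at this
    unfold T at *
    linarith
  -- let M tend to infinity
  have hs : 0 < Real.sqrt D := by positivity
  have hmain : R.card * (2 * Real.pi / Real.sqrt D) ≤ 2 * (2 + Real.log D) := by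
    by_contra hcon
    push Not at hcon
    obtain ⟨ε, hε⟩ : ∃ ε, ε = φ * (R.card * (2 * Real.pi / Real.sqrt D) - 2 * (2 + Real.log D)) :=
      ⟨_, rfl⟩
    have hε0 : 0 < ε := by rw [hε]; exact mul_pos hφ (by linarith)
    obtain ⟨B, hB⟩ : ∃ B : ℝ, B = 2 * (3 * D + 1) + 2 * |K| := ⟨_, rfl⟩
    obtain ⟨n, hn⟩ := exists_nat_gt (B / ε)
    have hn' : B < n * ε := by rwa [div_lt_iff₀ hε0] at hn
    have h := key (n + 1)
    obtain ⟨m, hmm⟩ : ∃ m : ℝ, m = ((n + 1 : ℕ) : ℝ) := ⟨_, rfl⟩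
    rw [← hmm] at h
    have hm1 : 1 ≤ m := by rw [hmm]; push_cast; linarith [(Nat.cast_nonneg n : (0 : ℝ) ≤ n)]
    have hmB : B < m * ε := by
      rw [hmm]; push_cast; linarith
    have e1 : K * (m + 1) ≤ |K| * (2 * m) :=
      (mul_le_mul_of_nonneg_right (le_abs_self K) (by linarith)).trans
        (mul_le_mul_of_nonneg_left (by linarith) (abs_nonneg K))
    have e2 : ε * (m * m) ≤ B * m := by
      rw [hε, hB]; linarith
    have e3 : B * m < m * ε * m := mul_lt_mul_of_pos_right hmB (by linarith)
    linarith
  have hpi := Real.pi_pos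
  rw [mul_div_assoc', div_le_iff₀ hs] at hmain
  rw [inv_mul_eq_div, div_mul_eq_mul_div, le_div_iff₀ hpi]
  linarith

/-- For a discriminant `Δ ≠ -3, -4`, `C(Δ) ≤ π⁻¹ |Δ|^{1/2} (2 + log |Δ|)`. -/
theorem stmt8 (Δ : ℤ) (hΔneg : Δ < 0) (hΔmod : Δ % 4 = 0 ∨ Δ % 4 = 1)
    (h3 : Δ ≠ -3) (h4 : Δ ≠ -4) :
    (classNumber Δ : ℝ) ≤ Real.pi⁻¹ * Real.sqrt |(Δ : ℝ)| * (2 + Real.log |(Δ : ℝ)|) := by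
  obtain ⟨D, hD⟩ : ∃ D : ℕ, Δ = -(D : ℤ) := ⟨Δ.natAbs, by omega⟩
  subst hD
  have habs : |((-(D : ℤ) : ℤ) : ℝ)| = D := by
    push_cast
    rw [abs_neg, abs_of_nonneg (Nat.cast_nonneg D)]
  rw [habs]
  have hc : classNumber (-(D : ℤ)) = Nat.card {f : ℤ × ℤ × ℤ // RedF D f} := rfl
  rw [hc]
  by_cases hfin : Finite {f : ℤ × ℤ × ℤ // RedF D f}
  · have hset : {f : ℤ × ℤ × ℤ | RedF D f}.Finite := hfin
    have hcard : Nat.card {f : ℤ × ℤ × ℤ // RedF D f} = hset.toFinset.card := by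
      exact Nat.card_eq_card_finite_toFinset hset
    rw [hcard]
    apply final_bound_s8 D (by omega) (by omega) (by omega) (by omega)
    intro f hf
    simpa using hf
  · rw [not_finite_iff_infinite] at hfin
    rw [Nat.card_eq_zero_of_infinite]
    have : 0 ≤ Real.log D := Real.log_natCast_nonneg D
    have hpi := Real.pi_pos
    simp only [Nat.cast_zero]
    positivity
end
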